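/- For any link L ⊂ S³, any unknot γ contained in the interior of a smooth page of a minimal simple boundary-regular Morse map S³∖L → S¹, and every n ∈ ℤ, MN(L[γ,n]) ≤ MN(L) + 2. -/

import Mathlib

/-!  Morse maps for knots and links in `S³` and the Morse–Novikov number:
common framework.

We work in the smooth category.  `S³` is the unit sphere of `ℝ⁴ ≅ ℂ²`.
A link is presented by disjoint smoothly embedded oriented parametrized
circles.  A *simple boundary-regular map* for a link `L` is a smooth map
`f : S³ ∖ L → S¹` which near `L` is the
standard fibration `(x, z) ↦ z/|z|` in a positively oriented tubular
neighborhood trivialization of `L` (this makes the homotopy class of `f`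
the canonical class `ξ_L` dual to a Seifert surface, i.e. `f` is simple).
Such a map is *Morse* if all its critical points are nondegenerate; the
Morse–Novikov number `MN L` is the least number of critical points of a
simple boundary-regular Morse map for `L`. -/

noncomputable section
open scoped Manifold Real
open Metric Set

namespace MorseNovikov

/-- Ambient Euclidean 4-space, identified with `ℂ²` via the complex
coordinates `Z`, `W`. -/
abbrev E := EuclideanSpace ℝ (Fin 4)
abbrev E3 := EuclideanSpace ℝ (Fin 3)
abbrev E2 := EuclideanSpace ℝ (Fin 2)

instance : Fact (Module.finrank ℝ E = 3 + 1) := ⟨by simp⟩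

/-- The 3-sphere `S³`, the unit sphere of `ℝ⁴ ≅ ℂ²`. -/
abbrev Sph : Type := sphere (0 : E) 1

/-- First complex coordinate on `ℝ⁴ = ℂ²`. -/
def Z (p : E) : ℂ := (p 0 : ℂ) + (p 1 : ℂ) * Complex.I
/-- Second complex coordinate on `ℝ⁴ = ℂ²`. -/
def W (p : E) : ℂ := (p 2 : ℂ) + (p 3 : ℂ) * Complex.I

lemma continuous_Z : Continuous Z := by unfold Z; fun_prop
lemma continuous_W : Continuous W := by unfold W; fun_prop

/-- The point of `ℝ⁴ = ℂ²` with complex coordinates `(z, w)`. -/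
def mk4 (z w : ℂ) : E := (EuclideanSpace.equiv (Fin 4) ℝ).symm ![z.re, z.im, w.re, w.im]

/-- `z/|z| ∈ S¹` (with junk value `1` at `z = 0`). -/
def toCircle (z : ℂ) : Circle := Circle.exp (Complex.arg z)

/-- The set underlying the standard (horizontal) unknot `O = {w = 0} ⊂ S³`. -/
def Ocar : Set Sph := {p : Sph | W (p : E) = 0}

/-- The set underlying the standard split 2-component unlink
(the link of indeterminacy at infinity of `(2z-1)/z`). -/
def Ucar : Set Sph := {p : Sph | Z (p : E) = 0 ∨ Z (p : E) = 1/2}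

/-- A link: a nonempty closed oriented 1-dimensional smooth submanifold of
`S³`, presented by disjoint smoothly embedded circles; each component is a
`2π`-periodic injective smooth immersion of `ℝ` (recording its orientation). -/
structure Link where
  n : ℕ
  npos : 0 < n
  emb : Fin n → ℝ → Sph
  smooth : ∀ i, ContMDiff 𝓘(ℝ, ℝ) (𝓡 3) (⊤ : ℕ∞) (emb i)
  periodic : ∀ i t, emb i (t + 2*π) = emb i t
  immersed : ∀ i t, mfderiv 𝓘(ℝ, ℝ) (𝓡 3) (emb i) t ≠ 0
  inj : ∀ i j s t, s ∈ Ico 0 (2*π) → t ∈ Ico 0 (2*π) →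
    emb i s = emb j t → i = j ∧ s = t

/-- The underlying subset of `S³`. -/
def Link.carrier (L : Link) : Set Sph := ⋃ i, L.emb i '' (Icc 0 (2*π))

lemma Link.isClosed_carrier (L : Link) : IsClosed L.carrier := by
  refine isClosed_iUnion_of_finite fun i => ?_
  exact (isCompact_Icc.image (L.smooth i).continuous).isClosed

/-- The complement `S³ ∖ L`, an open submanifold of `S³`. -/
def Link.compl (L : Link) : TopologicalSpace.Opens Sph :=
  ⟨{x | x ∉ L.carrier}, L.isClosed_carrier.isOpen_compl⟩

/-- A knot is a one-component link. -/
def Link.IsKnot (L : Link) : Prop := L.n = 1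

section Generic
variable {M : Type*} [TopologicalSpace M] [ChartedSpace E3 M]

/-- `x` is a critical point of the circle-valued function `f`:
the differential of `f` at `x` fails to be surjective. -/
def IsCrit (f : M → Circle) (x : M) : Prop :=
  ¬ Function.Surjective (mfderiv (𝓡 3) (𝓡 1) f x)

/-- The set of critical points of `f`. -/
def critSet (f : M → Circle) : Set M := {x | IsCrit f x}

/-- A local real lift of `f` near `x`, read in the preferred chart at `x`. -/
def liftChart (f : M → Circle) (x : M) (u : E3) : ℝ :=
  Complex.arg ((f ((extChartAt (𝓡 3) x).symm u) : ℂ) / (f x : ℂ))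

/-- The Hessian bilinear form of `f` at `x` (meaningful at critical points,
where it is independent of the choice of chart and lift). -/
def hessAt (f : M → Circle) (x : M) (v w : E3) : ℝ :=
  fderiv ℝ (fun u => fderiv ℝ (liftChart f x) u v) (extChartAt (𝓡 3) x x) w

/-- Nondegeneracy of a critical point. -/
def Nondeg (f : M → Circle) (x : M) : Prop :=
  ∀ v : E3, v ≠ 0 → ∃ w : E3, hessAt f x v w ≠ 0

/-- `f` is a Morse function: it has no degenerate critical points. -/
def MorseFun (f : M → Circle) : Prop := ∀ x, IsCrit f x → Nondeg f x

/-- `x` is a nondegenerate critical point of `f` of Morse index `i`. -/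
def HasIndex (f : M → Circle) (x : M) (i : ℕ) : Prop :=
  IsCrit f x ∧ i ≤ 3 ∧
  ∃ V W : Submodule ℝ E3, Module.finrank ℝ V = i ∧ Module.finrank ℝ W = 3 - i ∧
    (∀ v ∈ V, v ≠ 0 → hessAt f x v v < 0) ∧ (∀ w ∈ W, w ≠ 0 → 0 < hessAt f x w w)

end Generic

/-- The determinant of four ambient vectors; expresses the standard
orientation of `S³ ⊂ ℝ⁴`. -/
def det4 (a b c d : E) : ℝ :=
  Matrix.det (Matrix.of ![(fun i => a i), (fun i => b i), (fun i => c i), (fun i => d i)])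

/-- The ambient (`ℝ⁴`-valued) differential of a map `g : ℝ × ℂ → S³`. -/
def tangAmb (g : ℝ × ℂ → Sph) (q : ℝ × ℂ) (v : ℝ × ℂ) : E :=
  mfderiv (𝓡 3) 𝓘(ℝ, E) (fun p : Sph => (p : E)) (g q)
    (mfderiv 𝓘(ℝ, ℝ × ℂ) (𝓡 3) g q v)

/-- A **simple boundary-regular smooth map** for the link `L`: a smooth map
`f : S³ ∖ L → S¹` together with an adapted trivialization `τ : L × D² → N(L)`
of a tubular neighborhood of `L`, with `τ(x, 0) = x`, on which `f` is the
standard fibration `(x, z) ↦ z/|z|`.  The trivialization is positively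
oriented with respect to the orientations of `L` and `S³`; consequently the
homotopy class of `f` is the canonical class `ξ_L ∈ H¹(S³ ∖ L; ℤ)` dual to a
Seifert surface, i.e. `f` is simple. -/
structure BRMap (L : Link) where
  f : L.compl → Circle
  smooth : ContMDiff (𝓡 3) (𝓡 1) (⊤ : ℕ∞) f
  tub : Fin L.n → ℝ × ℂ → Sph
  tub_smooth : ∀ i, ContMDiffOn 𝓘(ℝ, ℝ × ℂ) (𝓡 3) (⊤ : ℕ∞) (tub i) (univ ×ˢ ball (0:ℂ) 1)
  tub_per : ∀ i t z, tub i (t + 2*π, z) = tub i (t, z)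
  tub_core : ∀ i t, tub i (t, 0) = L.emb i t
  tub_inj : ∀ i j t s z w, t ∈ Ico 0 (2*π) → s ∈ Ico 0 (2*π) →
    z ∈ ball (0:ℂ) 1 → w ∈ ball (0:ℂ) 1 → tub i (t, z) = tub j (s, w) →
    i = j ∧ t = s ∧ z = w
  tub_nbhd : ∀ x ∈ L.carrier, (⋃ i, tub i '' (univ ×ˢ ball (0:ℂ) 1)) ∈ nhds x
  tub_off : ∀ i t z, z ∈ ball (0:ℂ) 1 → z ≠ 0 → tub i (t, z) ∉ L.carrier
  adapted : ∀ i t z, z ∈ ball (0:ℂ) 1 → z ≠ 0 →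
    ∀ x : L.compl, (x : Sph) = tub i (t, z) → f x = toCircle z
  positive : ∀ i t z, z ∈ ball (0:ℂ) 1 →
    0 < det4 ((tub i (t, z) : E)) (tangAmb (tub i) (t, z) (1, 0))
        (tangAmb (tub i) (t, z) (0, 1)) (tangAmb (tub i) (t, z) (0, Complex.I))

variable {L : Link}

/-- The page `F_θ := L ∪ f⁻¹(θ)` of `f`, as a subset of `S³`. -/
def pageSet (F : BRMap L) (θ : Circle) : Set Sph :=
  L.carrier ∪ {x : Sph | ∃ h : x ∈ L.compl, F.f ⟨x, h⟩ = θ}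

/-- `θ` is a regular value of `F.f` (the corresponding page is smooth). -/
def IsRegularValue (F : BRMap L) (θ : Circle) : Prop :=
  ∀ x : L.compl, F.f x = θ → ¬ IsCrit F.f x

/-- The Morse–Novikov number of `L`: the least number of critical points of
a simple boundary-regular Morse map `S³ ∖ L → S¹`. -/
def MN (L : Link) : ℕ∞ :=
  sInf {k : ℕ∞ | ∃ F : BRMap L, MorseFun F.f ∧ (critSet F.f).encard = k}

/-- `F` is a minimal Morse map for `L`. -/
def Minimal (F : BRMap L) : Prop :=
  MorseFun F.f ∧ ∀ G : BRMap L, MorseFun G.f →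
    (critSet F.f).encard ≤ (critSet G.f).encard

/-- All critical points of `F` have index 1 or 2. -/
def Moderate (F : BRMap L) : Prop :=
  ∀ x ∈ critSet F.f, HasIndex F.f x 1 ∨ HasIndex F.f x 2

/-- `F.f` restricted to its critical set factors as the index followed by an
injection. -/
def SelfIndexed (F : BRMap L) : Prop :=
  ∀ x ∈ critSet F.f, ∀ y ∈ critSet F.f, ∀ i j : ℕ,
    HasIndex F.f x i → HasIndex F.f y j → (F.f x = F.f y ↔ i = j)

/-- An ambient isotopy of `S³`: a smooth family of diffeomorphisms starting
at the identity. -/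
structure Isotopy where
  H : ℝ × Sph → Sph
  smooth : ContMDiff (𝓘(ℝ, ℝ).prod (𝓡 3)) (𝓡 3) (⊤ : ℕ∞) H
  init : ∀ x, H (0, x) = x
  bij : ∀ t, Function.Bijective (fun x => H (t, x))

/-- Two subsets of `S³` are ambient isotopic. -/
def AmbientIsotopic (A B : Set Sph) : Prop :=
  ∃ h : Isotopy, (fun x => h.H (1, x)) '' A = B

/-- Two links are (ambient) isotopic. -/
def LinkIsotopic (L₁ L₂ : Link) : Prop := AmbientIsotopic L₁.carrier L₂.carrier

/-- Isotopy of simple boundary-regular maps: an ambient isotopy carries one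
binding to the other and intertwines the two maps. -/
def BRMapIsotopic (L₁ : Link) (F₁ : BRMap L₁) (L₂ : Link) (F₂ : BRMap L₂) : Prop :=
  ∃ h : Isotopy, (fun x => h.H (1, x)) '' L₁.carrier = L₂.carrier ∧
    ∀ (x : L₁.compl) (y : L₂.compl), (y : Sph) = h.H (1, (x : Sph)) →
      F₂.f y = F₁.f x

/-- A closed (nonempty, compact, boundaryless) smooth surface inside `A ⊆ S³`. -/
structure ClosedSurfaceIn (A : Set Sph) where
  carr : Type
  [ts : TopologicalSpace carr]
  [cs : ChartedSpace E2 carr]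
  [cpt : CompactSpace carr]
  [ne : Nonempty carr]
  emb : carr → Sph
  smooth : ContMDiff (𝓡 2) (𝓡 3) (⊤ : ℕ∞) emb
  inj : Function.Injective emb
  imm : ∀ p, Function.Injective (mfderiv (𝓡 2) (𝓡 3) emb p)
  sub : Set.range emb ⊆ A

/-- `A` contains a nonempty closed surface. -/
def ContainsClosedSurface (A : Set Sph) : Prop := Nonempty (ClosedSurfaceIn A)

/-- `F` is boundary-connected: no page of `F` contains a nonempty closed
surface (equivalently, every page has trivial second homology). -/
def BoundaryConnected (F : BRMap L) : Prop :=
  ∀ θ : Circle, ¬ ContainsClosedSurface (pageSet F θ)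

/-- `F` is connected: every page of `F` is connected. -/
def ConnectedMap (F : BRMap L) : Prop :=
  ∀ θ : Circle, IsConnected (pageSet F θ)

/-- The ambient differential of a map into `S³` defined on a
surface-with-boundary. -/
def tangAmbS {C : Type*} [TopologicalSpace C] [ChartedSpace (EuclideanHalfSpace 2) C]
    (g : C → Sph) (p : C) (v : E2) : E :=
  mfderiv (𝓡 3) 𝓘(ℝ, E) (fun q : Sph => (q : E)) (g p)
    (mfderiv (𝓡∂ 2) (𝓡 3) g p v)

/-- A compact oriented smooth surface-with-boundary embedded in `S³`, with
boundary the link `L` (a *spanning surface* for `L`).  Orientedness is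
encoded by a continuous nonvanishing normal (coorientation) field in `S³`. -/
structure SpanningSurface (L : Link) where
  carr : Type
  [ts : TopologicalSpace carr]
  [cs : ChartedSpace (EuclideanHalfSpace 2) carr]
  [cpt : CompactSpace carr]
  emb : carr → Sph
  smooth : ContMDiff (𝓡∂ 2) (𝓡 3) (⊤ : ℕ∞) emb
  inj : Function.Injective emb
  imm : ∀ p, Function.Injective (mfderiv (𝓡∂ 2) (𝓡 3) emb p)
  bdry : emb '' ((𝓡∂ 2).boundary carr) = L.carrier
  int_off : ∀ p, p ∉ (𝓡∂ 2).boundary carr → emb p ∉ L.carrier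
  coorient : ∃ ν : carr → E, Continuous ν ∧ ∀ p, ν p ≠ 0 ∧
    inner (𝕜 := ℝ) (ν p) ((emb p : Sph) : E) = 0 ∧
    ∀ v : E2, inner (𝕜 := ℝ) (ν p) (tangAmbS emb p v) = 0

/-- A Seifert surface for `L`: a spanning surface with no closed components. -/
structure SeifertSurface (L : Link) extends SpanningSurface L where
  no_closed : ∀ p : carr, (connectedComponent p ∩ (𝓡∂ 2).boundary carr).Nonempty

/-- A compact smooth surface-with-boundary embedded in the region `Amb ⊆ S³`,
with boundary the set `Bd`. -/
structure EmbSurface (Bd Amb : Set Sph) where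
  carr : Type
  [ts : TopologicalSpace carr]
  [cs : ChartedSpace (EuclideanHalfSpace 2) carr]
  [cpt : CompactSpace carr]
  emb : carr → Sph
  smooth : ContMDiff (𝓡∂ 2) (𝓡 3) (⊤ : ℕ∞) emb
  inj : Function.Injective emb
  imm : ∀ p, Function.Injective (mfderiv (𝓡∂ 2) (𝓡 3) emb p)
  bdry : emb '' ((𝓡∂ 2).boundary carr) = Bd
  sub : Set.range emb ⊆ Amb

/-- Angular speed about the origin of a plane curve. -/
def angSpeed (g : ℝ → ℂ) (t : ℝ) : ℝ := ((deriv g t) / g t).im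

/-- Total winding number about `0` of a (`2π`-periodic) plane curve. -/
def windingNumber (g : ℝ → ℂ) : ℝ := (1/(2*π)) * ∫ t in (0:ℝ)..(2*π), angSpeed g t

/-- `w/|w|` (with junk value `1` at `0`). -/
def unitC (w : ℂ) : ℂ := if w = 0 then 1 else w / ‖w‖

/-- The defining property of the (discontinuous) bijection
`β : S³ → S³`, `β(z,w) = (z·w/|w|, w)` for `w ≠ 0`, `β(z,0) = (z,0)`. -/
def IsBetaMap (β : Equiv.Perm Sph) : Prop :=
  ∀ p : Sph, Z ((β p : Sph) : E) = Z ((p : Sph) : E) * unitC (W ((p : Sph) : E)) ∧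
    W ((β p : Sph) : E) = W ((p : Sph) : E)

section
open scoped Topology ContDiff
open Filter

/-! ### Local parametrizations -/

section Param
variable {V : Type*} [NormedAddCommGroup V] [NormedSpace ℝ V]

/-- A local smooth parametrization (local diffeomorphism) of `S³` at `v0`. -/
def GoodParam (Y : V → Sph) (v0 : V) : Prop :=
  ∃ R : Sph → V, ContMDiffAt 𝓘(ℝ, V) (𝓡 3) (⊤ : ℕ∞) Y v0 ∧
    ContMDiffAt (𝓡 3) 𝓘(ℝ, V) (⊤ : ℕ∞) R (Y v0) ∧
    (∀ᶠ v in 𝓝 v0, R (Y v) = v) ∧ ∀ᶠ x in 𝓝 (Y v0), Y (R x) = x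

lemma two_le_top : (2 : WithTop ℕ∞) ≤ ((⊤ : ℕ∞) : WithTop ℕ∞) :=
  WithTop.coe_le_coe.2 (le_top : (2:ℕ∞) ≤ ⊤)

lemma top_ne0 : (((⊤ : ℕ∞) : WithTop ℕ∞)) ≠ 0 := by simp

attribute [local instance] finrank_real_complex_fact'

lemma contMDiff_circle_coe : ContMDiff (𝓡 1) 𝓘(ℝ, ℂ) (⊤ : ℕ∞) (fun z : Circle => (z : ℂ)) :=
  contMDiff_coe_sphere (E := ℂ) (n := 1)

lemma contMDiff_rotexp (θ : Circle) :
    ContMDiff 𝓘(ℝ, ℝ) (𝓡 1) (⊤ : ℕ∞) (fun t : ℝ => θ * Circle.exp t) :=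
  contMDiff_const.mul contMDiff_circleExp

lemma rotexp_inj (θ : Circle) (t : ℝ) (v : ℝ)
    (hv : (mfderiv 𝓘(ℝ, ℝ) (𝓡 1) (fun t : ℝ => θ * Circle.exp t) t : ℝ →L[ℝ] (EuclideanSpace ℝ (Fin 1))) v = 0) : v = 0 := by
  have h1 : MDifferentiableAt 𝓘(ℝ, ℝ) (𝓡 1) (fun t : ℝ => θ * Circle.exp t) t :=
    (contMDiff_rotexp θ).mdifferentiable top_ne0 t
  have h2 := (contMDiff_circle_coe).mdifferentiable top_ne0 (θ * Circle.exp t)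
  have h3 := mfderiv_comp t h2 h1
  have h4 : HasDerivAt (fun t : ℝ => (θ : ℂ) * Complex.exp (t * Complex.I))
      ((θ : ℂ) * (Complex.exp (t * Complex.I) * (1 * Complex.I))) t := by
    refine HasDerivAt.const_mul _ (HasDerivAt.cexp ?_)
    exact (Complex.ofRealCLM.hasDerivAt (x := t)).mul_const _ |>.congr_deriv (by simp)
  have h5 : (fun z : Circle => (z : ℂ)) ∘ (fun t : ℝ => θ * Circle.exp t)
      = (fun t : ℝ => (θ : ℂ) * Complex.exp (t * Complex.I)) := by
    funext t; simp [Circle.coe_exp]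
  rw [h5, mfderiv_eq_fderiv] at h3
  have h6 := congrArg (fun (A : ℝ →L[ℝ] ℂ) => A v) h3
  have h7 : (fderiv ℝ (fun t : ℝ => (θ : ℂ) * Complex.exp (t * Complex.I)) t) v
      = v • ((θ : ℂ) * (Complex.exp (t * Complex.I) * (1 * Complex.I))) := by
    rw [h4.hasFDerivAt.fderiv]; simp
  have h8 : (fderiv ℝ (fun t : ℝ => (θ : ℂ) * Complex.exp (t * Complex.I)) t) v = 0 := by
    refine h6.trans ?_
    show (mfderiv (𝓡 1) 𝓘(ℝ, ℂ) (fun z : Circle => (z : ℂ)) (θ * Circle.exp t) : EuclideanSpace ℝ (Fin 1) →L[ℝ] ℂ)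
      ((mfderiv 𝓘(ℝ, ℝ) (𝓡 1) (fun t : ℝ => θ * Circle.exp t) t : ℝ →L[ℝ] (EuclideanSpace ℝ (Fin 1))) v) = 0
    rw [hv]; exact map_zero _
  rw [h7] at h8
  have := smul_eq_zero.1 h8
  rcases this with h | h
  · exact h
  · exfalso; simp at h

lemma rotexp_bij (θ : Circle) (t : ℝ) :
    Function.Bijective (mfderiv 𝓘(ℝ, ℝ) (𝓡 1) (fun t : ℝ => θ * Circle.exp t) t) := by
  have hinj : Function.Injective (mfderiv 𝓘(ℝ, ℝ) (𝓡 1) (fun t : ℝ => θ * Circle.exp t) t : ℝ →L[ℝ] (EuclideanSpace ℝ (Fin 1))) := by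
    rw [injective_iff_map_eq_zero]
    exact fun v hv => rotexp_inj θ t v hv
  refine ⟨hinj, ?_⟩
  have hfr : Module.finrank ℝ ℝ = Module.finrank ℝ (EuclideanSpace ℝ (Fin 1)) := by simp
  let A : ℝ →L[ℝ] (EuclideanSpace ℝ (Fin 1)) :=
    mfderiv 𝓘(ℝ, ℝ) (𝓡 1) (fun t : ℝ => θ * Circle.exp t) t
  exact (LinearMap.injective_iff_surjective_of_finrank_eq_finrank
    (f := A.toLinearMap) hfr).1 hinj

lemma hess_comp {U : Type*} [NormedAddCommGroup U] [NormedSpace ℝ U] {g : V → ℝ} {ρ : U → V}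
    {u0 : U} (hg : ContDiffAt ℝ 2 g (ρ u0)) (hρ : ContDiffAt ℝ 2 ρ u0)
    (h0 : fderiv ℝ g (ρ u0) = 0) (v w : U) :
    fderiv ℝ (fun u => fderiv ℝ (fun u => g (ρ u)) u v) u0 w =
      fderiv ℝ (fun y => fderiv ℝ g y (fderiv ℝ ρ u0 v)) (ρ u0) (fderiv ℝ ρ u0 w) := by
  have e1 : ∀ᶠ u in 𝓝 u0, DifferentiableAt ℝ ρ u :=
    (hρ.eventually (by simp)).mono fun u hu => hu.differentiableAt (by simp)
  have e2 : ∀ᶠ u in 𝓝 u0, DifferentiableAt ℝ g (ρ u) :=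
    hρ.continuousAt.eventually ((hg.eventually (by simp)).mono fun u hu => hu.differentiableAt (by simp))
  have e3 : (fun u => fderiv ℝ (fun u => g (ρ u)) u v) =ᶠ[𝓝 u0]
      fun u => (fderiv ℝ g (ρ u)) (fderiv ℝ ρ u v) := by
    filter_upwards [e1, e2] with u h1 h2
    have := fderiv_comp u h2 h1
    have h' : (fun u => g (ρ u)) = g ∘ ρ := rfl
    rw [h', this]; rfl
  rw [e3.fderiv_eq]
  have d1 : DifferentiableAt ℝ (fderiv ℝ g) (ρ u0) :=
    (hg.fderiv_right (m := 1) (by norm_num)).differentiableAt (by simp)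
  have d2 : DifferentiableAt ℝ (fderiv ℝ ρ) u0 :=
    (hρ.fderiv_right (m := 1) (by norm_num)).differentiableAt (by simp)
  have d3 : DifferentiableAt ℝ ρ u0 := e1.self_of_nhds
  have k1 : HasFDerivAt (fun u => fderiv ℝ g (ρ u)) ((fderiv ℝ (fderiv ℝ g) (ρ u0)).comp (fderiv ℝ ρ u0)) u0 :=
    d1.hasFDerivAt.comp u0 d3.hasFDerivAt
  have k2 : HasFDerivAt (fun u => fderiv ℝ ρ u v) _ u0 := d2.hasFDerivAt.clm_apply (hasFDerivAt_const v u0)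
  have k3 := k1.clm_apply k2
  rw [k3.fderiv]
  have k4 := d1.hasFDerivAt.clm_apply (hasFDerivAt_const (fderiv ℝ ρ u0 v) (ρ u0))
  rw [k4.fderiv]
  simp [h0]

variable {Y : V → Sph} {v0 : V} {f : Sph → Circle} {g : V → ℝ} {θ : Circle}

lemma param_eq {R : Sph → V}
    (hR : ContMDiffAt (𝓡 3) 𝓘(ℝ, V) (⊤ : ℕ∞) R (Y v0))
    (hRY : ∀ᶠ v in 𝓝 v0, R (Y v) = v) (hYR : ∀ᶠ x in 𝓝 (Y v0), Y (R x) = x)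
    (hf : ∀ᶠ v in 𝓝 v0, f (Y v) = θ * Circle.exp (g v)) :
    ∀ᶠ x in 𝓝 (Y v0), f x = θ * Circle.exp (g (R x)) := by
  have h0 : R (Y v0) = v0 := hRY.self_of_nhds
  have hc : Tendsto R (𝓝 (Y v0)) (𝓝 v0) := by
    have := hR.continuousAt; unfold ContinuousAt at this; rwa [h0] at this
  filter_upwards [hYR, hc.eventually hf] with x h1 h2
  rw [← h2, h1]

lemma param_smooth (hY : GoodParam Y v0)
    (hf : ∀ᶠ v in 𝓝 v0, f (Y v) = θ * Circle.exp (g v)) (hg : ContDiffAt ℝ (⊤ : ℕ∞) g v0) :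
    ContMDiffAt (𝓡 3) (𝓡 1) (⊤ : ℕ∞) f (Y v0) := by
  obtain ⟨R, h1, h2, h3, h4⟩ := hY
  have e := param_eq h2 h3 h4 hf
  have h0 : R (Y v0) = v0 := h3.self_of_nhds
  refine ContMDiffAt.congr_of_eventuallyEq ?_ e
  have hg' : ContMDiffAt 𝓘(ℝ, V) 𝓘(ℝ, ℝ) (⊤ : ℕ∞) g (R (Y v0)) := by
    rw [h0]; exact hg.contMDiffAt
  exact (contMDiff_rotexp θ).contMDiffAt.comp (Y v0) (hg'.comp (Y v0) h2)

lemma param_crit (hY : GoodParam Y v0)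
    (hf : ∀ᶠ v in 𝓝 v0, f (Y v) = θ * Circle.exp (g v)) (hg : ContDiffAt ℝ (⊤ : ℕ∞) g v0) :
    IsCrit f (Y v0) ↔ fderiv ℝ g v0 = 0 := by
  have hs := param_smooth hY hf hg
  obtain ⟨R, h1, h2, h3, h4⟩ := hY
  have h0 : R (Y v0) = v0 := h3.self_of_nhds
  have dY : MDifferentiableAt 𝓘(ℝ, V) (𝓡 3) Y v0 := h1.mdifferentiableAt top_ne0
  have dR : MDifferentiableAt (𝓡 3) 𝓘(ℝ, V) R (Y v0) := h2.mdifferentiableAt top_ne0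
  have df : MDifferentiableAt (𝓡 3) (𝓡 1) f (Y v0) := hs.mdifferentiableAt top_ne0
  have dg : DifferentiableAt ℝ g v0 := hg.differentiableAt top_ne0
  have dk : MDifferentiableAt 𝓘(ℝ, ℝ) (𝓡 1) (fun t : ℝ => θ * Circle.exp t) (g v0) :=
    (contMDiff_rotexp θ).mdifferentiable top_ne0 _
  -- f∘Y
  have c1 : mfderiv 𝓘(ℝ, V) (𝓡 1) (f ∘ Y) v0 =
      (mfderiv 𝓘(ℝ, ℝ) (𝓡 1) (fun t : ℝ => θ * Circle.exp t) (g v0)).comp (fderiv ℝ g v0) := by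
    have : f ∘ Y =ᶠ[𝓝 v0] (fun t : ℝ => θ * Circle.exp t) ∘ g := hf
    rw [this.mfderiv_eq, mfderiv_comp v0 dk dg.mdifferentiableAt, mfderiv_eq_fderiv]
    rfl
  have c2 := mfderiv_comp v0 df dY
  have surjY : Function.Surjective (mfderiv 𝓘(ℝ, V) (𝓡 3) Y v0) := by
    have hid : Y ∘ R =ᶠ[𝓝 (Y v0)] id := h4
    have := hid.mfderiv_eq (I := 𝓡 3) (I' := 𝓡 3)
    rw [mfderiv_id] at this
    have dY' : MDifferentiableAt 𝓘(ℝ, V) (𝓡 3) Y (R (Y v0)) := by rw [h0]; exact dY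
    rw [mfderiv_comp (Y v0) dY' dR] at this
    intro x
    refine ⟨mfderiv (𝓡 3) 𝓘(ℝ, V) R (Y v0) x, ?_⟩
    have h5 := congrArg (fun (A : E3 →L[ℝ] E3) => A x) this
    have h6 : HEq (mfderiv 𝓘(ℝ, V) (𝓡 3) Y (R (Y v0))) (mfderiv 𝓘(ℝ, V) (𝓡 3) Y v0) := by
      rw [h0]
    have h7 : ∀ y : V, (mfderiv 𝓘(ℝ, V) (𝓡 3) Y (R (Y v0)) : V →L[ℝ] E3) y
      = (mfderiv 𝓘(ℝ, V) (𝓡 3) Y v0 : V →L[ℝ] E3) y := by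
      intro y; exact congrArg (fun (A : V →L[ℝ] E3) => A y) (eq_of_heq h6)
    exact (h7 _).symm.trans h5
  have key : ∀ v : V, (mfderiv (𝓡 3) (𝓡 1) f (Y v0)) ((mfderiv 𝓘(ℝ, V) (𝓡 3) Y v0) v)
      = (mfderiv 𝓘(ℝ, ℝ) (𝓡 1) (fun t : ℝ => θ * Circle.exp t) (g v0)) (fderiv ℝ g v0 v) := by
    intro v
    have := c2.symm.trans c1
    exact congrArg (fun (A : V →L[ℝ] (EuclideanSpace ℝ (Fin 1))) => A v) this
  have bk := rotexp_bij θ (g v0)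
  unfold IsCrit
  constructor
  · intro h
    by_contra hne
    apply h
    have : Function.Surjective (fderiv ℝ g v0) := by
      intro t
      obtain ⟨v, hv⟩ : ∃ v, fderiv ℝ g v0 v ≠ 0 := by
        by_contra hh; push Not at hh; exact hne (ContinuousLinearMap.ext hh)
      exact ⟨(t / fderiv ℝ g v0 v) • v, by simp [hv]⟩
    intro y
    obtain ⟨t, ht⟩ := bk.2 y
    obtain ⟨v, hv⟩ := this t
    exact ⟨_, by rw [key v, hv, ht]⟩
  · intro h hsurj
    obtain ⟨t, ht⟩ : ∃ t : ℝ, t ≠ 0 := ⟨1, one_ne_zero⟩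
    obtain ⟨x, hx⟩ := hsurj (mfderiv 𝓘(ℝ, ℝ) (𝓡 1) (fun t : ℝ => θ * Circle.exp t) (g v0) t)
    obtain ⟨v, rfl⟩ := surjY x
    rw [key v, h] at hx
    exact ht (bk.1 hx).symm

lemma param_nondeg (hY : GoodParam Y v0)
    (hf : ∀ᶠ v in 𝓝 v0, f (Y v) = θ * Circle.exp (g v)) (hg : ContDiffAt ℝ (⊤ : ℕ∞) g v0)
    (hc : fderiv ℝ g v0 = 0) :
    Nondeg f (Y v0) ↔ ∀ v : V, v ≠ 0 → ∃ w : V, fderiv ℝ (fun u => fderiv ℝ g u v) v0 w ≠ 0 := by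
  obtain ⟨R, h1, h2, h3, h4⟩ := hY
  have h0 : R (Y v0) = v0 := h3.self_of_nhds
  have e := param_eq h2 h3 h4 hf
  set x := Y v0 with hx
  set ψ := extChartAt (𝓡 3) x with hψ
  set ρ : E3 → V := fun u => R (ψ.symm u) with hρdef
  set κ : V → E3 := fun v => ψ (Y v) with hκdef
  have hψx : ψ.symm (ψ x) = x := extChartAt_to_inv x
  have hρ0 : ρ (ψ x) = v0 := by simp only [hρdef, hψx, h0]
  have sψs : ContMDiffAt 𝓘(ℝ, E3) (𝓡 3) (⊤ : ℕ∞) ψ.symm (ψ x) := by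
    have := contMDiffOn_extChartAt_symm (I := 𝓡 3) (n := (⊤ : ℕ∞)) x
    exact this.contMDiffAt (extChartAt_target_mem_nhds x)
  have sρ : ContDiffAt ℝ (⊤ : ℕ∞) ρ (ψ x) := by
    rw [← contMDiffAt_iff_contDiffAt]
    have : ContMDiffAt (𝓡 3) 𝓘(ℝ, V) (⊤ : ℕ∞) R (ψ.symm (ψ x)) := by rw [hψx]; exact h2
    exact this.comp (ψ x) sψs
  have sκ : ContDiffAt ℝ (⊤ : ℕ∞) κ v0 := by
    rw [← contMDiffAt_iff_contDiffAt]
    exact (contMDiffAt_extChartAt (I := 𝓡 3) (n := (⊤ : ℕ∞))).comp v0 h1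
  have hρκ : ∀ᶠ v in 𝓝 v0, ρ (κ v) = v := by
    have : ∀ᶠ v in 𝓝 v0, Y v ∈ ψ.source := h1.continuousAt.eventually (extChartAt_source_mem_nhds x)
    filter_upwards [h3, this] with v a b
    simp only [hρdef, hκdef]; rw [ψ.left_inv b, a]
  have hκρ : ∀ᶠ u in 𝓝 (ψ x), κ (ρ u) = u := by
    have t1 : Tendsto ψ.symm (𝓝 (ψ x)) (𝓝 x) := by
      have := sψs.continuousAt; unfold ContinuousAt at this; rwa [hψx] at this
    filter_upwards [t1.eventually h4, extChartAt_target_mem_nhds (I := 𝓡 3) x] with u a b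
    simp only [hρdef, hκdef]; rw [a, ψ.right_inv b]
  -- lift
  have hl : (liftChart f x) =ᶠ[𝓝 (ψ x)] fun u => g (ρ u) - g v0 := by
    have t1 : Tendsto ψ.symm (𝓝 (ψ x)) (𝓝 x) := by
      have := sψs.continuousAt; unfold ContinuousAt at this; rwa [hψx] at this
    have t2 : ContinuousAt (fun u => g (ρ u) - g v0) (ψ x) := by
      refine ContinuousAt.sub ?_ continuousAt_const
      exact ContinuousAt.comp (f := ρ) (x := ψ x) (by rw [hρ0]; exact hg.continuousAt) sρ.continuousAt
    have t3 : ∀ᶠ u in 𝓝 (ψ x), g (ρ u) - g v0 ∈ Ioo (-π) π := by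
      apply t2.eventually
      show _ ∈ 𝓝 (g (ρ (ψ x)) - g v0)
      rw [hρ0, sub_self]
      exact Ioo_mem_nhds (by linarith [Real.pi_pos]) Real.pi_pos
    have hfx : f x = θ * Circle.exp (g v0) := hf.self_of_nhds
    filter_upwards [t1.eventually e, t3] with u a b
    unfold liftChart
    rw [← hψ, a, hfx]
    simp only [Circle.coe_mul, Circle.coe_exp]
    rw [mul_div_mul_left _ _ (Circle.coe_ne_zero θ), ← Complex.exp_sub]
    rw [show (↑(g (R (ψ.symm u))) * Complex.I - ↑(g v0) * Complex.I)
      = ((g (ρ u) - g v0 : ℝ) : ℂ) * Complex.I by push_cast; ring]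
    rw [Complex.arg_exp_mul_I, toIocMod_eq_self]
    exact ⟨b.1, by have := b.2; linarith⟩
  have hh : ∀ v w : E3, hessAt f x v w =
      fderiv ℝ (fun y => fderiv ℝ g y (fderiv ℝ ρ (ψ x) v)) v0 (fderiv ℝ ρ (ψ x) w) := by
    intro v w
    unfold hessAt
    have e2 : (fun u => fderiv ℝ (liftChart f x) u v) =ᶠ[𝓝 (ψ x)]
        fun u => fderiv ℝ (fun u => g (ρ u)) u v := by
      filter_upwards [hl.eventually_nhds] with u hu
      rw [Filter.EventuallyEq.fderiv_eq hu, fderiv_sub_const]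
    rw [← hψ, e2.fderiv_eq]
    have := hess_comp (g := g) (ρ := ρ) (u0 := ψ x) (by rw [hρ0]; exact hg.of_le two_le_top)
      (sρ.of_le two_le_top) (by rw [hρ0]; exact hc) v w
    rw [this, hρ0]
  have dρ : HasFDerivAt ρ (fderiv ℝ ρ (ψ x)) (ψ x) := (sρ.differentiableAt top_ne0).hasFDerivAt
  have dκ : HasFDerivAt κ (fderiv ℝ κ v0) v0 := (sκ.differentiableAt top_ne0).hasFDerivAt
  have i1 : ∀ v, fderiv ℝ ρ (ψ x) (fderiv ℝ κ v0 v) = v := by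
    have a : HasFDerivAt (fun v => ρ (κ v)) ((fderiv ℝ ρ (ψ x)).comp (fderiv ℝ κ v0)) v0 :=
      HasFDerivAt.comp v0 (g := ρ) (f := κ) dρ dκ
    have b : HasFDerivAt (fun v => ρ (κ v)) (ContinuousLinearMap.id ℝ V) v0 :=
      (hasFDerivAt_id v0).congr_of_eventuallyEq hρκ
    intro v
    exact congrArg (fun (A : V →L[ℝ] V) => A v) (a.unique b)
  have i2 : ∀ v, fderiv ℝ κ v0 (fderiv ℝ ρ (ψ x) v) = v := by
    have a : HasFDerivAt (fun v => κ (ρ v)) ((fderiv ℝ κ v0).comp (fderiv ℝ ρ (ψ x))) (ψ x) :=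
      HasFDerivAt.comp (ψ x) (g := κ) (f := ρ) (by rw [hρ0]; exact dκ) dρ
    have b : HasFDerivAt (fun v => κ (ρ v)) (ContinuousLinearMap.id ℝ E3) (ψ x) :=
      (hasFDerivAt_id _).congr_of_eventuallyEq hκρ
    intro v
    exact congrArg (fun (A : E3 →L[ℝ] E3) => A v) (a.unique b)
  unfold Nondeg
  constructor
  · intro h v hv
    obtain ⟨w, hw⟩ := h (fderiv ℝ κ v0 v) (by
      intro h'; apply hv; rw [← i1 v, h', map_zero])
    rw [hh, i1] at hw
    exact ⟨_, hw⟩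
  · intro h v hv
    obtain ⟨w, hw⟩ := h (fderiv ℝ ρ (ψ x) v) (by
      intro h'; apply hv; rw [← i2 v, h', map_zero])
    refine ⟨fderiv ℝ κ v0 w, ?_⟩
    rw [hh, i1]; exact hw

end Param

end

section
open scoped Topology ContDiff
open Filter

/-! ### Cutoff functions -/

/-- abbreviation for the smooth transition -/
def ST (x : ℝ) : ℝ := Real.smoothTransition x

lemma ST_smooth : ContDiff ℝ (⊤ : ℕ∞) ST := Real.smoothTransition.contDiff
lemma ST_diff : Differentiable ℝ ST := ST_smooth.differentiable top_ne0
lemma ST_hasDeriv (x : ℝ) : HasDerivAt ST (deriv ST x) x := (ST_diff x).hasDerivAt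
lemma ST_zero {x : ℝ} (h : x ≤ 0) : ST x = 0 := Real.smoothTransition.zero_of_nonpos h
lemma ST_one {x : ℝ} (h : 1 ≤ x) : ST x = 1 := Real.smoothTransition.one_of_one_le h
lemma ST_nonneg (x : ℝ) : 0 ≤ ST x := Real.smoothTransition.nonneg x
lemma ST_le_one (x : ℝ) : ST x ≤ 1 := Real.smoothTransition.le_one x
lemma ST_deriv_nonneg (x : ℝ) : 0 ≤ deriv ST x := Real.smoothTransition.monotone.deriv_nonneg
lemma ST_deriv_zero {x : ℝ} (h : x ≤ 0) : deriv ST x = 0 := by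
  apply IsLocalMin.deriv_eq_zero
  refine Eventually.of_forall fun y => ?_
  rw [ST_zero h]; exact ST_nonneg y
lemma ST_deriv_one {x : ℝ} (h : 1 ≤ x) : deriv ST x = 0 := by
  apply IsLocalMax.deriv_eq_zero
  refine Eventually.of_forall fun y => ?_
  rw [ST_one h]; exact ST_le_one y

lemma ST_bound : ∃ K : ℝ, 0 < K ∧ ∀ x, deriv ST x ≤ K := by
  have hc : Continuous (deriv ST) := ST_smooth.continuous_deriv (by simp)
  obtain ⟨C, hC⟩ := (isCompact_Icc (a := (0:ℝ)) (b := 1)).exists_bound_of_continuousOn hc.continuousOn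
  refine ⟨max C 1, by positivity, fun x => ?_⟩
  by_cases h0 : x ≤ 0
  · rw [ST_deriv_zero h0]; positivity
  by_cases h1 : 1 ≤ x
  · rw [ST_deriv_one h1]; positivity
  · push Not at h0 h1
    exact (le_abs_self _).trans ((hC x ⟨h0.le, h1.le⟩).trans (le_max_left _ _))

/-- the bump whose integral is the profile -/
def BB (x : ℝ) : ℝ := expNegInvGlue ((x - 1) * (4 - x))

lemma BB_smooth : ContDiff ℝ (⊤ : ℕ∞) BB := by
  unfold BB
  exact expNegInvGlue.contDiff.comp (by fun_prop)
lemma BB_zero_of_le {x : ℝ} (h : x ≤ 1) : BB x = 0 :=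
  expNegInvGlue.zero_of_nonpos (by nlinarith)
lemma BB_zero_of_ge {x : ℝ} (h : 4 ≤ x) : BB x = 0 :=
  expNegInvGlue.zero_of_nonpos (by nlinarith)
lemma BB_nonneg (x : ℝ) : 0 ≤ BB x := expNegInvGlue.nonneg _
lemma BB_pos {x : ℝ} (h : 1 < x) (h' : x < 4) : 0 < BB x :=
  expNegInvGlue.pos_of_pos (by nlinarith)
lemma BB_eq {x : ℝ} (h : 1 < x) (h' : x < 4) : BB x = Real.exp (-((x - 1) * (4 - x))⁻¹) := by
  have : ¬ ((x - 1) * (4 - x) ≤ 0) := by nlinarith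
  simp [BB, expNegInvGlue, this]
lemma BB_ge {x : ℝ} (h : 2 ≤ x) (h' : x ≤ 3) : Real.exp (-1) ≤ BB x := by
  rw [BB_eq (by linarith) (by linarith)]
  apply Real.exp_le_exp.2
  have : 1 ≤ (x - 1) * (4 - x) := by nlinarith
  have := inv_le_one_of_one_le₀ this
  linarith
lemma BB_inj {x y : ℝ} (h : 1 < x) (h' : x < 4) (k : 1 < y) (k' : y < 4) (e : BB x = BB y) :
    (x - y) * (5 - x - y) = 0 := by
  rw [BB_eq h h', BB_eq k k'] at e
  have := inv_injective (neg_injective (Real.exp_injective e))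
  linarith
lemma BB_deriv_ne {x : ℝ} (h : 1 < x) (h' : x < 4) (h2 : x ≠ 5/2) : deriv BB x ≠ 0 := by
  have e : BB =ᶠ[𝓝 x] fun x => Real.exp (-((x - 1) * (4 - x))⁻¹) := by
    filter_upwards [Ioo_mem_nhds h h'] with y hy
    exact BB_eq hy.1 hy.2
  have hp : 0 < (x - 1) * (4 - x) := by nlinarith
  have d : HasDerivAt (fun x : ℝ => Real.exp (-((x - 1) * (4 - x))⁻¹)) _ x :=
    HasDerivAt.exp (HasDerivAt.neg (HasDerivAt.inv
      (((hasDerivAt_id x).sub_const 1).mul ((hasDerivAt_id x).const_sub 4)) hp.ne'))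
  rw [e.deriv_eq, d.deriv]
  refine mul_ne_zero (Real.exp_ne_zero _) (neg_ne_zero.2 (div_ne_zero ?_ (by simpa using ⟨by linarith, by linarith⟩)))
  simp only [id]
  intro hh
  apply h2; linarith

/-- primitive of `BB` -/
def II (x : ℝ) : ℝ := ∫ t in (0:ℝ)..x, BB t

lemma II_hasDeriv (x : ℝ) : HasDerivAt II (BB x) x := by
  have := BB_smooth.continuous
  exact intervalIntegral.integral_hasDerivAt_right (this.intervalIntegrable _ _)
    this.stronglyMeasurable.stronglyMeasurableAtFilter this.continuousAt
lemma II_deriv : deriv II = BB := funext fun x => (II_hasDeriv x).deriv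
lemma II_smooth : ContDiff ℝ (⊤ : ℕ∞) II := by
  rw [contDiff_infty_iff_deriv]
  refine ⟨fun x => (II_hasDeriv x).differentiableAt, ?_⟩
  rw [II_deriv]; exact BB_smooth
lemma II_mono : Monotone II := monotone_of_deriv_nonneg (fun x => (II_hasDeriv x).differentiableAt)
  (fun x => by rw [II_deriv]; exact BB_nonneg x)
lemma II_zero {x : ℝ} (h : x ≤ 1) : II x = 0 := by
  unfold II
  rw [intervalIntegral.integral_congr (g := fun _ => (0:ℝ))]
  · simp
  · intro t ht
    rcases le_total 0 x with h0 | h0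
    · rw [uIcc_of_le h0] at ht; exact BB_zero_of_le (ht.2.trans h)
    · rw [uIcc_of_ge h0] at ht; exact BB_zero_of_le (ht.2.trans zero_le_one)
lemma II_pos {x : ℝ} (h : 1 < x) : 0 < II x := by
  have hs : StrictMonoOn II (Icc 1 4) := by
    apply strictMonoOn_of_deriv_pos (convex_Icc _ _) II_smooth.continuous.continuousOn
    intro y hy
    rw [interior_Icc] at hy
    rw [II_deriv]; exact BB_pos hy.1 hy.2
  have h1 : II 1 < II (min x 4) := hs ⟨le_refl _, by norm_num⟩ ⟨le_min h.le (by norm_num), min_le_right _ _⟩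
    (lt_min h (by norm_num))
  rw [II_zero le_rfl] at h1
  exact h1.trans_le (II_mono (min_le_left _ _))
lemma II_const {x : ℝ} (h : 4 ≤ x) : II x = II 4 := by
  have hz : II x - II 4 = 0 := by
    unfold II
    have := BB_smooth.continuous
    rw [intervalIntegral.integral_interval_sub_left (this.intervalIntegrable _ _) (this.intervalIntegrable _ _)]
    rw [intervalIntegral.integral_congr (g := fun _ => (0:ℝ))]
    · simp
    · intro t ht
      rw [uIcc_of_le h] at ht
      exact BB_zero_of_ge ht.1
  linarith

lemma exists_sigma (C : ℝ) (hC : 0 < C) : ∃ (R : ℝ) (σ : ℝ → ℝ), 4 ≤ R ∧ ContDiff ℝ (⊤ : ℕ∞) σ ∧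
    (∀ x ≤ 1, σ x = 0) ∧ (∀ x, R ≤ x → σ x = 0) ∧
    (∀ x, 2 ≤ x → x ≤ 3 → C ≤ deriv σ x) ∧ (∀ x, -(1/2) ≤ deriv σ x) ∧
    (∀ x, 4 ≤ x → deriv σ x ≤ 0) ∧ (∀ x, 0 < deriv σ x → 0 < σ x) ∧
    (∀ x, deriv σ x = 1 → x ≠ 5/2 → deriv (deriv σ) x ≠ 0) ∧
    (∀ x y, x < 2 → y < 2 → deriv σ x = 1 → deriv σ y = 1 → x = y) ∧
    (∀ x y, 3 < x → 3 < y → deriv σ x = 1 → deriv σ y = 1 → x = y) := by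
  obtain ⟨K, hK, hKb⟩ := ST_bound
  set N : ℝ := C * Real.exp 1 with hN
  have hNp : 0 < N := by positivity
  have h4 : 0 < II 4 := II_pos (by norm_num)
  set T : ℝ := 2 * (N * II 4 * K) with hT
  have hTp : 0 < T := by positivity
  set σ : ℝ → ℝ := fun x => N * II x * (1 - ST ((x - 4) / T)) with hσ
  have hsm : ContDiff ℝ (⊤ : ℕ∞) σ := by
    refine (contDiff_const.mul II_smooth).mul (contDiff_const.sub (ST_smooth.comp ?_))
    fun_prop
  have hd : ∀ x, HasDerivAt σ (N * BB x * (1 - ST ((x - 4) / T)) +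
      N * II x * (-(deriv ST ((x - 4) / T) * (1 / T)))) x := by
    intro x
    have a : HasDerivAt (fun x : ℝ => (x - 4) / T) (1 / T) x :=
      ((hasDerivAt_id x).sub_const 4).div_const T
    have b : HasDerivAt (fun x : ℝ => ST ((x - 4) / T)) (deriv ST ((x - 4) / T) * (1 / T)) x :=
      HasDerivAt.comp x (ST_hasDeriv _) a
    exact ((II_hasDeriv x).const_mul N).mul (b.const_sub 1)
  have hlow : ∀ x ≤ 4, deriv σ x = N * BB x := by
    intro x hx
    have : (x - 4) / T ≤ 0 := div_nonpos_of_nonpos_of_nonneg (by linarith) hTp.le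
    rw [(hd x).deriv, ST_deriv_zero this, ST_zero this]; ring
  have hhigh : ∀ x, 4 ≤ x → deriv σ x = - (N * II 4 * deriv ST ((x - 4) / T) / T) := by
    intro x hx
    rw [(hd x).deriv, BB_zero_of_ge hx, II_const hx]; ring
  have hle0 : ∀ x, 4 ≤ x → deriv σ x ≤ 0 := by
    intro x hx
    rw [hhigh x hx]
    have := ST_deriv_nonneg ((x - 4) / T)
    have : 0 ≤ N * II 4 * deriv ST ((x - 4) / T) / T := by positivity
    linarith
  have hrange : ∀ x, 0 < deriv σ x → 1 < x ∧ x < 4 := by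
    intro x hx
    have h1 : x < 4 := by
      by_contra h; push Not at h; linarith [hle0 x h]
    refine ⟨?_, h1⟩
    by_contra h; push Not at h
    rw [hlow x h1.le, BB_zero_of_le h] at hx; simp at hx
  refine ⟨4 + T, σ, by linarith, hsm, ?_, ?_, ?_, ?_, hle0, ?_, ?_, ?_, ?_⟩
  · intro x hx; simp [hσ, II_zero hx]
  · intro x hx
    have : 1 ≤ (x - 4) / T := by rw [le_div_iff₀ hTp]; linarith
    simp [hσ, ST_one this]
  · intro x h2 h3
    rw [hlow x (by linarith)]
    have := BB_ge h2 h3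
    calc C = C * Real.exp 1 * Real.exp (-1) := by rw [mul_assoc, ← Real.exp_add]; simp
      _ ≤ _ := by gcongr
  · intro x
    rcases le_total x 4 with h | h
    · rw [hlow x h]
      have : 0 ≤ N * BB x := mul_nonneg hNp.le (BB_nonneg x)
      linarith
    · rw [hhigh x h, neg_le_neg_iff, div_le_iff₀ hTp]
      calc N * II 4 * deriv ST ((x - 4) / T) ≤ N * II 4 * K := by
            gcongr; exact hKb _
        _ = _ := by rw [hT]; ring
  · intro x hx
    obtain ⟨h1, h2⟩ := hrange x hx
    have : (x - 4) / T ≤ 0 := div_nonpos_of_nonpos_of_nonneg (by linarith) hTp.le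
    simp only [hσ, ST_zero this]
    have := II_pos h1
    have : 0 < N * II x := by positivity
    linarith
  · intro x hx h52
    obtain ⟨h1, h2⟩ := hrange x (by rw [hx]; norm_num)
    have e : deriv σ =ᶠ[𝓝 x] fun y => N * BB y := by
      filter_upwards [Iio_mem_nhds h2] with y hy
      exact hlow y (le_of_lt hy)
    rw [e.deriv_eq, deriv_const_mul _ (BB_smooth.differentiable top_ne0 x)]
    exact mul_ne_zero hNp.ne' (BB_deriv_ne h1 h2 h52)
  · intro x y hx hy ex ey
    obtain ⟨h1, h2⟩ := hrange x (by rw [ex]; norm_num)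
    obtain ⟨k1, k2⟩ := hrange y (by rw [ey]; norm_num)
    rw [hlow _ h2.le] at ex
    rw [hlow _ k2.le] at ey
    have := BB_inj h1 h2 k1 k2 (mul_left_cancel₀ hNp.ne' (ex.trans ey.symm))
    rcases mul_eq_zero.1 this with h | h <;> linarith
  · intro x y hx hy ex ey
    obtain ⟨h1, h2⟩ := hrange x (by rw [ex]; norm_num)
    obtain ⟨k1, k2⟩ := hrange y (by rw [ey]; norm_num)
    rw [hlow _ h2.le] at ex
    rw [hlow _ k2.le] at ey
    have := BB_inj h1 h2 k1 k2 (mul_left_cancel₀ hNp.ne' (ex.trans ey.symm))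
    rcases mul_eq_zero.1 this with h | h <;> linarith

end

section
open scoped Topology ContDiff
open Filter

/-- nondegenerate Hessian -/
def NondegAt {V : Type*} [NormedAddCommGroup V] [NormedSpace ℝ V] (g : V → ℝ) (v0 : V) : Prop :=
  ∀ v : V, v ≠ 0 → ∃ w : V, fderiv ℝ (fun u => fderiv ℝ g u v) v0 w ≠ 0

lemma NondegAt.congr {V : Type*} [NormedAddCommGroup V] [NormedSpace ℝ V] {g h : V → ℝ} {v0 : V}
    (hg : NondegAt g v0) (e : h =ᶠ[𝓝 v0] g) : NondegAt h v0 := by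
  intro v hv
  obtain ⟨w, hw⟩ := hg v hv
  refine ⟨w, ?_⟩
  have : (fun u => fderiv ℝ h u v) =ᶠ[𝓝 v0] fun u => fderiv ℝ g u v := by
    filter_upwards [e.eventually_nhds] with u hu
    rw [Filter.EventuallyEq.fderiv_eq hu]
  rwa [this.fderiv_eq]

abbrev P3 := ℝ × ℝ × ℝ

lemma pd1 {G : P3 → ℝ} {s x φ : ℝ} (h : HasFDerivAt G (0 : P3 →L[ℝ] ℝ) (s, x, φ)) :
    HasDerivAt (fun t => G (t, x, φ)) 0 s := by
  have := h.comp_hasDerivAt s ((hasDerivAt_id s).prodMk (hasDerivAt_const s (x, φ)))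
  exact HasDerivAt.congr_deriv this (by simp)
lemma pd2 {G : P3 → ℝ} {s x φ : ℝ} (h : HasFDerivAt G (0 : P3 →L[ℝ] ℝ) (s, x, φ)) :
    HasDerivAt (fun t => G (s, t, φ)) 0 x := by
  have := h.comp_hasDerivAt x ((hasDerivAt_const x s).prodMk ((hasDerivAt_id x).prodMk (hasDerivAt_const x φ)))
  exact HasDerivAt.congr_deriv this (by simp)
lemma pd3 {G : P3 → ℝ} {s x φ : ℝ} (h : HasFDerivAt G (0 : P3 →L[ℝ] ℝ) (s, x, φ)) :
    HasDerivAt (fun t => G (s, x, t)) 0 φ := by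
  have := h.comp_hasDerivAt φ ((hasDerivAt_const φ s).prodMk ((hasDerivAt_const φ x).prodMk (hasDerivAt_id φ)))
  exact HasDerivAt.congr_deriv this (by simp)

lemma sq_eq_one_iff_aux {a : ℝ} (h : a ^ 2 = 1) : a = 1 ∨ a = -1 := by
  have : (a - 1) * (a + 1) = 0 := by linear_combination h
  rcases mul_eq_zero.1 this with h | h
  · left; linarith
  · right; linarith

/-- the height profile in the circle direction -/
def aF (s : ℝ) : ℝ := (1 - Real.cos s) / 2
lemma aF_hasDeriv (s : ℝ) : HasDerivAt aF (Real.sin s / 2) s := by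
  have := ((Real.hasDerivAt_cos s).const_sub 1).div_const 2
  exact HasDerivAt.congr_deriv this (by simp)
lemma aF_nonneg (s : ℝ) : 0 ≤ aF s := by unfold aF; linarith [Real.cos_le_one s]
lemma aF_le_one (s : ℝ) : aF s ≤ 1 := by unfold aF; linarith [Real.neg_one_le_cos s]
lemma aF_smooth : ContDiff ℝ (⊤ : ℕ∞) aF := by
  unfold aF; exact (contDiff_const.sub Real.contDiff_cos).div_const 2

/-- simple local form -/
def HH (ϑ σ : ℝ → ℝ) (p : P3) : ℝ := p.2.1 * Real.cos (p.2.2 - ϑ p.1) + aF p.1 * σ p.2.1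

section
variable {ϑ σ : ℝ → ℝ} (hϑ : ContDiff ℝ (⊤ : ℕ∞) ϑ) (hσ : ContDiff ℝ (⊤ : ℕ∞) σ)
include hϑ hσ

lemma HH_fderiv (p v : P3) : fderiv ℝ (HH ϑ σ) p v =
    v.2.1 * Real.cos (p.2.2 - ϑ p.1) - p.2.1 * Real.sin (p.2.2 - ϑ p.1) * (v.2.2 - deriv ϑ p.1 * v.1)
      + Real.sin p.1 / 2 * v.1 * σ p.2.1 + aF p.1 * (deriv σ p.2.1 * v.2.1) := by
  have e1 : HasFDerivAt (fun p : P3 => p.1) (ContinuousLinearMap.fst ℝ ℝ (ℝ × ℝ)) p := hasFDerivAt_fst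
  have e2 : HasFDerivAt (fun p : P3 => p.2.1) ((ContinuousLinearMap.fst ℝ ℝ ℝ).comp (ContinuousLinearMap.snd ℝ ℝ (ℝ × ℝ))) p :=
    ((ContinuousLinearMap.fst ℝ ℝ ℝ).comp (ContinuousLinearMap.snd ℝ ℝ (ℝ × ℝ))).hasFDerivAt
  have e3 : HasFDerivAt (fun p : P3 => p.2.2) ((ContinuousLinearMap.snd ℝ ℝ ℝ).comp (ContinuousLinearMap.snd ℝ ℝ (ℝ × ℝ))) p :=
    ((ContinuousLinearMap.snd ℝ ℝ ℝ).comp (ContinuousLinearMap.snd ℝ ℝ (ℝ × ℝ))).hasFDerivAt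
  have dϑ := ((hϑ.differentiable top_ne0 p.1).hasDerivAt).comp_hasFDerivAt p e1
  have dσ := ((hσ.differentiable top_ne0 p.2.1).hasDerivAt).comp_hasFDerivAt p e2
  have da := (aF_hasDeriv p.1).comp_hasFDerivAt p e1
  have dc := (Real.hasDerivAt_cos (p.2.2 - ϑ p.1)).comp_hasFDerivAt p (e3.sub dϑ)
  have d := (e2.mul dc).add (da.mul dσ)
  have d' : HasFDerivAt (HH ϑ σ) _ p := d
  rw [d'.fderiv]
  simp
  ring

lemma HH_crit {s x φ : ℝ} (hx : 0 < x) (hσ1 : ∀ x, -(1/2) ≤ deriv σ x)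
    (hσ2 : ∀ x, 0 < deriv σ x → 0 < σ x)
    (hc : fderiv ℝ (HH ϑ σ) (s, x, φ) = 0) :
    Real.cos s = -1 ∧ deriv σ x = 1 ∧ Real.cos (φ - ϑ s) = -1 := by
  have k1 := HH_fderiv hϑ hσ (s, x, φ) (1, 0, deriv ϑ s)
  have k2 := HH_fderiv hϑ hσ (s, x, φ) (0, 1, 0)
  have k3 := HH_fderiv hϑ hσ (s, x, φ) (0, 0, 1)
  rw [hc] at k1 k2 k3
  simp at k1 k2 k3
  have hs : Real.sin (φ - ϑ s) = 0 := by
    rcases k3 with h | h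
    · exact absurd h hx.ne'
    · exact h
  have a0 := aF_nonneg s
  have a1 := aF_le_one s
  have b := hσ1 x
  have hcc : Real.cos (φ - ϑ s) ^ 2 = 1 := by
    have := Real.sin_sq_add_cos_sq (φ - ϑ s); rw [hs] at this; linarith
  have hcm : Real.cos (φ - ϑ s) = -1 := by
    rcases sq_eq_one_iff_aux hcc with h | h
    · exfalso; rw [h] at k2; nlinarith
    · exact h
  rw [hcm] at k2
  have hpos : 0 < deriv σ x := by
    by_contra h; push Not at h; nlinarith
  have hσp := hσ2 x hpos
  have hss : Real.sin s = 0 := by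
    rcases k1 with h | h
    · exact h
    · exact absurd h hσp.ne'
  have hcs : Real.cos s ^ 2 = 1 := by
    have := Real.sin_sq_add_cos_sq s; rw [hss] at this; linarith
  have hcs' : Real.cos s = -1 := by
    rcases sq_eq_one_iff_aux hcs with h | h
    · exfalso; have : aF s = 0 := by unfold aF; rw [h]; norm_num
      rw [this] at k2; norm_num at k2
    · exact h
  refine ⟨hcs', ?_, hcm⟩
  have : aF s = 1 := by unfold aF; rw [hcs']; norm_num
  rw [this] at k2; linarith

lemma HH_smooth : ContDiff ℝ (⊤ : ℕ∞) (HH ϑ σ) := by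
  unfold HH
  have := aF_smooth
  fun_prop

lemma HH_nondeg {s x φ : ℝ} (hx : 0 < x) (h1 : Real.cos s = -1) (h2 : deriv (deriv σ) x ≠ 0)
    (h3 : Real.cos (φ - ϑ s) = -1) (h4 : 0 < σ x) : NondegAt (HH ϑ σ) (s, x, φ) := by
  have hs : Real.sin s = 0 := by
    have := Real.sin_sq_add_cos_sq s; rw [h1] at this; nlinarith
  have hs2 : Real.sin (φ - ϑ s) = 0 := by
    have := Real.sin_sq_add_cos_sq (φ - ϑ s); rw [h3] at this; nlinarith
  have ha : aF s = 1 := by unfold aF; rw [h1]; norm_num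
  intro v hv
  have e : (fun u => fderiv ℝ (HH ϑ σ) u v) = fun p : P3 => v.2.1 * Real.cos (p.2.2 - ϑ p.1) - p.2.1 * Real.sin (p.2.2 - ϑ p.1) * (v.2.2 - deriv ϑ p.1 * v.1)
      + Real.sin p.1 / 2 * v.1 * σ p.2.1 + aF p.1 * (deriv σ p.2.1 * v.2.1) :=
    funext fun u => HH_fderiv hϑ hσ u v
  have hdiff : DifferentiableAt ℝ (fun u => fderiv ℝ (HH ϑ σ) u v) (s, x, φ) := by
    have : ContDiff ℝ 1 (fderiv ℝ (HH ϑ σ)) :=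
      (HH_smooth hϑ hσ).fderiv_right (m := 1) (by exact two_le_top)
    exact (this.differentiable (by simp) _).clm_apply (differentiableAt_const v)
  have line : ∀ w : P3, ∀ c : ℝ, HasDerivAt (fun t : ℝ => fderiv ℝ (HH ϑ σ) ((s, x, φ) + t • w) v) c 0 →
      fderiv ℝ (fun u => fderiv ℝ (HH ϑ σ) u v) (s, x, φ) w = c := by
    intro w c hcw
    have l : HasDerivAt (fun t : ℝ => ((s, x, φ) : P3) + t • w) w 0 := by
      simpa using ((hasDerivAt_id (0:ℝ)).smul_const w).const_add ((s, x, φ) : P3)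
    have hd' : HasFDerivAt (fun u => fderiv ℝ (HH ϑ σ) u v) (fderiv ℝ (fun u => fderiv ℝ (HH ϑ σ) u v) (s, x, φ)) (((s, x, φ) : P3) + (0:ℝ) • w) := by
      simpa using hdiff.hasFDerivAt
    have hh := hd'.comp_hasDerivAt (0:ℝ) l
    exact HasDerivAt.unique hh hcw
  have dϑ : Differentiable ℝ ϑ := hϑ.differentiable top_ne0
  have dϑ' : Differentiable ℝ (deriv ϑ) :=
    ((contDiff_infty_iff_deriv.1 hϑ).2).differentiable top_ne0
  have dσ : Differentiable ℝ σ := hσ.differentiable top_ne0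
  have dσ' : Differentiable ℝ (deriv σ) :=
    ((contDiff_infty_iff_deriv.1 hσ).2).differentiable top_ne0
  by_cases hv2 : v.2.1 = 0
  · by_cases hv1 : v.1 = 0
    · have hv3 : v.2.2 ≠ 0 := by
        intro h; apply hv; ext <;> simp [*]
      refine ⟨(0, 0, 1), ?_⟩
      rw [line (0, 0, 1) (x * v.2.2)]
      · exact mul_ne_zero hx.ne' hv3
      · simp only [congrFun e, hv2, hv1]
        simp
        have a : HasDerivAt (fun t : ℝ => φ + t - ϑ s) 1 0 := by
          simpa using ((hasDerivAt_id (0:ℝ)).const_add φ).sub_const (ϑ s)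
        have b := ((a.sin.const_mul x).mul_const v.2.2).neg
        exact HasDerivAt.congr_deriv b (by simp [h3])
    · refine ⟨(1, 0, deriv ϑ s), ?_⟩
      rw [line (1, 0, deriv ϑ s) (-(1/2) * v.1 * σ x)]
      · exact mul_ne_zero (mul_ne_zero (by norm_num) hv1) h4.ne'
      · simp only [congrFun e, hv2]
        simp
        have l1 : HasDerivAt (fun t : ℝ => s + t) 1 0 := by
          simpa using (hasDerivAt_id (0:ℝ)).const_add s
        have k1 : HasDerivAt (fun t : ℝ => ϑ (s + t)) (deriv ϑ s) 0 := by
          have := HasDerivAt.comp (0:ℝ) (h₂ := ϑ) (h := fun t : ℝ => s + t) (dϑ _).hasDerivAt l1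
          simpa [Function.comp_def] using this
        have k2 : HasDerivAt (fun t : ℝ => deriv ϑ (s + t)) (deriv (deriv ϑ) s) 0 := by
          have := HasDerivAt.comp (0:ℝ) (h₂ := deriv ϑ) (h := fun t : ℝ => s + t) (dϑ' _).hasDerivAt l1
          simpa [Function.comp_def] using this
        have a : HasDerivAt (fun t : ℝ => φ + t * deriv ϑ s - ϑ (s + t)) 0 0 := by
          exact HasDerivAt.congr_deriv ((((hasDerivAt_id (0:ℝ)).mul_const (deriv ϑ s)).const_add φ).sub k1) (by simp)
        have b := ((a.sin.const_mul x).mul ((k2.mul_const v.1).const_sub v.2.2))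
        have c := ((l1.sin.div_const 2).mul_const v.1).mul_const (σ x)
        have d := b.neg.add c
        exact HasDerivAt.congr_deriv d (by simp [h1, hs2]; ring)
  · refine ⟨(0, 1, 0), ?_⟩
    rw [line (0, 1, 0) (deriv (deriv σ) x * v.2.1)]
    · exact mul_ne_zero h2 hv2
    · simp only [congrFun e]
      simp [hs, hs2, ha]
      have l1 : HasDerivAt (fun t : ℝ => x + t) 1 0 := by
        simpa using (hasDerivAt_id (0:ℝ)).const_add x
      have k1 : HasDerivAt (fun t : ℝ => deriv σ (x + t)) (deriv (deriv σ) x) 0 := by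
        have := HasDerivAt.comp (0:ℝ) (h₂ := deriv σ) (h := fun t : ℝ => x + t) (dσ' _).hasDerivAt l1
        simpa [Function.comp_def] using this
      simpa using (k1.mul_const v.2.1).const_add (v.2.1 * Real.cos (φ - ϑ s))
end

end

section
open scoped Topology ContDiff
open Filter

/-- collapsing function near `s = 0` mod `2π` -/
def jF (s : ℝ) : ℝ := ST (4 * Real.cos s - 1) * Real.arcsin (Real.sin s)

lemma jF_smooth : ContDiff ℝ (⊤ : ℕ∞) jF := by
  rw [contDiff_iff_contDiffAt]
  intro s
  by_cases h : 0 < Real.cos s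
  · have h1 : Real.sin s ≠ 1 := by
      intro h'; have := Real.sin_sq_add_cos_sq s; rw [h'] at this; nlinarith
    have h2 : Real.sin s ≠ -1 := by
      intro h'; have := Real.sin_sq_add_cos_sq s; rw [h'] at this; nlinarith
    unfold jF
    refine ContDiffAt.mul ?_ ?_
    · exact (ST_smooth.comp (by fun_prop : ContDiff ℝ (⊤ : ℕ∞) fun s => 4 * Real.cos s - 1)).contDiffAt
    · exact (Real.contDiffAt_arcsin h2 h1).comp s Real.contDiff_sin.contDiffAt
  · have : jF =ᶠ[𝓝 s] fun _ => 0 := by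
      have : ∀ᶠ t in 𝓝 s, Real.cos t < 1/4 :=
        Real.continuous_cos.continuousAt.eventually (Iio_mem_nhds (by linarith))
      filter_upwards [this] with t ht
      unfold jF; rw [ST_zero (by linarith), zero_mul]
    exact contDiffAt_const.congr_of_eventuallyEq this

lemma jF_per (s : ℝ) : jF (s + 2 * π) = jF s := by
  unfold jF; rw [Real.cos_add_two_pi, Real.sin_add_two_pi]

/-- partially collapsed phase -/
def kapF (α : ℝ → ℝ) (s : ℝ) : ℝ := α (s - jF s)

lemma shift_int {α : ℝ → ℝ} {k : ℤ} (hα : ∀ s, α (s + 2 * π) = α s + 2 * π * k) (s : ℝ) (l : ℤ) :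
    α (s + 2 * π * l) = α s + 2 * π * ((l * k : ℤ) : ℝ) := by
  have hp : Function.Periodic (fun s => α s - k * s) (2 * π) := by
    intro s; simp only [hα]; ring
  have := hp.int_mul l s
  beta_reduce at this
  push_cast
  rw [mul_comm (2 * π) (l : ℝ)]
  linear_combination this

lemma kapF_shift {α : ℝ → ℝ} {k : ℤ} (hα : ∀ s, α (s + 2 * π) = α s + 2 * π * k) (s : ℝ) :
    kapF α (s + 2 * π) = kapF α s + 2 * π * k := by
  unfold kapF; rw [jF_per, ← hα]; ring_nf

lemma kapF_near {α : ℝ → ℝ} {k : ℤ} (hα : ∀ s, α (s + 2 * π) = α s + 2 * π * k) {s : ℝ}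
    (h : 1/2 < Real.cos s) : ∃ l : ℤ, kapF α s = α 0 + 2 * π * l := by
  obtain ⟨l, hl⟩ : ∃ l : ℤ, s + l * (2 * π) ∈ Ico (-π) (-π + 2 * π) := by
    obtain ⟨l, hl, -⟩ := existsUnique_add_zsmul_mem_Ico (Real.two_pi_pos) s (-π)
    exact ⟨l, by simpa using hl⟩
  set t := s + l * (2 * π) with ht
  have hc : Real.cos t = Real.cos s := Real.cos_add_int_mul_two_pi s l
  have hs : Real.sin t = Real.sin s := Real.sin_add_int_mul_two_pi s l
  have h1 : -(π / 2) < t := by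
    by_contra hh; push Not at hh
    have : Real.cos (-t) ≤ 0 := Real.cos_nonpos_of_pi_div_two_le_of_le (by linarith) (by linarith [hl.1, Real.pi_pos])
    rw [Real.cos_neg, hc] at this; linarith
  have h2 : t < π / 2 := by
    by_contra hh; push Not at hh
    have : Real.cos t ≤ 0 := Real.cos_nonpos_of_pi_div_two_le_of_le (by linarith) (by linarith [hl.2, Real.pi_pos])
    rw [hc] at this; linarith
  have hj : jF s = t := by
    unfold jF; rw [ST_one (by linarith), one_mul, ← hs, Real.arcsin_sin h1.le h2.le]
  refine ⟨(-l) * k, ?_⟩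
  unfold kapF
  rw [hj, ← shift_int hα 0 (-l)]
  congr 1
  rw [ht]; push_cast; ring

lemma kapF_smooth {α : ℝ → ℝ} (hα : ContDiff ℝ (⊤ : ℕ∞) α) : ContDiff ℝ (⊤ : ℕ∞) (kapF α) := by
  unfold kapF; exact hα.comp (contDiff_id.sub jF_smooth)

/-- scaled polar coordinates -/
def polC (ε x φ : ℝ) : ℂ := ((ε * x : ℝ) : ℂ) * Complex.exp (φ * Complex.I)

lemma norm_polC (ε x φ : ℝ) : ‖polC ε x φ‖ = |ε * x| := by
  simp only [polC, norm_mul, Complex.norm_exp_ofReal_mul_I, mul_one, Complex.norm_real,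
    Real.norm_eq_abs, abs_mul, Complex.ofReal_mul]

lemma polC_per (ε x φ : ℝ) : polC ε x (φ + 2 * π) = polC ε x φ := by
  unfold polC
  congr 1
  push_cast
  rw [add_mul]
  exact Complex.exp_periodic _

lemma polC_smooth (ε : ℝ) : ContDiff ℝ (⊤ : ℕ∞) (fun p : ℝ × ℝ => polC ε p.1 p.2) := by
  unfold polC
  have h : ContDiff ℝ (⊤ : ℕ∞) (fun x : ℝ => (x : ℂ)) := Complex.ofRealCLM.contDiff
  refine ContDiff.mul (h.comp (contDiff_const.mul contDiff_fst)) (ContDiff.cexp (ContDiff.mul (h.comp contDiff_snd) contDiff_const))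

/-- the interpolating function -/
def GG (m α σ : ℝ → ℝ) (q : ℝ × ℂ → ℝ) (R ε : ℝ) (p : P3) : ℝ :=
  p.2.1 * (1 - ST (p.2.1 - 2)) * Real.cos (p.2.2 - α 0)
  + ST (p.2.1 - 2) * (p.2.1 * (1 + (m p.1 - 1) * ST (p.2.1 - R))) *
      Real.cos (p.2.2 - kapF α p.1 - ST (p.2.1 - R) * (α p.1 - kapF α p.1))
  + aF p.1 * σ p.2.1 + ST (p.2.1 - R - 2) * (q (p.1, polC ε p.2.1 p.2.2) / ε)

section
variable {m α σ : ℝ → ℝ} {q : ℝ × ℂ → ℝ} {R ε η K : ℝ} {k : ℤ}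

lemma GG_smooth (hm : ContDiff ℝ (⊤ : ℕ∞) m) (hα : ContDiff ℝ (⊤ : ℕ∞) α) (hσ : ContDiff ℝ (⊤ : ℕ∞) σ)
    {s x φ : ℝ} (hq : ContDiffAt ℝ (⊤ : ℕ∞) q (s, polC ε x φ)) :
    ContDiffAt ℝ (⊤ : ℕ∞) (GG m α σ q R ε) (s, x, φ) := by
  have hST := ST_smooth
  have hk := kapF_smooth hα
  have ha := aF_smooth
  have hp : ContDiff ℝ (⊤ : ℕ∞) (fun p : P3 => (p.1, polC ε p.2.1 p.2.2)) :=
    contDiff_fst.prodMk ((polC_smooth ε).comp contDiff_snd)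
  have hq' : ContDiffAt ℝ (⊤ : ℕ∞) (fun p : P3 => q (p.1, polC ε p.2.1 p.2.2)) (s, x, φ) :=
    ContDiffAt.comp (g := q) (s, x, φ) hq hp.contDiffAt
  unfold GG
  refine ContDiffAt.add ?_ (ContDiffAt.mul ?_ (hq'.div_const ε))
  · apply ContDiff.contDiffAt
    fun_prop
  · apply ContDiff.contDiffAt
    fun_prop

lemma GG_per1 (hm : ∀ s, m (s + 2 * π) = m s) (hα : ∀ s, α (s + 2 * π) = α s + 2 * π * k)
    (hq : ∀ s w, q (s + 2 * π, w) = q (s, w)) (s x φ : ℝ) :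
    GG m α σ q R ε (s + 2 * π, x, φ) = GG m α σ q R ε (s, x, φ) := by
  unfold GG aF
  simp only [hm, hα, hq, kapF_shift hα, Real.cos_add_two_pi]
  congr 3
  rw [show φ - (kapF α s + 2 * π * k) - ST (x - R) * (α s + 2 * π * k - (kapF α s + 2 * π * k))
    = (φ - kapF α s - ST (x - R) * (α s - kapF α s)) - k * (2 * π) by ring, Real.cos_sub_int_mul_two_pi]

lemma GG_per2 (s x φ : ℝ) :
    GG m α σ q R ε (s, x, φ + 2 * π) = GG m α σ q R ε (s, x, φ) := by
  unfold GG
  simp only [polC_per]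
  rw [show φ + 2 * π - α 0 = φ - α 0 + 2 * π by ring, Real.cos_add_two_pi,
    show φ + 2 * π - kapF α s - ST (x - R) * (α s - kapF α s)
     = φ - kapF α s - ST (x - R) * (α s - kapF α s) + 2 * π by ring, Real.cos_add_two_pi]

lemma GG_low (hR : 4 ≤ R) (hσ : ∀ x ≤ 1, σ x = 0) {s x φ : ℝ} (hx : x ≤ 1) :
    GG m α σ q R ε (s, x, φ) = x * Real.cos (φ - α 0) := by
  unfold GG
  simp only [hσ x hx]
  rw [ST_zero (x := x - 2) (by linarith), ST_zero (x := x - R - 2) (by linarith)]; ring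

lemma GG_LF1 (hR : 4 ≤ R) (hα : ∀ s, α (s + 2 * π) = α s + 2 * π * k) {s x φ : ℝ}
    (h : x < 2 ∨ (x < 4 ∧ 1/2 < Real.cos s)) :
    GG m α σ q R ε (s, x, φ) = HH (fun _ => α 0) σ (s, x, φ) := by
  unfold GG HH
  rcases h with h | ⟨h, h'⟩
  · simp only
    rw [ST_zero (x := x - 2) (by linarith), ST_zero (x := x - R - 2) (by linarith)]; ring
  · obtain ⟨l, hl⟩ := kapF_near hα h'
    simp only
    rw [ST_zero (x := x - R) (by linarith), ST_zero (x := x - R - 2) (by linarith), hl]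
    rw [show φ - (α 0 + 2 * π * l) - 0 * (α s - (α 0 + 2 * π * l)) = φ - α 0 - l * (2 * π) by ring,
      Real.cos_sub_int_mul_two_pi]
    ring

lemma GG_LF2 (hR : 4 ≤ R) {s x φ : ℝ} (h : 3 ≤ x) (h' : x ≤ R) :
    GG m α σ q R ε (s, x, φ) = HH (kapF α) σ (s, x, φ) := by
  unfold GG HH
  simp only
  rw [ST_one (x := x - 2) (by linarith), ST_zero (x := x - R) (by linarith),
    ST_zero (x := x - R - 2) (by linarith)]
  ring_nf

lemma GG_LF3 {s x φ : ℝ} (h : 3 ≤ x) (h' : x ≤ R + 2) :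
    GG m α σ q R ε (s, x, φ) = (x * (1 + (m s - 1) * ST (x - R))) *
      Real.cos (φ - kapF α s - ST (x - R) * (α s - kapF α s)) + aF s * σ x := by
  unfold GG
  simp only
  rw [ST_one (x := x - 2) (by linarith), ST_zero (x := x - R - 2) (by linarith)]
  ring_nf

lemma GG_LF4 (hR : 4 ≤ R) (hσ : ∀ x, R ≤ x → σ x = 0) {s x φ : ℝ} (h : R + 1 ≤ x) :
    GG m α σ q R ε (s, x, φ) = x * m s * Real.cos (φ - α s)
      + ST (x - R - 2) * (q (s, polC ε x φ) / ε) := by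
  unfold GG
  simp only
  rw [ST_one (x := x - 2) (by linarith), ST_one (x := x - R) (by linarith), hσ x (by linarith)]
  ring_nf

lemma GG_mid (hR : 4 ≤ R) {s x φ : ℝ} (h' : x ≤ R) :
    GG m α σ q R ε (s, x, φ) = x * (1 - ST (x - 2)) * Real.cos (φ - α 0)
      + ST (x - 2) * x * Real.cos (φ - kapF α s) + aF s * σ x := by
  unfold GG
  simp only
  rw [ST_zero (x := x - R) (by linarith), ST_zero (x := x - R - 2) (by linarith)]
  ring_nf

lemma STc_hasDeriv (c x : ℝ) : HasDerivAt (fun x => ST (x - c)) (deriv ST (x - c)) x := by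
  have := HasDerivAt.comp x (ST_hasDeriv (x - c)) ((hasDerivAt_id x).sub_const c)
  exact HasDerivAt.congr_deriv this (by simp)

/-- no critical points in the range `[2,3]`, away from `s = 0` -/
lemma GG_nocrit_mid (hR : 4 ≤ R) (hσs : ContDiff ℝ (⊤ : ℕ∞) σ) (hK : ∀ x, deriv ST x ≤ K)
    (hσ : ∀ x, 2 ≤ x → x ≤ 3 → 4 * (2 + 6 * K) ≤ deriv σ x) {s x φ : ℝ} (h2 : 2 ≤ x) (h3 : x ≤ 3)
    (hs : Real.cos s ≤ 1/2)
    (hd : HasFDerivAt (GG m α σ q R ε) (0 : P3 →L[ℝ] ℝ) (s, x, φ)) : False := by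
  have p := pd2 hd
  have e : (fun t => GG m α σ q R ε (s, t, φ)) =ᶠ[𝓝 x] fun x => x * (1 - ST (x - 2)) * Real.cos (φ - α 0)
      + ST (x - 2) * x * Real.cos (φ - kapF α s) + aF s * σ x := by
    filter_upwards [Iio_mem_nhds (show x < R by linarith)] with t ht
    exact GG_mid hR (le_of_lt ht)
  have d1 := STc_hasDeriv 2 x
  have d2 := (hσs.differentiable top_ne0 x).hasDerivAt
  have d := ((((hasDerivAt_id x).mul (d1.const_sub 1)).mul_const (Real.cos (φ - α 0))).add
    ((d1.mul (hasDerivAt_id x)).mul_const (Real.cos (φ - kapF α s)))).add (d2.const_mul (aF s))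
  have := HasDerivAt.unique (p.congr_of_eventuallyEq e.symm) d
  simp only [id] at this
  have s1 := hσ x h2 h3
  have a1 : 1/4 ≤ aF s := by unfold aF; linarith
  have k0 := ST_deriv_nonneg (x - 2)
  have k1 := hK (x - 2)
  set S' := deriv ST (x - 2)
  set S := ST (x - 2)
  have S0 : 0 ≤ S := ST_nonneg _
  have S1 : S ≤ 1 := ST_le_one _
  set c1 := Real.cos (φ - α 0)
  set c2 := Real.cos (φ - kapF α s)
  have c11 : c1 ≤ 1 := Real.cos_le_one _
  have c12 : -1 ≤ c1 := Real.neg_one_le_cos _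
  have c21 : c2 ≤ 1 := Real.cos_le_one _
  have c22 : -1 ≤ c2 := Real.neg_one_le_cos _
  have t1 : 2 + 6 * K ≤ aF s * deriv σ x := by nlinarith
  have t2 : -1 ≤ (1 - S) * c1 + S * c2 := by nlinarith
  have t3 : S' * x ≤ 3 * K := by nlinarith
  have t4 : 0 ≤ S' * x := by positivity
  have t5 : -(6 * K) ≤ S' * x * (c2 - c1) := by nlinarith
  nlinarith

/-- no critical points in the range `[4,R+2)` -/
lemma GG_nocrit_out (hσs : ContDiff ℝ (⊤ : ℕ∞) σ) (hm : ∀ s, 1 ≤ m s)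
    (hσ : ∀ x, -(1/2) ≤ deriv σ x) (hσ' : ∀ x, 4 ≤ x → deriv σ x ≤ 0) {s x φ : ℝ} (h4 : 4 ≤ x)
    (h' : x < R + 2)
    (hd : HasFDerivAt (GG m α σ q R ε) (0 : P3 →L[ℝ] ℝ) (s, x, φ)) : False := by
  have p2 := pd2 hd
  have p3 := pd3 hd
  have e2 : (fun t => GG m α σ q R ε (s, t, φ)) =ᶠ[𝓝 x] fun x => (x * (1 + (m s - 1) * ST (x - R))) *
      Real.cos (φ - kapF α s - ST (x - R) * (α s - kapF α s)) + aF s * σ x := by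
    filter_upwards [Ioo_mem_nhds (show 3 < x by linarith) h'] with t ht
    exact GG_LF3 (le_of_lt ht.1) (le_of_lt ht.2)
  have e3 : (fun t => GG m α σ q R ε (s, x, t)) = fun φ => (x * (1 + (m s - 1) * ST (x - R))) *
      Real.cos (φ - kapF α s - ST (x - R) * (α s - kapF α s)) + aF s * σ x := by
    funext t
    exact GG_LF3 (by linarith) h'.le
  rw [e3] at p3
  have d1 := STc_hasDeriv R x
  have d2 := (hσs.differentiable top_ne0 x).hasDerivAt
  have f3 := HasDerivAt.unique p3 (((((hasDerivAt_id φ).sub_const (kapF α s)).sub_const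
    (ST (x - R) * (α s - kapF α s))).cos.const_mul (x * (1 + (m s - 1) * ST (x - R)))).add_const (aF s * σ x))
  have d := (((hasDerivAt_id x).mul (((d1.const_mul (m s - 1)).const_add 1))).mul
    (((d1.mul_const (α s - kapF α s)).const_sub (φ - kapF α s)).cos)).add (d2.const_mul (aF s))
  have f2 := HasDerivAt.unique (p2.congr_of_eventuallyEq e2.symm) d
  simp only [id, Pi.mul_apply] at f2 f3
  set c := Real.cos (φ - kapF α s - ST (x - R) * (α s - kapF α s))
  set sn := Real.sin (φ - kapF α s - ST (x - R) * (α s - kapF α s)) with hsn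
  have hsc : sn ^ 2 + c ^ 2 = 1 := Real.sin_sq_add_cos_sq _
  have S0 := ST_nonneg (x - R)
  have S'0 := ST_deriv_nonneg (x - R)
  have m1 := hm s
  have r1 : 1 ≤ 1 + (m s - 1) * ST (x - R) := by nlinarith
  have hρ : 0 < x * (1 + (m s - 1) * ST (x - R)) := by positivity
  have hs0 : sn = 0 := by
    have : x * (1 + (m s - 1) * ST (x - R)) * sn = 0 := by linarith
    rcases mul_eq_zero.1 this with h | h
    · exact absurd h hρ.ne'
    · exact h
  rw [hs0] at f2 hsc
  have a0 := aF_nonneg s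
  have a1 := aF_le_one s
  have b := hσ x
  have b' := hσ' x h4
  have t1 : 0 ≤ x * ((m s - 1) * deriv ST (x - R)) := by
    have : 0 ≤ m s - 1 := by linarith
    positivity
  have t2 : aF s * deriv σ x ≤ 0 := by nlinarith
  have t3 : -(1/2) ≤ aF s * deriv σ x := by nlinarith
  rcases sq_eq_one_iff_aux (by linarith : c ^ 2 = 1) with h | h <;> rw [h] at f2 <;> nlinarith

/-- no critical points in the outer range -/
lemma GG_nocrit_far (hR : 4 ≤ R) (hε : 0 < ε) (hm : ∀ s, 1 ≤ m s) (hσ : ∀ x, R ≤ x → σ x = 0)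
    (hK : ∀ x, deriv ST x ≤ K) (hη : 0 < η) (hηK : η * (2 + K * (R + 4)) < 1)
    {s x φ : ℝ} (h1 : R + 1 < x) (h' : x < R + 4)
    (hq : ContDiffAt ℝ (⊤ : ℕ∞) q (s, polC ε x φ)) (hq1 : |q (s, polC ε x φ)| ≤ η * ‖polC ε x φ‖)
    (hq2 : ∀ v, |fderiv ℝ q (s, polC ε x φ) (0, v)| ≤ η * ‖v‖)
    (hd : HasFDerivAt (GG m α σ q R ε) (0 : P3 →L[ℝ] ℝ) (s, x, φ)) : False := by
  have hx : 0 < x := by linarith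
  have p2 := pd2 hd
  have p3 := pd3 hd
  have e2 : (fun t => GG m α σ q R ε (s, t, φ)) =ᶠ[𝓝 x] fun x => x * m s * Real.cos (φ - α s)
      + ST (x - R - 2) * (q (s, polC ε x φ) / ε) := by
    filter_upwards [Ioi_mem_nhds h1] with t ht
    exact GG_LF4 hR hσ (le_of_lt ht)
  have e3 : (fun t => GG m α σ q R ε (s, x, t)) = fun φ => x * m s * Real.cos (φ - α s)
      + ST (x - R - 2) * (q (s, polC ε x φ) / ε) := by
    funext t
    exact GG_LF4 hR hσ h1.le
  rw [e3] at p3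
  set e := Complex.exp (φ * Complex.I) with he
  have ne : ‖e‖ = 1 := Complex.norm_exp_ofReal_mul_I φ
  have w2 : HasDerivAt (fun t : ℝ => polC ε t φ) ((ε : ℂ) * e) x := by
    have a : HasDerivAt (fun t : ℝ => ((ε * t : ℝ) : ℂ)) (ε : ℂ) x := by
      have := ((hasDerivAt_id x).const_mul ε).ofReal_comp
      exact HasDerivAt.congr_deriv this (by simp)
    exact a.mul_const e
  have w3 : HasDerivAt (fun t : ℝ => polC ε x t) (((ε * x : ℝ) : ℂ) * (e * Complex.I)) φ := by
    have a : HasDerivAt (fun t : ℝ => (t : ℂ) * Complex.I) Complex.I φ := by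
      have := ((hasDerivAt_id φ).ofReal_comp).mul_const Complex.I
      exact HasDerivAt.congr_deriv this (by simp)
    exact a.cexp.const_mul _
  have dq := (hq.differentiableAt top_ne0).hasFDerivAt
  have q2 : HasDerivAt (fun t => q (s, polC ε t φ)) _ x :=
    dq.comp_hasDerivAt x ((hasDerivAt_const x s).prodMk w2)
  have q3 : HasDerivAt (fun t => q (s, polC ε x t)) _ φ :=
    dq.comp_hasDerivAt φ ((hasDerivAt_const φ s).prodMk w3)
  have b2 := hq2 ((ε : ℂ) * e)
  have b3 := hq2 (((ε * x : ℝ) : ℂ) * (e * Complex.I))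
  rw [norm_polC, abs_of_pos (by positivity : 0 < ε * x)] at hq1
  rw [norm_mul, ne, Complex.norm_real, Real.norm_eq_abs, abs_of_pos hε] at b2
  rw [norm_mul, norm_mul, ne, Complex.norm_real, Real.norm_eq_abs, abs_of_pos (by positivity : 0 < ε * x),
    Complex.norm_I] at b3
  set A2 := fderiv ℝ q (s, polC ε x φ) (0, (ε : ℂ) * e)
  set A3 := fderiv ℝ q (s, polC ε x φ) (0, ((ε * x : ℝ) : ℂ) * (e * Complex.I))
  set Q := q (s, polC ε x φ)
  have dS : HasDerivAt (fun x => ST (x - R - 2)) (deriv ST (x - R - 2)) x := by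
    have := STc_hasDeriv (R + 2) x
    simpa [sub_sub] using this
  have f2 := HasDerivAt.unique (p2.congr_of_eventuallyEq e2.symm)
    ((((hasDerivAt_id x).mul_const (m s)).mul_const (Real.cos (φ - α s))).add (dS.mul (q2.div_const ε)))
  have f3 := HasDerivAt.unique p3
    ((((hasDerivAt_id φ).sub_const (α s)).cos.const_mul (x * m s)).add ((q3.div_const ε).const_mul (ST (x - R - 2))))
  simp only [id] at f2 f3
  set c := Real.cos (φ - α s)
  set sn := Real.sin (φ - α s)
  have hsc : sn ^ 2 + c ^ 2 = 1 := Real.sin_sq_add_cos_sq _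
  have S0 := ST_nonneg (x - R - 2)
  have S1 := ST_le_one (x - R - 2)
  have S'0 := ST_deriv_nonneg (x - R - 2)
  have S'1 := hK (x - R - 2)
  set S := ST (x - R - 2)
  set S' := deriv ST (x - R - 2)
  have B2 : |A2 / ε| ≤ η := by
    rw [abs_div, abs_of_pos hε, div_le_iff₀ hε]; linarith
  have B3 : |A3 / ε| ≤ η * x := by
    rw [abs_div, abs_of_pos hε, div_le_iff₀ hε]; nlinarith
  have B1 : |Q / ε| ≤ η * x := by
    rw [abs_div, abs_of_pos hε, div_le_iff₀ hε]; nlinarith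
  change 0 = 1 * m s * c + (S' * (Q / ε) + S * (A2 / ε)) at f2
  change 0 = x * m s * (-sn * 1) + S * (A3 / ε) at f3
  set a2 := A2 / ε
  set a3 := A3 / ε
  set a1 := Q / ε
  have ac : |c| ≤ 1 := Real.abs_cos_le_one _
  have as : |sn| ≤ 1 := Real.abs_sin_le_one _
  have key : x * m s = -(c * x * (S' * a1)) - c * x * (S * a2) + sn * (S * a3) := by
    linear_combination (-(x * m s)) * hsc + (-(c * x)) * f2 + sn * f3
  have hK0 : 0 ≤ K := S'0.trans S'1
  have g1 : |c * x * (S' * a1)| ≤ x * (K * (η * x)) := by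
    rw [abs_mul, abs_mul, abs_mul, abs_of_pos hx, abs_of_nonneg S'0]
    have : S' * |a1| ≤ K * (η * x) := by gcongr
    calc |c| * x * (S' * |a1|) ≤ 1 * x * (K * (η * x)) := by gcongr
      _ = _ := by ring
  have g2 : |c * x * (S * a2)| ≤ x * η := by
    rw [abs_mul, abs_mul, abs_mul, abs_of_pos hx, abs_of_nonneg S0]
    calc |c| * x * (S * |a2|) ≤ 1 * x * (1 * η) := by gcongr
      _ = _ := by ring
  have g3 : |sn * (S * a3)| ≤ η * x := by
    rw [abs_mul, abs_mul, abs_of_nonneg S0]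
    calc |sn| * (S * |a3|) ≤ 1 * (1 * (η * x)) := by gcongr
      _ = _ := by ring
  have g4 : x * (K * (η * x)) ≤ x * (K * (η * (R + 4))) := by gcongr
  have := hm s
  have g5 : x * m s ≤ x * (η * (2 + K * (R + 4))) := by
    have := abs_le.1 g1; have := abs_le.1 g2; have := abs_le.1 g3
    nlinarith
  nlinarith

end

end

section
open scoped Topology ContDiff
open Filter

lemma cos_neg_one {x : ℝ} (h : Real.cos x = -1) : ∃ n : ℤ, x = π + 2 * π * n := by
  have h2 : Real.cos (x - π) = 1 := by rw [Real.cos_sub_pi, h]; norm_num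
  obtain ⟨n, hn⟩ := (Real.cos_eq_one_iff _).1 h2
  exact ⟨n, by linarith⟩

/-- equality modulo the periods -/
def ModEq3 (p p' : P3) : Prop := ∃ j l : ℤ, p = (p'.1 + 2 * π * j, p'.2.1, p'.2.2 + 2 * π * l)

lemma GG_crit {m α σ : ℝ → ℝ} {q : ℝ × ℂ → ℝ} {R ε η K : ℝ} {k : ℤ}
    (hR : 4 ≤ R) (hε : 0 < ε) (hm : ∀ s, 1 ≤ m s) 
    (hα : ContDiff ℝ (⊤ : ℕ∞) α) (hαs : ∀ s, α (s + 2 * π) = α s + 2 * π * k)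
    (hσs : ContDiff ℝ (⊤ : ℕ∞) σ)
    (hσR : ∀ x, R ≤ x → σ x = 0) (hK0 : 0 < K) (hK : ∀ x, deriv ST x ≤ K)
    (hσC : ∀ x, 2 ≤ x → x ≤ 3 → 4 * (2 + 6 * K) ≤ deriv σ x)
    (hσ1 : ∀ x, -(1/2) ≤ deriv σ x) (hσ4 : ∀ x, 4 ≤ x → deriv σ x ≤ 0)
    (hσ2 : ∀ x, 0 < deriv σ x → 0 < σ x)
    (hσ5 : ∀ x, deriv σ x = 1 → x ≠ 5/2 → deriv (deriv σ) x ≠ 0)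
    (hσ6 : ∀ x y, x < 2 → y < 2 → deriv σ x = 1 → deriv σ y = 1 → x = y)
    (hσ7 : ∀ x y, 3 < x → 3 < y → deriv σ x = 1 → deriv σ y = 1 → x = y)
    (hη : 0 < η) (hηK : η * (2 + K * (R + 4)) < 1)
    (hq : ∀ s w, ‖w‖ < ε * (R + 4) → ContDiffAt ℝ (⊤ : ℕ∞) q (s, w) ∧ |q (s, w)| ≤ η * ‖w‖ ∧
      ∀ v, |fderiv ℝ q (s, w) (0, v)| ≤ η * ‖v‖)
    (hs : ∀ s x φ, |x| < R + 4 → ContDiffAt ℝ (⊤ : ℕ∞) (GG m α σ q R ε) (s, x, φ)) :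
    ∃ p1 p2 : P3, ∀ s x φ, 0 < x → x < R + 4 → fderiv ℝ (GG m α σ q R ε) (s, x, φ) = 0 →
      NondegAt (GG m α σ q R ε) (s, x, φ) ∧ (ModEq3 (s, x, φ) p1 ∨ ModEq3 (s, x, φ) p2) := by
  obtain ⟨x1, hx1⟩ : ∃ x1, ∀ x, x < 2 → deriv σ x = 1 → x = x1 := by
    by_cases h : ∃ x, x < 2 ∧ deriv σ x = 1
    · obtain ⟨x, h1, h2⟩ := h
      exact ⟨x, fun y h3 h4 => hσ6 y x h3 h1 h4 h2⟩
    · exact ⟨0, fun x h1 h2 => absurd ⟨x, h1, h2⟩ h⟩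
  obtain ⟨x2, hx2⟩ : ∃ x2, ∀ x, 3 < x → deriv σ x = 1 → x = x2 := by
    by_cases h : ∃ x, 3 < x ∧ deriv σ x = 1
    · obtain ⟨x, h1, h2⟩ := h
      exact ⟨x, fun y h3 h4 => hσ7 y x h3 h1 h4 h2⟩
    · exact ⟨0, fun x h1 h2 => absurd ⟨x, h1, h2⟩ h⟩
  refine ⟨(π, x1, α 0 + π), (π, x2, kapF α π + π), ?_⟩
  intro s x φ hx0 hxR hc
  have hd : HasFDerivAt (GG m α σ q R ε) (0 : P3 →L[ℝ] ℝ) (s, x, φ) := by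
    rw [← hc]
    exact ((hs s x φ (by rwa [abs_of_pos hx0])).differentiableAt top_ne0).hasFDerivAt
  have cx : ContinuousAt (fun p : P3 => p.2.1) (s, x, φ) := by fun_prop
  have cs : ContinuousAt (fun p : P3 => Real.cos p.1) (s, x, φ) := by fun_prop
  rcases lt_or_ge x 2 with h | h
  · have e : GG m α σ q R ε =ᶠ[𝓝 (s, x, φ)] HH (fun _ => α 0) σ := by
      filter_upwards [cx.eventually (Iio_mem_nhds h)] with p hp
      exact GG_LF1 hR hαs (Or.inl hp)
    rw [e.fderiv_eq] at hc
    obtain ⟨k1, k2, k3⟩ := HH_crit contDiff_const hσs hx0 hσ1 hσ2 hc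
    refine ⟨(HH_nondeg contDiff_const hσs hx0 k1 (hσ5 x k2 (by linarith)) k3 (hσ2 x (by linarith))).congr e, Or.inl ?_⟩
    obtain ⟨j, hj⟩ := cos_neg_one k1
    obtain ⟨l, hl⟩ := cos_neg_one k3
    refine ⟨j, l, ?_⟩
    simp only [Prod.mk.injEq]
    exact ⟨hj, hx1 x h k2, by linarith⟩
  rcases le_or_gt x 3 with h3 | h3
  · exfalso
    rcases le_or_gt (Real.cos s) (1/2) with hcs | hcs
    · exact GG_nocrit_mid hR hσs hK hσC h h3 hcs hd
    · have e : GG m α σ q R ε =ᶠ[𝓝 (s, x, φ)] HH (fun _ => α 0) σ := by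
        filter_upwards [cx.eventually (Iio_mem_nhds (show x < 4 by linarith)), cs.eventually (Ioi_mem_nhds hcs)] with p hp hp'
        exact GG_LF1 hR hαs (Or.inr ⟨hp, hp'⟩)
      rw [e.fderiv_eq] at hc
      obtain ⟨k1, k2, k3⟩ := HH_crit contDiff_const hσs hx0 hσ1 hσ2 hc
      linarith
  rcases lt_or_ge x 4 with h4 | h4
  · have e : GG m α σ q R ε =ᶠ[𝓝 (s, x, φ)] HH (kapF α) σ := by
      filter_upwards [cx.eventually (Iio_mem_nhds h4), cx.eventually (Ioi_mem_nhds h3)] with p hp hp'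
      exact GG_LF2 hR (le_of_lt hp') ((le_of_lt hp).trans hR)
    rw [e.fderiv_eq] at hc
    obtain ⟨k1, k2, k3⟩ := HH_crit (kapF_smooth hα) hσs hx0 hσ1 hσ2 hc
    refine ⟨(HH_nondeg (kapF_smooth hα) hσs hx0 k1 (hσ5 x k2 (by linarith)) k3 (hσ2 x (by linarith))).congr e, Or.inr ?_⟩
    obtain ⟨j, hj⟩ := cos_neg_one k1
    obtain ⟨l, hl⟩ := cos_neg_one k3
    refine ⟨j, l + j * k, ?_⟩
    have := shift_int (kapF_shift hαs) π j
    rw [← hj] at this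
    push_cast at this
    simp only [Prod.mk.injEq]
    refine ⟨hj, hx2 x h3 k2, ?_⟩
    push_cast
    linarith
  exfalso
  rcases lt_or_ge x (R + 2) with h5 | h5
  · exact GG_nocrit_out hσs hm hσ1 hσ4 h4 h5 hd
  · have hn : ‖polC ε x φ‖ < ε * (R + 4) := by
      rw [norm_polC, abs_of_pos (by positivity : 0 < ε * x)]; gcongr
    obtain ⟨q1, q2, q3⟩ := hq s _ hn
    exact GG_nocrit_far hR hε hm hσR hK hη hηK (by linarith) hxR q1 q2 q3 hd

end

section
open scoped Topology ContDiff
open Filter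

lemma per_reduce {P : ℝ → Prop} (hP : ∀ s, P (s + 2 * π) ↔ P s) (h : ∀ s ∈ Icc 0 (2 * π), P s) (s : ℝ) : P s := by
  have hp : Function.Periodic P (2 * π) := fun s => propext (hP s)
  obtain ⟨y, hy, e⟩ := hp.exists_mem_Ico₀ Real.two_pi_pos s
  rw [e]; exact h y ⟨hy.1, hy.2.le⟩

lemma unif {P : ℝ → ℂ → Prop} (hP : ∀ s w, P (s + 2 * π) w ↔ P s w)
    (h : ∀ s : ℝ, ∀ᶠ p : ℝ × ℂ in 𝓝 (s, 0), P p.1 p.2) :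
    ∃ ε > 0, ∀ s w, ‖w‖ < ε → P s w := by
  have key : ∀ᶠ w in 𝓝 (0:ℂ), ∀ s ∈ Icc 0 (2 * π), P s w := by
    refine (isCompact_Icc (a := (0:ℝ)) (b := 2 * π)).eventually_forall_of_forall_eventually (fun s _ => ?_)
    have hc : ContinuousAt (fun z : ℂ × ℝ => (z.2, z.1)) (0, s) := by fun_prop
    exact hc.eventually (h s)
  obtain ⟨ε, h0, hε⟩ := Metric.eventually_nhds_iff.1 key
  refine ⟨ε, h0, fun s w hw => ?_⟩
  refine per_reduce (P := fun s => P s w) (fun s => hP s w) (fun s hs => hε (by simpa using hw) s hs) s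

lemma NondegAt.const_mul {V : Type*} [NormedAddCommGroup V] [NormedSpace ℝ V] {g : V → ℝ} {v0 : V}
    (hg : NondegAt g v0) {a : ℝ} (ha : a ≠ 0) : NondegAt (fun u => a * g u) v0 := by
  intro v hv
  obtain ⟨w, hw⟩ := hg v hv
  refine ⟨w, ?_⟩
  have e1 : ∀ f : V → ℝ, ∀ u, fderiv ℝ (fun u => a * f u) u = a • fderiv ℝ f u := by
    intro f u
    exact congrFun (fderiv_const_smul_field (f := f) a) u
  simp only [e1]
  have : (fun u => (a • fderiv ℝ g u) v) = fun u => a * (fderiv ℝ g u v) := by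
    funext u; rfl
  rw [this, e1]
  simpa using ⟨ha, hw⟩

/-- smooth logarithm of a nonvanishing periodic curve -/
lemma exists_log {c : ℝ → ℂ} (hc : ContDiff ℝ (⊤ : ℕ∞) c) (h0 : ∀ s, c s ≠ 0)
    (hp : ∀ s, c (s + 2 * π) = c s) :
    ∃ (A : ℝ → ℂ) (k : ℤ), ContDiff ℝ (⊤ : ℕ∞) A ∧ (∀ s, c s = Complex.exp (A s)) ∧
      ∀ s, A (s + 2 * π) = A s + 2 * π * k * Complex.I := by
  set d : ℝ → ℂ := fun s => deriv c s / c s with hd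
  have hd' : ContDiff ℝ (⊤ : ℕ∞) (deriv c) := by
    have := (contDiff_infty_iff_deriv (𝕜 := ℝ) (f := c)).1 hc
    exact this.2
  have ds : ContDiff ℝ (⊤ : ℕ∞) d := by
    simp only [hd, div_eq_mul_inv]
    exact hd'.mul (hc.inv h0)
  set A : ℝ → ℂ := fun s => Complex.log (c 0) + ∫ t in (0:ℝ)..s, d t with hA
  have hAd : ∀ s, HasDerivAt A (d s) s := fun s => by
    have := (intervalIntegral.integral_hasDerivAt_right (ds.continuous.intervalIntegrable 0 s)
      ds.continuous.stronglyMeasurable.stronglyMeasurableAtFilter ds.continuous.continuousAt)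
    exact this.const_add _
  have dA : deriv A = d := funext fun s => (hAd s).deriv
  have sA : ContDiff ℝ (⊤ : ℕ∞) A := by
    rw [contDiff_infty_iff_deriv, dA]
    exact ⟨fun s => (hAd s).differentiableAt, ds⟩
  have hcd : ∀ s, HasDerivAt c (deriv c s) s := fun s => (hc.differentiable top_ne0 s).hasDerivAt
  have e1 : ∀ s, c s * Complex.exp (- A s) = 1 := by
    intro s
    have k : ∀ x, HasDerivAt (fun s => c s * Complex.exp (- A s)) 0 x := by
      intro x
      have := (hcd x).mul ((hAd x).neg.cexp)
      refine this.congr_deriv ?_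
      simp only [hd]; field_simp [h0 x]; simp
    have : (fun s => c s * Complex.exp (- A s)) s = (fun s => c s * Complex.exp (- A s)) 0 :=
      is_const_of_deriv_eq_zero (fun x => (k x).differentiableAt) (fun x => (k x).deriv) s 0
    simp only at this
    rw [this]
    simp [hA, Complex.exp_neg, Complex.exp_log (h0 0), h0 0]
  have e2 : ∀ s, c s = Complex.exp (A s) := by
    intro s
    have := e1 s
    rw [Complex.exp_neg] at this
    field_simp at this
    exact this
  have dper : ∀ s, d (s + 2 * π) = d s := by
    intro s
    have : deriv c (s + 2 * π) = deriv c s := by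
      rw [← deriv_comp_add_const]; congr 1; funext x; exact hp x
    simp only [hd, this, hp]
  have e3 : ∀ s, A (s + 2 * π) - A s = A (0 + 2 * π) - A 0 := by
    intro s
    have k : ∀ x, HasDerivAt (fun s => A (s + 2 * π) - A s) 0 x := by
      intro x
      have := ((hAd (x + 2 * π)).comp_add_const x (2 * π)).sub (hAd x)
      exact this.congr_deriv (by rw [dper]; simp)
    exact is_const_of_deriv_eq_zero (f := fun s => A (s + 2 * π) - A s) (fun x => (k x).differentiableAt) (fun x => (k x).deriv) s 0
  have e4 : Complex.exp (A (0 + 2 * π)) = Complex.exp (A 0) := by rw [← e2, ← e2, hp]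
  obtain ⟨k, hk⟩ := Complex.exp_eq_exp_iff_exists_int.1 e4
  refine ⟨A, k, sA, e2, fun s => ?_⟩
  have := e3 s
  rw [hk] at this
  linear_combination this

end

section
open scoped Topology ContDiff
open Filter

lemma exists_G {h : ℝ × ℂ → ℝ} {ε1 : ℝ} (hε1 : 0 < ε1)
    (hh : ∀ s w, ‖w‖ < ε1 → ContDiffAt ℝ (⊤ : ℕ∞) h (s, w))
    (hper : ∀ s w, h (s + 2 * π, w) = h (s, w)) (hz : ∀ s, h (s, 0) = 0)
    (hnd : ∀ s, ∃ w, fderiv ℝ h (s, 0) (0, w) ≠ 0) :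
    ∃ (ε μ e0 R : ℝ) (G : P3 → ℝ) (p1 p2 : P3), 0 < ε ∧ 0 < μ ∧ 1 < R ∧ ε * (R + 1) ≤ ε1 ∧
      (∀ s x φ, |x| < R + 1 → ContDiffAt ℝ (⊤ : ℕ∞) G (s, x, φ)) ∧
      (∀ s x φ, G (s + 2 * π, x, φ) = G (s, x, φ)) ∧ (∀ s x φ, G (s, x, φ + 2 * π) = G (s, x, φ)) ∧
      (∀ s x φ, x ≤ 1 → G (s, x, φ) = μ * (x * Real.cos (φ - e0))) ∧
      (∀ s x φ, R ≤ x → G (s, x, φ) = h (s, polC ε x φ)) ∧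
      (∀ s x φ, 0 < x → x < R + 1 → fderiv ℝ G (s, x, φ) = 0 →
        NondegAt G (s, x, φ) ∧ (ModEq3 (s, x, φ) p1 ∨ ModEq3 (s, x, φ) p2)) := by
  have hfper : ∀ s w, fderiv ℝ h (s + 2 * π, w) = fderiv ℝ h (s, w) := by
    intro s w
    have := fderiv_comp_add_right (𝕜 := ℝ) (f := h) (x := (s, w)) (2 * π, 0)
    simp only [Prod.mk_add_mk, add_zero] at this
    rw [← this]; congr 1
    funext p; rw [← hper p.1 p.2]; congr 1; ext <;> simp
  -- the curve c
  have hfs : ∀ s, ContDiffAt ℝ (⊤ : ℕ∞) (fderiv ℝ h) (s, (0:ℂ)) := fun s =>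
    (hh s 0 (by simpa using hε1)).fderiv_right (by norm_num)
  have hcu : ∀ u : ℂ, ContDiff ℝ (⊤ : ℕ∞) (fun s => fderiv ℝ h (s, 0) (0, u)) := by
    intro u
    rw [contDiff_iff_contDiffAt]
    intro s
    have : ContDiffAt ℝ (⊤ : ℕ∞) (fun s : ℝ => fderiv ℝ h (s, (0:ℂ))) s :=
      ContDiffAt.comp (g := fderiv ℝ h) s (hfs s) (contDiff_id.prodMk contDiff_const).contDiffAt
    exact this.clm_apply contDiffAt_const
  have ofR : ContDiff ℝ (⊤ : ℕ∞) (fun x : ℝ => (x : ℂ)) := Complex.ofRealCLM.contDiff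
  set c : ℝ → ℂ := fun s => (fderiv ℝ h (s, 0) (0, 1) : ℂ) + (fderiv ℝ h (s, 0) (0, Complex.I) : ℂ) * Complex.I with hc
  have cs : ContDiff ℝ (⊤ : ℕ∞) c := (ofR.comp (hcu 1)).add ((ofR.comp (hcu Complex.I)).mul contDiff_const)
  have cre : ∀ s, (c s).re = fderiv ℝ h (s, 0) (0, 1) := fun s => by simp [hc]
  have cim : ∀ s, (c s).im = fderiv ℝ h (s, 0) (0, Complex.I) := fun s => by simp [hc]
  have hlin : ∀ s w, fderiv ℝ h (s, 0) (0, w) = w.re * (c s).re + w.im * (c s).im := by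
    intro s w
    have : ((0:ℝ), w) = w.re • ((0:ℝ), (1:ℂ)) + w.im • ((0:ℝ), Complex.I) := by
      ext <;> simp
    rw [this, map_add, map_smul, map_smul, cre, cim]; simp
  have c0 : ∀ s, c s ≠ 0 := by
    intro s h0
    obtain ⟨w, hw⟩ := hnd s
    apply hw; rw [hlin, h0]; simp
  have cper : ∀ s, c (s + 2 * π) = c s := by intro s; simp only [hc, hfper]
  obtain ⟨A, k, sA, eA, pA⟩ := exists_log cs c0 cper
  -- minimum modulus
  obtain ⟨μ, hμ, hμc⟩ : ∃ μ > 0, ∀ s, μ ≤ ‖c s‖ := by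
    obtain ⟨x, -, hx⟩ := (isCompact_Icc (a := (0:ℝ)) (b := 2 * π)).exists_isMinOn
      (nonempty_Icc.2 Real.two_pi_pos.le) (cs.continuous.norm.continuousOn)
    refine ⟨‖c x‖, norm_pos_iff.2 (c0 x), ?_⟩
    exact per_reduce (fun s => by rw [cper]) (fun s hs => hx hs)
  set α : ℝ → ℝ := fun s => (A s).im with hα
  set m : ℝ → ℝ := fun s => Real.exp (A s).re / μ with hm
  have cn : ∀ s, ‖c s‖ = Real.exp (A s).re := fun s => by rw [eA, Complex.norm_exp]
  have sα : ContDiff ℝ (⊤ : ℕ∞) α := Complex.imCLM.contDiff.comp sA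
  have sm : ContDiff ℝ (⊤ : ℕ∞) m := ((Complex.reCLM.contDiff.comp sA).exp).div_const μ
  have m1 : ∀ s, 1 ≤ m s := fun s => by
    rw [hm]; simp only; rw [le_div_iff₀ hμ, ← cn, one_mul]; exact hμc s
  have αp : ∀ s, α (s + 2 * π) = α s + 2 * π * k := fun s => by
    simp only [hα]; rw [pA]; simp
  have mp : ∀ s, m (s + 2 * π) = m s := fun s => by
    simp only [hm]; rw [← cn, ← cn, cper]
  have cre' : ∀ s, (c s).re = μ * m s * Real.cos (α s) := fun s => by
    rw [eA, Complex.exp_re]; simp only [hm, hα]; field_simp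
  have cim' : ∀ s, (c s).im = μ * m s * Real.sin (α s) := fun s => by
    rw [eA, Complex.exp_im]; simp only [hm, hα]; field_simp
  set q : ℝ × ℂ → ℝ := fun p => (h p - (p.2.re * (c p.1).re + p.2.im * (c p.1).im)) / μ with hq
  have sre : ContDiff ℝ (⊤ : ℕ∞) (fun s => (c s).re) := Complex.reCLM.contDiff.comp cs
  have sim : ContDiff ℝ (⊤ : ℕ∞) (fun s => (c s).im) := Complex.imCLM.contDiff.comp cs
  have slin : ContDiff ℝ (⊤ : ℕ∞) (fun p : ℝ × ℂ => p.2.re * (c p.1).re + p.2.im * (c p.1).im) :=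
    ((Complex.reCLM.contDiff.comp contDiff_snd).mul (sre.comp contDiff_fst)).add
      ((Complex.imCLM.contDiff.comp contDiff_snd).mul (sim.comp contDiff_fst))
  have sq : ∀ s w, ‖w‖ < ε1 → ContDiffAt ℝ (⊤ : ℕ∞) q (s, w) := fun s w hw =>
    ((hh s w hw).sub slin.contDiffAt).div_const μ
  have q0 : ∀ s, q (s, 0) = 0 := fun s => by simp [hq, hz]
  have qp : ∀ s w, q (s + 2 * π, w) = q (s, w) := fun s w => by simp only [hq, hper, cper]
  have qfp : ∀ s w, fderiv ℝ q (s + 2 * π, w) = fderiv ℝ q (s, w) := by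
    intro s w
    have := fderiv_comp_add_right (𝕜 := ℝ) (f := q) (x := (s, w)) (2 * π, 0)
    simp only [Prod.mk_add_mk, add_zero] at this
    rw [← this]; congr 1
    funext p; rw [← qp p.1 p.2]; congr 1; ext <;> simp
  have dw : ∀ s w, ‖w‖ < ε1 → HasFDerivAt (fun w => q (s, w)) ((fderiv ℝ q (s, w)).comp (ContinuousLinearMap.inr ℝ ℝ ℂ)) w := by
    intro s w hw
    have := ((sq s w hw).differentiableAt top_ne0).hasFDerivAt
    exact HasFDerivAt.comp w this (hasFDerivAt_prodMk_right s w)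
  have d0 : ∀ s, (fderiv ℝ q (s, (0:ℂ))).comp (ContinuousLinearMap.inr ℝ ℝ ℂ) = 0 := by
    intro s
    have k1 := dw s 0 (by simpa using hε1)
    have k2 : HasFDerivAt (fun w => h (s, w)) ((fderiv ℝ h (s, 0)).comp (ContinuousLinearMap.inr ℝ ℝ ℂ)) 0 :=
      HasFDerivAt.comp (0:ℂ) ((hh s 0 (by simpa using hε1)).differentiableAt top_ne0).hasFDerivAt (hasFDerivAt_prodMk_right s (0:ℂ))
    have k3 : HasFDerivAt (fun w : ℂ => w.re * (c s).re + w.im * (c s).im)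
        ((c s).re • Complex.reCLM + (c s).im • Complex.imCLM) 0 :=
      (Complex.reCLM.hasFDerivAt.mul_const _).add (Complex.imCLM.hasFDerivAt.mul_const _)
    have k4 : HasFDerivAt (fun w => q (s, w)) ((μ⁻¹) • ((fderiv ℝ h (s, 0)).comp (ContinuousLinearMap.inr ℝ ℝ ℂ) -
        ((c s).re • Complex.reCLM + (c s).im • Complex.imCLM))) 0 := by
      have := (k2.sub k3).const_smul (μ⁻¹)
      refine this.congr_of_eventuallyEq (Eventually.of_forall fun w => ?_)
      simp [hq, div_eq_inv_mul]
    rw [k1.unique k4]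
    ext w
    simp [hlin]
    right; ring
  -- constants
  obtain ⟨K, hK0, hK⟩ := ST_bound
  obtain ⟨R, σ, hR, sσ, σ1, σR, σC, σh, σ4, σp, σ5, σ6, σ7⟩ := exists_sigma (4 * (2 + 6 * K)) (by positivity)
  set D := 2 + K * (R + 4) with hD
  have hDp : 0 < D := by positivity
  set η := 1 / (2 * D) with hη
  have hη0 : 0 < η := by positivity
  have hηD : η * D < 1 := by rw [hη]; field_simp; norm_num
  obtain ⟨ε2, hε2, hu⟩ := unif (P := fun s w => ‖(fderiv ℝ q (s, w)).comp (ContinuousLinearMap.inr ℝ ℝ ℂ)‖ < η)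
    (fun s w => by rw [qfp]) (fun s => by
      have k1 : ContinuousAt (fderiv ℝ q) (s, (0:ℂ)) :=
        ((sq s 0 (by simpa using hε1)).fderiv_right (m := 0) (by norm_num)).continuousAt
      have k2 : ContinuousAt (fun p => ‖(fderiv ℝ q p).comp (ContinuousLinearMap.inr ℝ ℝ ℂ)‖) (s, (0:ℂ)) :=
        (k1.clm_comp continuousAt_const).norm
      refine k2.eventually (Iio_mem_nhds ?_)
      show ‖(fderiv ℝ q (s, (0:ℂ))).comp (ContinuousLinearMap.inr ℝ ℝ ℂ)‖ < η
      rw [d0]; simpa using hη0)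
  set r := min ε1 ε2 with hr
  have hr0 : 0 < r := lt_min hε1 hε2
  set ε := r / (R + 4) with hε
  have hR4 : 0 < R + 4 := by linarith
  have hε0 : 0 < ε := by positivity
  have hεr : ε * (R + 4) = r := by rw [hε]; field_simp
  have hqe : ∀ s w, ‖w‖ < ε * (R + 4) → ContDiffAt ℝ (⊤ : ℕ∞) q (s, w) ∧ |q (s, w)| ≤ η * ‖w‖ ∧
      ∀ v, |fderiv ℝ q (s, w) (0, v)| ≤ η * ‖v‖ := by
    intro s w hw
    rw [hεr] at hw
    have w1 : ‖w‖ < ε1 := hw.trans_le (min_le_left _ _)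
    have w2 : ‖w‖ < ε2 := hw.trans_le (min_le_right _ _)
    refine ⟨sq s w w1, ?_, fun v => ?_⟩
    · have := (convex_ball (0:ℂ) r).norm_image_sub_le_of_norm_hasFDerivWithin_le (f := fun w => q (s, w))
        (f' := fun w => (fderiv ℝ q (s, w)).comp (ContinuousLinearMap.inr ℝ ℝ ℂ)) (C := η)
        (fun y hy => (dw s y ((mem_ball_zero_iff.1 hy).trans_le (min_le_left _ _))).hasFDerivWithinAt)
        (fun y hy => (hu s y ((mem_ball_zero_iff.1 hy).trans_le (min_le_right _ _))).le)
        (mem_ball_self hr0) (mem_ball_zero_iff.2 hw)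
      simpa [q0] using this
    · have := ((fderiv ℝ q (s, w)).comp (ContinuousLinearMap.inr ℝ ℝ ℂ)).le_of_opNorm_le (hu s w w2).le v
      simpa using this
  have hGs : ∀ s x φ, |x| < R + 4 → ContDiffAt ℝ (⊤ : ℕ∞) (GG m α σ q R ε) (s, x, φ) := by
    intro s x φ hx
    refine GG_smooth sm sα sσ (hqe s _ ?_).1
    rw [norm_polC, abs_mul, abs_of_pos hε0]; gcongr
  obtain ⟨p1, p2, hcr⟩ := GG_crit hR hε0 m1 sα αp sσ σR hK0 hK σC σh σ4 σp σ5 σ6 σ7 hη0 hηD hqe hGs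
  have hεμ : ε * μ ≠ 0 := by positivity
  refine ⟨ε, ε * μ, α 0, R + 3, fun p => ε * μ * GG m α σ q R ε p, p1, p2, hε0, by positivity, by linarith, ?_, ?_, ?_, ?_, ?_, ?_, ?_⟩
  · rw [show R + 3 + 1 = R + 4 by ring, hεr]; exact min_le_left _ _
  · intro s x φ hx
    exact contDiffAt_const.mul (hGs s x φ (by linarith))
  · intro s x φ; simp only; rw [GG_per1 mp αp qp]
  · intro s x φ; simp only; rw [GG_per2]
  · intro s x φ hx; simp only; rw [GG_low hR σ1 hx]
  · intro s x φ hx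
    simp only
    rw [GG_LF4 hR σR (by linarith), ST_one (by linarith)]
    have e1 : (polC ε x φ).re = ε * x * Real.cos φ := by
      simp [polC, Complex.exp_ofReal_mul_I_re, Complex.exp_ofReal_mul_I_im]
    have e2 : (polC ε x φ).im = ε * x * Real.sin φ := by
      simp [polC, Complex.exp_ofReal_mul_I_re, Complex.exp_ofReal_mul_I_im]
    simp only [hq]
    rw [e1, e2, cre', cim', Real.cos_sub]
    field_simp
    ring
  · intro s x φ h0 h1 hc'
    have e1 : fderiv ℝ (fun p => ε * μ * GG m α σ q R ε p) (s, x, φ) = (ε * μ) • fderiv ℝ (GG m α σ q R ε) (s, x, φ) :=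
      congrFun (fderiv_const_smul_field (f := GG m α σ q R ε) (ε * μ)) (s, x, φ)
    rw [e1] at hc'
    have := (smul_eq_zero.1 hc').resolve_left hεμ
    obtain ⟨k1, k2⟩ := hcr s x φ h0 (by linarith) this
    exact ⟨k1.const_mul hεμ, k2⟩

end

section
open scoped Topology ContDiff
open Filter

section
variable {V : Type*} [NormedAddCommGroup V] [NormedSpace ℝ V]
variable {H : Type*} [TopologicalSpace H] {I : ModelWithCorners ℝ V H}
variable {M : Type*} [TopologicalSpace M] [ChartedSpace H M]

lemma coe_smooth : ContMDiff (𝓡 3) 𝓘(ℝ, E) (⊤ : ℕ∞) (fun p : Sph => (p : E)) :=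
  contMDiff_coe_sphere (E := E) (n := 3)

/-- smoothness into the sphere can be checked in the ambient space -/
lemma toSph_at {f : M → Sph} {x : M} (h : ContMDiffAt I 𝓘(ℝ, E) (⊤ : ℕ∞) (fun y => (f y : E)) x) :
    ContMDiffAt I (𝓡 3) (⊤ : ℕ∞) f x := by
  have hc : ContinuousAt f x := by
    rw [Topology.IsInducing.subtypeVal.continuousAt_iff]; exact h.continuousAt
  rw [contMDiffAt_iff_target]
  refine ⟨hc, ?_⟩
  set v : Sph := f x
  set U : _ ≃ₗᵢ[ℝ] _ := (OrthonormalBasis.fromOrthogonalSpanSingleton 3 (ne_zero_of_mem_unit_sphere (-v))).repr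
  have hs : ContDiffOn ℝ (⊤ : ℕ∞) (stereoToFun (-v : E)) {y | inner ℝ (-v : E) y ≠ 1} := contDiffOn_stereoToFun
  have ho : IsOpen {y : E | inner ℝ (-v : E) y ≠ 1} := by
    have : Continuous (fun y : E => inner ℝ (-v : E) y) := by fun_prop
    exact isOpen_ne_fun this continuous_const
  have hmem : (v : E) ∈ {y : E | inner ℝ (-v : E) y ≠ 1} := by
    simp only [mem_setOf_eq, inner_neg_left, real_inner_self_eq_norm_sq, norm_eq_of_mem_sphere]
    norm_num
  have h1 : ContDiffAt ℝ (⊤ : ℕ∞) (stereoToFun (-v : E)) (v : E) := hs.contDiffAt (ho.mem_nhds hmem)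
  have h2 : ContDiff ℝ (⊤ : ℕ∞) U := U.contDiff
  have h3 : ContDiffAt ℝ (⊤ : ℕ∞) (fun y => U (stereoToFun (-v : E) y)) (v : E) :=
    h2.contDiffAt.comp _ h1
  have h4 : ContMDiffAt 𝓘(ℝ, E) 𝓘(ℝ, E3) (⊤ : ℕ∞) (fun y => U (stereoToFun (-v : E) y)) ((fun y => (f y : E)) x) := h3.contMDiffAt
  exact ContMDiffAt.comp (f := fun y => (f y : E)) x h4 h

end

section Op
variable {U : TopologicalSpace.Opens Sph} {F : U → Circle} {f : Sph → Circle}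

lemma op_smooth (hF : ∀ y : U, F y = f y) (x : U) :
    ContMDiffAt (𝓡 3) (𝓡 1) (⊤ : ℕ∞) F x ↔ ContMDiffAt (𝓡 3) (𝓡 1) (⊤ : ℕ∞) f x := by
  have : F = fun y : U => f y := funext hF
  rw [this]
  exact contMDiffAt_subtype_iff

lemma op_symm (x : U) : ∀ᶠ u in 𝓝 (extChartAt (𝓡 3) x x),
    (((extChartAt (𝓡 3) x).symm u : U) : Sph) = (extChartAt (𝓡 3) (x : Sph)).symm u := by
  have := TopologicalSpace.Opens.chartAt_subtype_val_symm_eventuallyEq (H := E3) U (x := x)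
  filter_upwards [this] with u hu
  exact hu.symm

lemma op_crit (hF : ∀ y : U, F y = f y) (x : U) (hs : ContMDiffAt (𝓡 3) (𝓡 1) (⊤ : ℕ∞) f x) :
    IsCrit F x ↔ IsCrit f x := by
  have h1 : MDifferentiableAt (𝓡 3) (𝓡 1) f x := hs.mdifferentiableAt top_ne0
  have h2 : MDifferentiableAt (𝓡 3) (𝓡 1) F x := ((op_smooth hF x).2 hs).mdifferentiableAt top_ne0
  have e : (mfderiv (𝓡 3) (𝓡 1) F x : E3 →L[ℝ] EuclideanSpace ℝ (Fin 1)) =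
      (mfderiv (𝓡 3) (𝓡 1) f x : E3 →L[ℝ] EuclideanSpace ℝ (Fin 1)) := by
    have k1 := h1.mfderiv
    have k2 := h2.mfderiv
    refine k2.trans (Eq.trans ?_ k1.symm)
    refine Filter.EventuallyEq.fderivWithin_eq_of_nhds ?_
    filter_upwards [op_symm x] with u hu
    simp only [writtenInExtChartAt, Function.comp_apply, hF, hu]
  unfold IsCrit
  have : Function.Surjective (mfderiv (𝓡 3) (𝓡 1) F x : E3 →L[ℝ] EuclideanSpace ℝ (Fin 1)) ↔
    Function.Surjective (mfderiv (𝓡 3) (𝓡 1) f x : E3 →L[ℝ] EuclideanSpace ℝ (Fin 1)) := by rw [e]; rfl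
  exact not_congr this

lemma op_nondeg (hF : ∀ y : U, F y = f y) (x : U) : Nondeg F x ↔ Nondeg f x := by
  have e : liftChart F x =ᶠ[𝓝 (extChartAt (𝓡 3) x x)] liftChart f x := by
    filter_upwards [op_symm x] with u hu
    simp only [liftChart, hF, hu]
  have e2 : ∀ v w, hessAt F x v w = hessAt f x v w := by
    intro v w
    unfold hessAt
    have : (fun u => fderiv ℝ (liftChart F x) u v) =ᶠ[𝓝 (extChartAt (𝓡 3) x x)] (fun u => fderiv ℝ (liftChart f x) u v) := by
      filter_upwards [e.eventually_nhds] with u hu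
      rw [Filter.EventuallyEq.fderiv_eq hu]
    rw [this.fderiv_eq]
    rfl
  unfold Nondeg
  simp only [e2]

end Op

end

section
open scoped Topology ContDiff
open Filter

lemma Z_mk4 (z w : ℂ) : Z (mk4 z w) = z := by
  apply Complex.ext <;> simp [Z, mk4]
lemma W_mk4 (z w : ℂ) : W (mk4 z w) = w := by
  apply Complex.ext <;> simp [W, mk4]
lemma mk4_ZW (p : E) : mk4 (Z p) (W p) = p := by
  ext i; fin_cases i <;> simp [mk4, Z, W]
lemma ext_ZW {p q : E} (h1 : Z p = Z q) (h2 : W p = W q) : p = q := by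
  rw [← mk4_ZW p, ← mk4_ZW q, h1, h2]
lemma norm_ZW (p : E) : ‖p‖ ^ 2 = ‖Z p‖ ^ 2 + ‖W p‖ ^ 2 := by
  rw [EuclideanSpace.norm_sq_eq, Fin.sum_univ_four, ← Complex.normSq_eq_norm_sq, ← Complex.normSq_eq_norm_sq,
    Complex.normSq_apply, Complex.normSq_apply]
  simp [Z, W]; ring
lemma sph_ZW (p : Sph) : ‖Z p‖ ^ 2 + ‖W p‖ ^ 2 = 1 := by
  rw [← norm_ZW, norm_eq_of_mem_sphere]; norm_num

/-- linear versions -/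
def ZL : E →L[ℝ] ℂ := LinearMap.toContinuousLinearMap
  { toFun := Z, map_add' := fun p q => by simp [Z]; ring, map_smul' := fun a p => by simp [Z]; ring }
def WL : E →L[ℝ] ℂ := LinearMap.toContinuousLinearMap
  { toFun := W, map_add' := fun p q => by simp [W]; ring, map_smul' := fun a p => by simp [W]; ring }
def mkL : (ℂ × ℂ) →L[ℝ] E := LinearMap.toContinuousLinearMap
  { toFun := fun p => mk4 p.1 p.2
    map_add' := fun p q => by ext i; fin_cases i <;> simp [mk4]
    map_smul' := fun a p => by ext i; fin_cases i <;> simp [mk4] }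
lemma Z_smooth : ContDiff ℝ (⊤ : ℕ∞) Z := ZL.contDiff
lemma W_smooth : ContDiff ℝ (⊤ : ℕ∞) W := WL.contDiff
lemma mk_smooth : ContDiff ℝ (⊤ : ℕ∞) (fun p : ℂ × ℂ => mk4 p.1 p.2) := mkL.contDiff

def rW (w : ℂ) : ℝ := (√(1 + ‖w‖ ^ 2))⁻¹
lemma rW_pos (w : ℂ) : 0 < rW w := by unfold rW; positivity
lemma rW_sq (w : ℂ) : rW w ^ 2 * (1 + ‖w‖ ^ 2) = 1 := by
  unfold rW; rw [inv_pow, Real.sq_sqrt (by positivity)]; field_simp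
lemma rW_smooth : ContDiff ℝ (⊤ : ℕ∞) rW := by
  unfold rW
  refine ContDiff.inv (ContDiff.sqrt (contDiff_const.add (contDiff_norm_sq ℝ)) fun w => by positivity) fun w => by positivity

/-- coordinates near the standard unknot -/
def nu (s : ℝ) (w : ℂ) : Sph := ⟨mk4 (rW w * Complex.exp (s * Complex.I)) (rW w * w), by
  rw [mem_sphere_zero_iff_norm, ← sq_eq_sq₀ (norm_nonneg _) zero_le_one, norm_ZW, Z_mk4, W_mk4]
  simp only [norm_mul, Complex.norm_real, Complex.norm_exp_ofReal_mul_I, Real.norm_eq_abs, mul_one, mul_pow, sq_abs]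
  linear_combination rW_sq w⟩

lemma Z_nu (s : ℝ) (w : ℂ) : Z (nu s w : E) = rW w * Complex.exp (s * Complex.I) := Z_mk4 _ _
lemma W_nu (s : ℝ) (w : ℂ) : W (nu s w : E) = rW w * w := W_mk4 _ _
lemma Z_nu_norm (s : ℝ) (w : ℂ) : ‖Z (nu s w : E)‖ = rW w := by
  rw [Z_nu, norm_mul, Complex.norm_exp_ofReal_mul_I, Complex.norm_real, Real.norm_eq_abs, abs_of_pos (rW_pos w), mul_one]
lemma nu_per (s : ℝ) (w : ℂ) : nu (s + 2 * π) w = nu s w := by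
  apply Subtype.ext; apply ext_ZW
  · rw [Z_nu, Z_nu]; congr 1; push_cast; rw [add_mul]; exact Complex.exp_periodic _
  · rw [W_nu, W_nu]

lemma exp_smooth : ContDiff ℝ (⊤ : ℕ∞) (fun s : ℝ => Complex.exp (s * Complex.I)) :=
  ContDiff.cexp ((Complex.ofRealCLM.contDiff (n := (⊤:ℕ∞))).mul contDiff_const)

lemma nu_smooth : ContMDiff 𝓘(ℝ, ℝ × ℂ) (𝓡 3) (⊤ : ℕ∞) (fun q : ℝ × ℂ => nu q.1 q.2) := by
  intro q
  refine toSph_at (ContDiff.contMDiff ?_).contMDiffAt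
  have h1 : ContDiff ℝ (⊤ : ℕ∞) (fun q : ℝ × ℂ => (rW q.2 : ℂ)) :=
    Complex.ofRealCLM.contDiff.comp (rW_smooth.comp contDiff_snd)
  exact mk_smooth.comp ((h1.mul (exp_smooth.comp contDiff_fst)).prodMk (h1.mul contDiff_snd))

/-- inverse coordinates -/
def nuInv (s0 : ℝ) (p : E) : ℝ × ℂ :=
  (s0 + Complex.arg (Z p * Complex.exp (-s0 * Complex.I)), W p / ‖Z p‖)

lemma arg_smooth {z : ℂ} (h : z ∈ Complex.slitPlane) : ContDiffAt ℝ (⊤ : ℕ∞) Complex.arg z := by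
  have h1 : ContDiffAt ℝ (⊤ : ℕ∞) Complex.log z := (Complex.contDiffAt_log h).restrict_scalars ℝ
  have := Complex.imCLM.contDiff.contDiffAt.comp z h1
  refine this.congr_of_eventuallyEq (Eventually.of_forall fun w => ?_)
  simp [Complex.log_im]

lemma nuInv_smooth (s0 : ℝ) (p : E) (h : Z p * Complex.exp (-s0 * Complex.I) ∈ Complex.slitPlane) :
    ContDiffAt ℝ (⊤ : ℕ∞) (nuInv s0) p := by
  have hz : Z p ≠ 0 := by
    rintro h0; rw [h0, zero_mul] at h; exact Complex.zero_notMem_slitPlane h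
  refine ContDiffAt.prodMk (contDiffAt_const.add ?_) ?_
  · exact ContDiffAt.comp p (arg_smooth h) (Z_smooth.mul contDiff_const).contDiffAt
  · have h1 : ContDiffAt ℝ (⊤ : ℕ∞) (fun p => ‖Z p‖) p := Z_smooth.contDiffAt.norm ℝ hz
    have h2 : ContDiffAt ℝ (⊤ : ℕ∞) (fun p => (‖Z p‖ : ℂ)) p :=
      Complex.ofRealCLM.contDiff.contDiffAt.comp p h1
    simp only [div_eq_mul_inv]
    exact W_smooth.contDiffAt.mul (h2.inv (by simpa using hz))

lemma nuInv_nu {s0 s : ℝ} (h : |s - s0| < π) (w : ℂ) : nuInv s0 (nu s w) = (s, w) := by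
  unfold nuInv
  rw [Z_nu_norm, W_nu, Z_nu]
  have hr : (rW w : ℂ) ≠ 0 := by exact_mod_cast (rW_pos w).ne'
  have e : (rW w : ℂ) * Complex.exp (s * Complex.I) * Complex.exp (-s0 * Complex.I)
      = (rW w : ℂ) * Complex.exp ((s - s0 : ℝ) * Complex.I) := by
    rw [mul_assoc, ← Complex.exp_add]; push_cast; ring_nf
  rw [e, Complex.arg_real_mul _ (rW_pos w), Complex.arg_exp_mul_I, toIocMod_eq_self _ |>.2]
  · ext <;> simp <;> field_simp
  · rw [abs_lt] at h; constructor <;> linarith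

lemma exp_arg (z : ℂ) (h : z ≠ 0) : Complex.exp (Complex.arg z * Complex.I) = z / ‖z‖ := by
  have : (‖z‖ : ℂ) ≠ 0 := by simpa using h
  rw [eq_div_iff this, mul_comm]; exact Complex.norm_mul_exp_arg_mul_I z

lemma nu_nuInv (s0 : ℝ) (p : Sph) (hz : Z (p:E) ≠ 0) : nu (nuInv s0 p).1 (nuInv s0 p).2 = p := by
  have hz' : (‖Z (p:E)‖ : ℂ) ≠ 0 := by simpa using hz
  have hzp : 0 < ‖Z (p:E)‖ := norm_pos_iff.2 hz
  have hr : rW (nuInv s0 p).2 = ‖Z (p:E)‖ := by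
    have h1 : ‖(nuInv s0 p).2‖ = ‖W (p:E)‖ / ‖Z (p:E)‖ := by simp [nuInv]
    have h2 := sph_ZW p
    unfold rW
    rw [h1, show 1 + (‖W (p:E)‖ / ‖Z (p:E)‖) ^ 2 = (‖Z (p:E)‖⁻¹) ^ 2 by field_simp; linarith,
      Real.sqrt_sq (by positivity), inv_inv]
  have hne : Z (p:E) * Complex.exp (-s0 * Complex.I) ≠ 0 := mul_ne_zero hz (Complex.exp_ne_zero _)
  apply Subtype.ext; apply ext_ZW
  · rw [Z_nu, hr]
    simp only [nuInv]
    push_cast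
    rw [add_mul, Complex.exp_add, exp_arg _ hne, norm_mul]
    have : ‖Complex.exp (-s0 * Complex.I)‖ = 1 := by
      have := Complex.norm_exp_ofReal_mul_I (-s0); push_cast at this; exact this
    rw [this, neg_mul, Complex.exp_neg]
    have := Complex.exp_ne_zero (s0 * Complex.I)
    field_simp
  · rw [W_nu, hr]; simp only [nuInv]; field_simp

lemma Z_nu_ne (s : ℝ) (w : ℂ) : Z (nu s w : E) ≠ 0 := by
  rw [← norm_pos_iff, Z_nu_norm]; exact rW_pos w

lemma good_nu (s0 : ℝ) (w0 : ℂ) : GoodParam (fun q : ℝ × ℂ => nu q.1 q.2) (s0, w0) := by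
  refine ⟨fun p => nuInv s0 p, nu_smooth _, ?_, ?_, ?_⟩
  · have h1 : ContDiffAt ℝ (⊤ : ℕ∞) (nuInv s0) (nu s0 w0 : E) := by
      apply nuInv_smooth
      rw [Z_nu, mul_assoc, ← Complex.exp_add]
      simpa using rW_pos w0
    exact ContMDiffAt.comp (f := fun p : Sph => (p : E)) (nu s0 w0) h1.contMDiffAt coe_smooth.contMDiffAt
  · have : ContinuousAt (fun q : ℝ × ℂ => |q.1 - s0|) (s0, w0) := by fun_prop
    filter_upwards [this.eventually (Iio_mem_nhds (by simpa using Real.pi_pos))] with q hq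
    exact nuInv_nu hq _
  · have : ContinuousAt (fun p : Sph => Z p) (nu s0 w0) := (continuous_Z.comp continuous_subtype_val).continuousAt
    filter_upwards [this.eventually_ne (Z_nu_ne s0 w0)] with p hp
    exact nu_nuInv s0 p hp

end

section
open scoped Topology ContDiff
open Filter

section
variable {V : Type*} [NormedAddCommGroup V] [NormedSpace ℝ V]
variable {V' : Type*} [NormedAddCommGroup V'] [NormedSpace ℝ V']

lemma GoodParam.perm {Y : V → Sph} {v0 : V} (hY : GoodParam Y v0) (Ψ : Equiv.Perm Sph)
    (h1 : ContMDiffAt (𝓡 3) (𝓡 3) (⊤ : ℕ∞) Ψ (Y v0))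
    (h2 : ContMDiffAt (𝓡 3) (𝓡 3) (⊤ : ℕ∞) Ψ.symm (Ψ (Y v0))) :
    GoodParam (fun v => Ψ (Y v)) v0 := by
  obtain ⟨R, a1, a2, a3, a4⟩ := hY
  have hy : Ψ.symm (Ψ (Y v0)) = Y v0 := Ψ.symm_apply_apply _
  refine ⟨fun x => R (Ψ.symm x), h1.comp v0 a1, ?_, ?_, ?_⟩
  · have a2' : ContMDiffAt (𝓡 3) 𝓘(ℝ, V) (⊤ : ℕ∞) R (Ψ.symm (Ψ (Y v0))) := by rw [hy]; exact a2
    exact a2'.comp (Ψ (Y v0)) h2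
  · filter_upwards [a3] with v hv
    simpa using hv
  · have hc : Tendsto Ψ.symm (𝓝 (Ψ (Y v0))) (𝓝 (Y v0)) := by
      have := h2.continuousAt; unfold ContinuousAt at this; rwa [hy] at this
    filter_upwards [hc.eventually a4] with x hx
    rw [hx]; exact Ψ.apply_symm_apply x

lemma GoodParam.precomp {Y : V → Sph} {v0 : V} (hY : GoodParam Y v0) {g : V' → V} {k : V → V'} {u0 : V'}
    (h0 : g u0 = v0) (hg : ContDiffAt ℝ (⊤ : ℕ∞) g u0) (hk : ContDiffAt ℝ (⊤ : ℕ∞) k v0)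
    (e1 : ∀ᶠ u in 𝓝 u0, k (g u) = u) (e2 : ∀ᶠ v in 𝓝 v0, g (k v) = v) :
    GoodParam (fun u => Y (g u)) u0 := by
  subst h0
  obtain ⟨R, a1, a2, a3, a4⟩ := hY
  have hR : R (Y (g u0)) = g u0 := a3.self_of_nhds
  refine ⟨fun x => k (R x), a1.comp u0 hg.contMDiffAt, ?_, ?_, ?_⟩
  · have : ContMDiffAt 𝓘(ℝ, V) 𝓘(ℝ, V') (⊤ : ℕ∞) k (R (Y (g u0))) := by rw [hR]; exact hk.contMDiffAt
    exact this.comp (Y (g u0)) a2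
  · filter_upwards [e1, hg.continuousAt.eventually a3] with u h1 h2
    rw [h2, h1]
  · have hc : Tendsto R (𝓝 (Y (g u0))) (𝓝 (g u0)) := by
      have := a2.continuousAt; unfold ContinuousAt at this; rwa [hR] at this
    filter_upwards [a4, hc.eventually e2] with x h1 h2
    rw [h2, h1]

lemma good_chart (x : Sph) : GoodParam (fun u : E3 => (extChartAt (𝓡 3) x).symm u) (extChartAt (𝓡 3) x x) := by
  have h0 : (extChartAt (𝓡 3) x).symm (extChartAt (𝓡 3) x x) = x := extChartAt_to_inv x
  refine ⟨extChartAt (𝓡 3) x, ?_, ?_, ?_, ?_⟩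
  · have := contMDiffOn_extChartAt_symm (I := 𝓡 3) (n := (⊤:ℕ∞)) x
    exact this.contMDiffAt (extChartAt_target_mem_nhds x)
  · show ContMDiffAt _ _ _ _ ((extChartAt (𝓡 3) x).symm (extChartAt (𝓡 3) x x))
    rw [h0]; exact contMDiffAt_extChartAt
  · filter_upwards [extChartAt_target_mem_nhds (I := 𝓡 3) x] with u hu
    exact (extChartAt (𝓡 3) x).right_inv hu
  · show ∀ᶠ y in 𝓝 ((extChartAt (𝓡 3) x).symm (extChartAt (𝓡 3) x x)), _
    rw [h0]
    filter_upwards [extChartAt_source_mem_nhds (I := 𝓡 3) x] with y hy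
    exact (extChartAt (𝓡 3) x).left_inv hy
end

/-- polar coordinates with a twist -/
lemma good_polar {Y : ℝ × ℂ → Sph} {ε : ℝ} (hε : 0 < ε) (n : ℤ) {s0 x0 φ0 : ℝ} (hx : 0 < x0)
    (hY : GoodParam Y (s0 + n * φ0, polC ε x0 φ0)) :
    GoodParam (fun p : P3 => Y (p.1 + n * p.2.2, polC ε p.2.1 p.2.2)) (s0, x0, φ0) := by
  set ph : ℂ → ℝ := fun u => φ0 + Complex.arg (u * Complex.exp (-φ0 * Complex.I)) with hph
  have hpol : polC ε x0 φ0 * Complex.exp (-φ0 * Complex.I) = ((ε * x0 : ℝ) : ℂ) := by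
    unfold polC; rw [mul_assoc, ← Complex.exp_add]; simp
  have hp0 : polC ε x0 φ0 ≠ 0 := by
    rw [← norm_pos_iff, norm_polC]; positivity
  have sph : ContDiffAt ℝ (⊤ : ℕ∞) ph (polC ε x0 φ0) := by
    refine contDiffAt_const.add (ContDiffAt.comp _ (arg_smooth ?_) (contDiff_id.mul contDiff_const).contDiffAt)
    show polC ε x0 φ0 * Complex.exp (-φ0 * Complex.I) ∈ Complex.slitPlane
    rw [hpol]
    exact Or.inl (by rw [Complex.ofReal_re]; positivity)
  have phpol : ∀ x φ : ℝ, 0 < x → |φ - φ0| < π → ph (polC ε x φ) = φ := by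
    intro x φ h1 h2
    simp only [hph]
    have e : polC ε x φ * Complex.exp (-φ0 * Complex.I) = ((ε * x : ℝ) : ℂ) * Complex.exp ((φ - φ0 : ℝ) * Complex.I) := by
      unfold polC; rw [mul_assoc, ← Complex.exp_add]; push_cast; ring_nf
    rw [e, Complex.arg_real_mul _ (by positivity), Complex.arg_exp_mul_I, (toIocMod_eq_self _).2]
    · ring
    · rw [abs_lt] at h2; constructor <;> linarith
  have polph : ∀ u : ℂ, u ≠ 0 → polC ε (‖u‖ / ε) (ph u) = u := by
    intro u hu
    have hne : u * Complex.exp (-φ0 * Complex.I) ≠ 0 := mul_ne_zero hu (Complex.exp_ne_zero _)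
    have hn : ‖Complex.exp (-φ0 * Complex.I)‖ = 1 := by
      have := Complex.norm_exp_ofReal_mul_I (-φ0); push_cast at this; exact this
    have hu' : (‖u‖ : ℂ) ≠ 0 := by simpa using hu
    unfold polC
    rw [mul_div_cancel₀ _ hε.ne']
    simp only [hph]
    push_cast
    rw [add_mul, Complex.exp_add, exp_arg _ hne, norm_mul, hn, neg_mul, Complex.exp_neg]
    have := Complex.exp_ne_zero (φ0 * Complex.I)
    push_cast
    field_simp
  refine GoodParam.precomp (g := fun p : P3 => ((p.1 + n * p.2.2, polC ε p.2.1 p.2.2) : ℝ × ℂ))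
    (k := fun q : ℝ × ℂ => (q.1 - n * ph q.2, ‖q.2‖ / ε, ph q.2)) hY rfl ?_ ?_ ?_ ?_
  · apply ContDiff.contDiffAt
    exact ContDiff.prodMk (by fun_prop) ((polC_smooth ε).comp contDiff_snd)
  · have s2 : ContDiffAt ℝ (⊤ : ℕ∞) (fun q : ℝ × ℂ => ph q.2) (s0 + n * φ0, polC ε x0 φ0) :=
      ContDiffAt.comp (g := ph) _ sph contDiffAt_snd
    refine ContDiffAt.prodMk (contDiffAt_fst.sub (contDiffAt_const.mul s2)) (ContDiffAt.prodMk ?_ s2)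
    exact (contDiffAt_snd.norm ℝ hp0).div_const ε
  · have c1 : ContinuousAt (fun q : P3 => |q.2.2 - φ0|) (s0, x0, φ0) := by fun_prop
    have c2 : ContinuousAt (fun q : P3 => q.2.1) (s0, x0, φ0) := by fun_prop
    filter_upwards [c1.eventually (Iio_mem_nhds (by simpa using Real.pi_pos)), c2.eventually (Ioi_mem_nhds hx)] with p h1 h2
    have h2' : 0 < p.2.1 := h2
    have := phpol p.2.1 p.2.2 h2 h1
    simp only [this, norm_polC, abs_of_pos (mul_pos hε h2'), mul_div_cancel_left₀ _ hε.ne', add_sub_cancel_right]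
  · have c1 : ContinuousAt (fun q : ℝ × ℂ => q.2) (s0 + n * φ0, polC ε x0 φ0) := by fun_prop
    filter_upwards [c1.eventually_ne hp0] with q hq
    simp only [polph q.2 hq, sub_add_cancel]

lemma unitC_ne (w : ℂ) : unitC w ≠ 0 := by
  unfold unitC; split_ifs with h
  · exact one_ne_zero
  · exact div_ne_zero h (by simpa using h)

section beta
variable {β : Equiv.Perm Sph} (hβ : IsBetaMap β)
include hβ

lemma beta_inv (p : Sph) : Z ((β.symm p : Sph) : E) = Z (p:E) * (unitC (W (p : E)))⁻¹ ∧
    W ((β.symm p : Sph) : E) = W (p : E) := by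
  have h := hβ (β.symm p)
  rw [Equiv.apply_symm_apply] at h
  refine ⟨?_, h.2.symm⟩
  rw [h.1, h.2, mul_inv_cancel_right₀ (unitC_ne _)]

lemma beta_pow (n : ℤ) (p : Sph) : Z (((β ^ n) p : Sph) : E) = Z (p:E) * (unitC (W (p : E))) ^ n ∧
    W (((β ^ n) p : Sph) : E) = W (p : E) := by
  induction n with
  | zero => simp
  | succ n ih =>
    rw [add_comm, zpow_add, Equiv.Perm.mul_apply, zpow_one]
    have := hβ ((β ^ (n:ℤ)) p)
    rw [this.1, this.2, ih.1, ih.2]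
    refine ⟨?_, rfl⟩
    rw [zpow_add₀ (unitC_ne _), zpow_one]; ring
  | pred n ih =>
    rw [sub_eq_neg_add, zpow_add, Equiv.Perm.mul_apply, zpow_neg_one]
    have := beta_inv hβ ((β ^ (-(n:ℤ))) p)
    change Z ((β.symm _ : Sph) : E) = _ ∧ W ((β.symm _ : Sph) : E) = _
    rw [this.1, this.2, ih.1, ih.2]
    refine ⟨?_, rfl⟩
    rw [zpow_add₀ (unitC_ne _), zpow_neg_one]; ring

lemma beta_nu (n : ℤ) {s ε x φ : ℝ} (hε : 0 < ε) (hx : 0 < x) :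
    (β ^ n) (nu s (polC ε x φ)) = nu (s + n * φ) (polC ε x φ) := by
  obtain ⟨h1, h2⟩ := beta_pow hβ n (nu s (polC ε x φ))
  apply Subtype.ext; apply ext_ZW
  · rw [h1, Z_nu, Z_nu, W_nu]
    set r := rW (polC ε x φ) with hr
    have hr0 : 0 < r := rW_pos _
    have : unitC (r * polC ε x φ) = Complex.exp (φ * Complex.I) := by
      have hx' : 0 < ε * x := by positivity
      have hne : (r : ℂ) * polC ε x φ ≠ 0 := by
        rw [← norm_pos_iff, norm_mul, norm_polC, Complex.norm_real]
        exact mul_pos (by rw [Real.norm_eq_abs, abs_of_pos hr0]; exact hr0) (abs_pos.2 hx'.ne')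
      unfold unitC
      rw [if_neg hne, norm_mul, norm_polC, Complex.norm_real, Real.norm_eq_abs, abs_of_pos hr0, abs_of_pos hx']
      unfold polC
      have a1 : (r : ℂ) ≠ 0 := by exact_mod_cast hr0.ne'
      have a2 : ((ε * x : ℝ) : ℂ) ≠ 0 := by exact_mod_cast hx'.ne'
      rw [Complex.ofReal_mul r]
      field_simp
    rw [this, ← Complex.exp_int_mul, mul_assoc, ← Complex.exp_add]
    push_cast; ring_nf
  · rw [h2, W_nu, W_nu]

lemma beta_O (n : ℤ) (p : Sph) (h : W (p:E) = 0) : (β ^ n) p = p := by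
  obtain ⟨h1, h2⟩ := beta_pow hβ n p
  apply Subtype.ext; apply ext_ZW
  · rw [h1, h]; simp [unitC]
  · exact h2

end beta

end

section
open scoped Topology ContDiff
open Filter

lemma unitC_pow_smooth (n : ℤ) {w0 : ℂ} (h : w0 ≠ 0) :
    ContDiffAt ℝ (⊤ : ℕ∞) (fun w => unitC w ^ n) w0 := by
  have hu : ContDiffAt ℝ (⊤ : ℕ∞) unitC w0 := by
    have h1 : ContDiffAt ℝ (⊤ : ℕ∞) (fun w : ℂ => w * (((‖w‖ : ℝ) : ℂ))⁻¹) w0 := by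
      refine contDiffAt_id.mul (ContDiffAt.inv ?_ (by simpa using h))
      exact Complex.ofRealCLM.contDiff.contDiffAt.comp w0 (contDiffAt_norm ℝ h)
    refine h1.congr_of_eventuallyEq ?_
    filter_upwards [isOpen_ne.mem_nhds h] with w hw
    have hw' : w ≠ 0 := hw
    simp [unitC, hw', div_eq_mul_inv]
  cases n with
  | ofNat k => simpa using hu.pow k
  | negSucc k =>
    simp only [zpow_negSucc]
    exact (hu.pow (k+1)).inv (pow_ne_zero _ (unitC_ne _))

/-- ambient twist -/
def bE (n : ℤ) (y : E) : E := mk4 (Z y * unitC (W y) ^ n) (W y)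

lemma bE_smooth (n : ℤ) {y : E} (h : W y ≠ 0) : ContDiffAt ℝ (⊤ : ℕ∞) (bE n) y := by
  unfold bE
  refine ContDiffAt.comp (g := fun p : ℂ × ℂ => mk4 p.1 p.2) (f := fun y => (Z y * unitC (W y) ^ n, W y)) y mk_smooth.contDiffAt ?_
  refine ContDiffAt.prodMk (Z_smooth.contDiffAt.mul ?_) W_smooth.contDiffAt
  exact ContDiffAt.comp (g := fun w => unitC w ^ n) y (unitC_pow_smooth n h) W_smooth.contDiffAt

lemma bE_beta {β : Equiv.Perm Sph} (hβ : IsBetaMap β) (n : ℤ) (p : Sph) :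
    (((β ^ n) p : Sph) : E) = bE n p := by
  obtain ⟨h1, h2⟩ := beta_pow hβ n p
  apply ext_ZW
  · rw [h1, bE, Z_mk4]
  · rw [h2, bE, W_mk4]

lemma beta_smooth {β : Equiv.Perm Sph} (hβ : IsBetaMap β) (n : ℤ) (p : Sph) (h : W (p:E) ≠ 0) :
    ContMDiffAt (𝓡 3) (𝓡 3) (⊤ : ℕ∞) (β ^ n) p := by
  refine toSph_at ?_
  have e : (fun y : Sph => (((β ^ n) y : Sph) : E)) = fun y : Sph => bE n (y : E) :=
    funext fun y => bE_beta hβ n y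
  rw [e]
  exact (bE_smooth n h).contMDiffAt.comp p (coe_smooth p)

/-! determinants -/
def J4 (A : E →L[ℝ] E) : ℝ := det4 (A (mk4 1 0)) (A (mk4 Complex.I 0)) (A (mk4 0 1)) (A (mk4 0 Complex.I))

lemma vec_expand (a : E) : a = a 0 • mk4 1 0 + a 1 • mk4 Complex.I 0 + a 2 • mk4 0 1 + a 3 • mk4 0 Complex.I := by
  ext i; fin_cases i <;> simp [mk4]

lemma det4_map (A : E →L[ℝ] E) (a b c d : E) :
    det4 (A a) (A b) (A c) (A d) = det4 a b c d * J4 A := by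
  unfold J4 det4
  rw [← Matrix.det_mul]
  congr 1
  have key : ∀ (v : E) (j : Fin 4), (A v) j = v 0 * (A (mk4 1 0)) j + v 1 * (A (mk4 Complex.I 0)) j
      + v 2 * (A (mk4 0 1)) j + v 3 * (A (mk4 0 Complex.I)) j := by
    intro v j
    conv_lhs => rw [vec_expand v]
    simp
  ext i j
  rw [Matrix.mul_apply, Fin.sum_univ_four]
  fin_cases i <;> exact key _ j

lemma J4_comp (A B : E →L[ℝ] E) : J4 (A.comp B) = J4 B * J4 A := by
  have := det4_map A (B (mk4 1 0)) (B (mk4 Complex.I 0)) (B (mk4 0 1)) (B (mk4 0 Complex.I))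
  exact this

lemma J4_id : J4 (ContinuousLinearMap.id ℝ E) = 1 := by
  unfold J4 det4
  simp [Matrix.det_succ_row_zero, Fin.sum_univ_succ, mk4, Fin.succAbove]

lemma J4_cont : Continuous J4 := by
  unfold J4 det4
  refine Continuous.matrix_det ?_
  refine continuous_pi fun i => continuous_pi fun j => ?_
  have h : ∀ v : E, Continuous fun A : E →L[ℝ] E => (A v) j := fun v => by fun_prop
  fin_cases i <;> exact h _

lemma J4_tri (A : E →L[ℝ] E) (c : ℂ) (T : ℂ →L[ℝ] ℂ) (hc : ‖c‖ = 1)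
    (hA : ∀ v, A v = mk4 (Z v * c + T (W v)) (W v)) : J4 A = 1 := by
  unfold J4 det4
  simp only [hA, Z_mk4, W_mk4, map_zero]
  simp [Matrix.det_succ_row_zero, Fin.sum_univ_succ, mk4, Fin.succAbove]
  have : c.re * c.re + c.im * c.im = 1 := by
    rw [← Complex.normSq_apply, Complex.normSq_eq_norm_sq, hc]; norm_num
  linarith

lemma norm_unitC_pow (w : ℂ) (n : ℤ) : ‖unitC w ^ n‖ = 1 := by
  rw [norm_zpow]
  have : ‖unitC w‖ = 1 := by
    unfold unitC; split_ifs with h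
    · simp
    · rw [norm_div, Complex.norm_real, norm_norm, div_self (norm_ne_zero_iff.2 h)]
  rw [this, one_zpow]

lemma J4_bE (n : ℤ) {y : E} (h : W y ≠ 0) : J4 (fderiv ℝ (bE n) y) = 1 := by
  set u : ℂ → ℂ := fun w => unitC w ^ n with hu
  have h1 : DifferentiableAt ℝ u (W y) := (unitC_pow_smooth n h).differentiableAt top_ne0
  set T : ℂ →L[ℝ] ℂ := (Z y) • (fderiv ℝ u (W y)) with hT
  have hD : HasFDerivAt (bE n) (mkL.comp (((Z y) • ((fderiv ℝ u (W y)).comp WL) + (u (W y)) • ZL).prod WL)) y := by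
    have a1 : HasFDerivAt Z ZL y := ZL.hasFDerivAt
    have a2 : HasFDerivAt W WL y := WL.hasFDerivAt
    have a3 : HasFDerivAt (fun y => u (W y)) ((fderiv ℝ u (W y)).comp WL) y := h1.hasFDerivAt.comp y a2
    exact (mkL.hasFDerivAt (x := (Z y * u (W y), W y))).comp y ((a1.mul a3).prodMk a2)
  rw [hD.fderiv]
  refine J4_tri _ (u (W y)) T (norm_unitC_pow _ _) fun v => ?_
  show mk4 (Z y * (fderiv ℝ u (W y)) (W v) + u (W y) * Z v) (W v) = _
  rw [hT]
  congr 1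
  simp
  ring

/-! homogeneous extension -/
def proj (y : E) : Sph := if h : y ≠ 0 then ⟨(‖y‖)⁻¹ • y, by
  rw [mem_sphere_zero_iff_norm, norm_smul, norm_inv, norm_norm, inv_mul_cancel₀ (norm_ne_zero_iff.2 h)]⟩ else nu 0 0

lemma proj_coe {y : E} (h : y ≠ 0) : (proj y : E) = (‖y‖)⁻¹ • y := by unfold proj; rw [dif_pos h]
lemma sph_ne (p : Sph) : (p : E) ≠ 0 := by
  rw [← norm_pos_iff, norm_eq_of_mem_sphere]; norm_num
lemma proj_smul {r : ℝ} (hr : 0 < r) (p : Sph) : proj (r • (p : E)) = p := by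
  apply Subtype.ext
  rw [proj_coe (smul_ne_zero hr.ne' (sph_ne p)), norm_smul, norm_eq_of_mem_sphere, Real.norm_eq_abs, abs_of_pos hr,
    smul_smul, mul_one, inv_mul_cancel₀ hr.ne', one_smul]
lemma proj_self (p : Sph) : proj (p : E) = p := by
  have := proj_smul one_pos p; rwa [one_smul] at this
lemma proj_smooth {y : E} (h : y ≠ 0) : ContMDiffAt 𝓘(ℝ, E) (𝓡 3) (⊤ : ℕ∞) proj y := by
  refine toSph_at (ContDiffAt.contMDiffAt ?_)
  have : ContDiffAt ℝ (⊤ : ℕ∞) (fun y : E => (‖y‖)⁻¹ • y) y :=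
    ((contDiffAt_norm ℝ h).inv (norm_ne_zero_iff.2 h)).smul contDiffAt_id
  refine this.congr_of_eventuallyEq ?_
  filter_upwards [isOpen_ne.mem_nhds h] with z hz
  exact proj_coe hz

def hat (Ψ : Sph → Sph) (y : E) : E := ‖y‖ • (Ψ (proj y) : E)

lemma hat_self (Ψ : Sph → Sph) (p : Sph) : hat Ψ p = Ψ p := by
  unfold hat; rw [proj_self, norm_eq_of_mem_sphere, one_smul]

lemma hat_smooth {Ψ : Sph → Sph} {p : Sph} (h : ContMDiffAt (𝓡 3) (𝓡 3) (⊤ : ℕ∞) Ψ p) :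
    ContDiffAt ℝ (⊤ : ℕ∞) (hat Ψ) (p : E) := by
  have h1 : ContMDiffAt 𝓘(ℝ, E) 𝓘(ℝ, E) (⊤ : ℕ∞) (fun y => ((Ψ (proj y) : Sph) : E)) (p:E) := by
    refine ContMDiffAt.comp (p:E) (coe_smooth _) (ContMDiffAt.comp (g := Ψ) (p:E) ?_ (proj_smooth (sph_ne p)))
    rw [proj_self]; exact h
  exact (contDiffAt_norm ℝ (sph_ne p)).smul h1.contDiffAt

lemma hat_comp (Ψ Ψ' : Sph → Sph) {y : E} (h : y ≠ 0) : hat (Ψ ∘ Ψ') y = hat Ψ (hat Ψ' y) := by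
  have hy : 0 < ‖y‖ := norm_pos_iff.2 h
  unfold hat
  rw [proj_smul hy, norm_smul, norm_eq_of_mem_sphere, norm_norm, mul_one]
  rfl

def Jac (Ψ : Sph → Sph) (p : Sph) : ℝ := J4 (fderiv ℝ (hat Ψ) (p : E))

lemma Jac_comp {Ψ Ψ' : Sph → Sph} {p : Sph} (h' : ContMDiffAt (𝓡 3) (𝓡 3) (⊤ : ℕ∞) Ψ' p)
    (h : ContMDiffAt (𝓡 3) (𝓡 3) (⊤ : ℕ∞) Ψ (Ψ' p)) :
    Jac (Ψ ∘ Ψ') p = Jac Ψ (Ψ' p) * Jac Ψ' p := by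
  unfold Jac
  have e : hat (Ψ ∘ Ψ') =ᶠ[𝓝 (p : E)] fun y => hat Ψ (hat Ψ' y) := by
    filter_upwards [isOpen_ne.mem_nhds (sph_ne p)] with y hy
    exact hat_comp Ψ Ψ' hy
  rw [e.fderiv_eq]
  have d1 : DifferentiableAt ℝ (hat Ψ') (p:E) := (hat_smooth h').differentiableAt top_ne0
  have d2 : DifferentiableAt ℝ (hat Ψ) (hat Ψ' p) := by
    rw [hat_self]; exact (hat_smooth h).differentiableAt top_ne0
  have := fderiv_comp (p:E) d2 d1
  have e2 : (fun y => hat Ψ (hat Ψ' y)) = hat Ψ ∘ hat Ψ' := rfl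
  rw [e2, this, J4_comp, hat_self]; ring

lemma Jac_id (p : Sph) : Jac id p = 1 := by
  unfold Jac
  have e : hat id =ᶠ[𝓝 (p : E)] id := by
    filter_upwards [isOpen_ne.mem_nhds (sph_ne p)] with y hy
    have : ‖y‖ ≠ 0 := norm_ne_zero_iff.2 hy
    unfold hat; rw [id, proj_coe hy, smul_smul, mul_inv_cancel₀ this, one_smul, id]
  rw [e.fderiv_eq, fderiv_id, J4_id]

lemma Jac_beta {β : Equiv.Perm Sph} (hβ : IsBetaMap β) (n : ℤ) {p : Sph} (h : W (p:E) ≠ 0) :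
    Jac (β ^ n : Equiv.Perm Sph) p = 1 := by
  unfold Jac
  have e : hat (β ^ n : Equiv.Perm Sph) =ᶠ[𝓝 (p : E)] bE n := by
    filter_upwards [isOpen_ne.mem_nhds (sph_ne p)] with y hy
    have hy' : 0 < ‖y‖ := norm_pos_iff.2 hy
    unfold hat
    rw [bE_beta hβ, proj_coe hy]
    have hZ : Z ((‖y‖)⁻¹ • y) = (‖y‖)⁻¹ • Z y := ZL.map_smul _ _
    have hW : W ((‖y‖)⁻¹ • y) = (‖y‖)⁻¹ • W y := WL.map_smul _ _
    have hu : unitC ((‖y‖)⁻¹ • W y) = unitC (W y) := by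
      unfold unitC
      by_cases h0 : W y = 0
      · simp [h0]
      · rw [if_neg h0, if_neg (smul_ne_zero (inv_ne_zero hy'.ne') h0), norm_smul, norm_inv, norm_norm]
        have : (‖W y‖ : ℂ) ≠ 0 := by simpa using h0
        have : (‖y‖ : ℂ) ≠ 0 := by simpa using hy
        simp only [Complex.real_smul, Complex.ofReal_mul, Complex.ofReal_inv]
        field_simp
    unfold bE
    rw [hZ, hW, hu, smul_mul_assoc]
    have := mkL.map_smul (‖y‖)⁻¹ (Z y * unitC (W y) ^ n, W y)
    change mk4 ((‖y‖)⁻¹ • (Z y * unitC (W y) ^ n)) ((‖y‖)⁻¹ • W y) = (‖y‖)⁻¹ • mk4 (Z y * unitC (W y) ^ n) (W y) at this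
    rw [this, smul_smul, mul_inv_cancel₀ hy'.ne', one_smul]
  rw [e.fderiv_eq, J4_bE n h]

lemma Jac_sign {Ψ : Sph → Sph} (h : ContMDiff (𝓡 3) (𝓡 3) (⊤ : ℕ∞) Ψ) (h0 : ∀ p, Jac Ψ p ≠ 0) (p q : Sph) :
    0 < Jac Ψ p * Jac Ψ q := by
  have hc : Continuous (Jac Ψ) := by
    refine J4_cont.comp (continuous_iff_continuousAt.2 fun x => ?_)
    have := ((hat_smooth (h x)).fderiv_right (m := 0) (by simp)).continuousAt
    exact ContinuousAt.comp (g := fderiv ℝ (hat Ψ)) this continuous_subtype_val.continuousAt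
  haveI : PreconnectedSpace Sph := by
    have hr : 1 < Module.rank ℝ E := by
      rw [← Module.finrank_eq_rank]; simp
    exact Subtype.preconnectedSpace (isPreconnected_sphere hr 0 1)
  by_contra hneg
  have hlt : Jac Ψ p * Jac Ψ q < 0 := lt_of_le_of_ne (not_lt.1 hneg) (mul_ne_zero (h0 p) (h0 q))
  rcases mul_neg_iff.1 hlt with ⟨a, b⟩ | ⟨a, b⟩
  · obtain ⟨x, hx⟩ := mem_range_of_exists_le_of_exists_ge hc ⟨q, b.le⟩ ⟨p, a.le⟩
    exact h0 x hx
  · obtain ⟨x, hx⟩ := mem_range_of_exists_le_of_exists_ge hc ⟨p, a.le⟩ ⟨q, b.le⟩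
    exact h0 x hx

lemma Jac_twist {β : Equiv.Perm Sph} (hβ : IsBetaMap β) (n : ℤ) (δ : Equiv.Perm Sph)
    (hδ : ContMDiff (𝓡 3) (𝓡 3) (⊤ : ℕ∞) δ) (hδ' : ContMDiff (𝓡 3) (𝓡 3) (⊤ : ℕ∞) δ.symm)
    {p : Sph} (h : W (δ p : E) ≠ 0) :
    0 < Jac (fun x => δ.symm ((β ^ n) (δ x))) p := by
  have hinv : ∀ x, Jac δ.symm (δ x) * Jac δ x = 1 := by
    intro x
    rw [← Jac_comp (hδ x) (hδ' _)]
    have : (δ.symm ∘ δ : Sph → Sph) = id := by ext1; simp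
    rw [this, Jac_id]
  have h1 : Jac ((δ.symm ∘ (β ^ n : Equiv.Perm Sph)) ∘ δ) p = _ := Jac_comp (hδ p) ((hδ' _).comp _ (beta_smooth hβ n _ h))
  rw [Jac_comp (beta_smooth hβ n _ h) (hδ' _), Jac_beta hβ n h, mul_one] at h1
  change 0 < Jac ((δ.symm ∘ (β ^ n : Equiv.Perm Sph)) ∘ δ) p
  rw [h1]
  set q := (β ^ n) (δ p)
  have h2 := hinv (δ.symm q)
  rw [Equiv.apply_symm_apply] at h2
  have h3 := Jac_sign hδ (fun x => right_ne_zero_of_mul_eq_one (hinv x)) (δ.symm q) p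
  rcases pos_and_pos_or_neg_and_neg_of_mul_pos h3 with ⟨a, b⟩ | ⟨a, b⟩
  · have : 0 < Jac δ.symm q := by by_contra hh; nlinarith
    positivity
  · have : Jac δ.symm q < 0 := by by_contra hh; nlinarith
    exact mul_pos_of_neg_of_neg this b

/-- tangent vectors -/
lemma tang_eq {g : ℝ × ℂ → Sph} {q : ℝ × ℂ} (h : ContMDiffAt 𝓘(ℝ, ℝ × ℂ) (𝓡 3) (⊤ : ℕ∞) g q) (v : ℝ × ℂ) :
    tangAmb g q v = fderiv ℝ (fun u => (g u : E)) q v := by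
  unfold tangAmb
  have h1 := (coe_smooth (g q)).mdifferentiableAt top_ne0
  have h2 := h.mdifferentiableAt top_ne0
  have := mfderiv_comp q h1 h2
  rw [mfderiv_eq_fderiv] at this
  have e : (fun u => (g u : E)) = (fun p : Sph => (p : E)) ∘ g := rfl
  rw [e, this]; rfl

lemma coe_diff {g : ℝ × ℂ → Sph} {q : ℝ × ℂ} (h : ContMDiffAt 𝓘(ℝ, ℝ × ℂ) (𝓡 3) (⊤ : ℕ∞) g q) :
    ContDiffAt ℝ (⊤ : ℕ∞) (fun u => (g u : E)) q :=
  (ContMDiffAt.comp (g := fun p : Sph => (p : E)) q (coe_smooth _) h).contDiffAt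

lemma hat_radial {Ψ : Sph → Sph} {p : Sph} (h : ContMDiffAt (𝓡 3) (𝓡 3) (⊤ : ℕ∞) Ψ p) :
    fderiv ℝ (hat Ψ) (p : E) (p : E) = Ψ p := by
  have h1 : HasFDerivAt (hat Ψ) (fderiv ℝ (hat Ψ) (p:E)) ((1:ℝ) • (p:E)) := by
    rw [one_smul]; exact ((hat_smooth h).differentiableAt top_ne0).hasFDerivAt
  have h2 : HasDerivAt (fun t : ℝ => t • (p : E)) ((1:ℝ) • (p:E)) 1 := (hasDerivAt_id (1:ℝ)).smul_const _
  have h3 := h1.comp_hasDerivAt (1:ℝ) h2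
  have h4 : HasDerivAt (fun t : ℝ => t • (Ψ p : E)) ((1:ℝ) • (Ψ p : E)) 1 := (hasDerivAt_id (1:ℝ)).smul_const _
  have e : (hat Ψ ∘ fun t : ℝ => t • (p : E)) =ᶠ[𝓝 1] fun t : ℝ => t • (Ψ p : E) := by
    filter_upwards [Ioi_mem_nhds (zero_lt_one' ℝ)] with t ht
    have ht' : (0:ℝ) < t := ht
    simp only [Function.comp, hat]
    rw [proj_smul ht', norm_smul, norm_eq_of_mem_sphere, Real.norm_eq_abs, abs_of_pos ht', mul_one]
  have := h3.unique (h4.congr_of_eventuallyEq e)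
  simpa using this

lemma det4_twist {Ψ : Sph → Sph} {g : ℝ × ℂ → Sph} {q : ℝ × ℂ}
    (h : ContMDiffAt 𝓘(ℝ, ℝ × ℂ) (𝓡 3) (⊤ : ℕ∞) g q)
    (hΨ : ContMDiffAt (𝓡 3) (𝓡 3) (⊤ : ℕ∞) Ψ (g q)) (a b c : ℝ × ℂ) :
    det4 (Ψ (g q) : E) (tangAmb (fun u => Ψ (g u)) q a) (tangAmb (fun u => Ψ (g u)) q b) (tangAmb (fun u => Ψ (g u)) q c)
      = det4 (g q : E) (tangAmb g q a) (tangAmb g q b) (tangAmb g q c) * Jac Ψ (g q) := by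
  have hc : ContMDiffAt 𝓘(ℝ, ℝ × ℂ) (𝓡 3) (⊤ : ℕ∞) (fun u => Ψ (g u)) q := ContMDiffAt.comp (g := Ψ) q hΨ h
  have key : ∀ v, tangAmb (fun u => Ψ (g u)) q v = fderiv ℝ (hat Ψ) (g q : E) (tangAmb g q v) := by
    intro v
    rw [tang_eq hc, tang_eq h]
    have e : (fun u => (Ψ (g u) : E)) = hat Ψ ∘ fun u => (g u : E) := by
      ext1 u; simp [hat_self]
    rw [e, fderiv_comp q ((hat_smooth hΨ).differentiableAt top_ne0) ((coe_diff h).differentiableAt top_ne0)]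
    rfl
  rw [key, key, key, ← hat_radial hΨ, det4_map]; rfl

end

section
open scoped Topology ContDiff
open Filter

open Classical in
def fhat {L : Link} (F : BRMap L) (x : Sph) : Circle := if h : x ∈ L.compl then F.f ⟨x, h⟩ else 1

section
variable {L : Link} (F : BRMap L)
lemma fhat_eq (y : L.compl) : F.f y = fhat F y := by
  unfold fhat; rw [dif_pos y.2]
lemma fhat_smooth {x : Sph} (h : x ∉ L.carrier) : ContMDiffAt (𝓡 3) (𝓡 1) (⊤ : ℕ∞) (fhat F) x :=
  (op_smooth (U := L.compl) (fhat_eq F) ⟨x, h⟩).1 (F.smooth _)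
lemma fhat_crit {x : Sph} (h : x ∉ L.carrier) : IsCrit F.f ⟨x, h⟩ ↔ IsCrit (fhat F) x :=
  op_crit (U := L.compl) (fhat_eq F) ⟨x, h⟩ (fhat_smooth F h)
lemma fhat_nondeg {x : Sph} (h : x ∉ L.carrier) : Nondeg F.f ⟨x, h⟩ ↔ Nondeg (fhat F) x :=
  op_nondeg (U := L.compl) (fhat_eq F) ⟨x, h⟩
end

lemma arg_lift (c d : Circle) : c = d * Circle.exp (Complex.arg ((c : ℂ) / d)) := by
  apply Circle.ext
  rw [Circle.coe_mul, Circle.coe_exp, exp_arg _ (div_ne_zero (Circle.coe_ne_zero c) (Circle.coe_ne_zero d)), norm_div]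
  have := Circle.coe_ne_zero d
  simp only [Circle.norm_coe, div_one, Complex.ofReal_one]
  field_simp

section
variable {V : Type*} [NormedAddCommGroup V] [NormedSpace ℝ V]

lemma lift_smooth {f : Sph → Circle} {Y : V → Sph} {v0 : V} (hY : ContMDiffAt 𝓘(ℝ, V) (𝓡 3) (⊤ : ℕ∞) Y v0)
    (hf : ContMDiffAt (𝓡 3) (𝓡 1) (⊤ : ℕ∞) f (Y v0)) (θ : Circle)
    (hs : ((f (Y v0) : ℂ) / θ) ∈ Complex.slitPlane) :
    ContDiffAt ℝ (⊤ : ℕ∞) (fun v => Complex.arg ((f (Y v) : ℂ) / θ)) v0 := by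
  have h1 : ContMDiffAt 𝓘(ℝ, V) 𝓘(ℝ, ℂ) (⊤ : ℕ∞) (fun v => (f (Y v) : ℂ)) v0 :=
    ContMDiffAt.comp (g := fun z : Circle => (z : ℂ)) v0 (contMDiff_circle_coe _) (ContMDiffAt.comp (g := f) v0 hf hY)
  have h2 : ContDiffAt ℝ (⊤ : ℕ∞) (fun v => (f (Y v) : ℂ) / θ) v0 := by
    simp only [div_eq_mul_inv]; exact h1.contDiffAt.mul contDiffAt_const
  exact ContDiffAt.comp (g := Complex.arg) v0 (arg_smooth hs) h2

end

set_option maxHeartbeats 400000 in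
lemma base_h {L : Link} (F : BRMap L) {θ : Circle} (hreg : IsRegularValue F θ) (δ : Equiv.Perm Sph)
    (hδ : ContMDiff (𝓡 3) (𝓡 3) (⊤ : ℕ∞) δ) (hδ' : ContMDiff (𝓡 3) (𝓡 3) (⊤ : ℕ∞) δ.symm)
    (hO : ∀ s, ∃ hx : δ.symm (nu s 0) ∉ L.carrier, F.f ⟨δ.symm (nu s 0), hx⟩ = θ) :
    ∃ (ε1 : ℝ) (h : ℝ × ℂ → ℝ), 0 < ε1 ∧ (∀ s w, ‖w‖ < ε1 → δ.symm (nu s w) ∉ L.carrier) ∧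
      (∀ s w, fhat F (δ.symm (nu s w)) = θ * Circle.exp (h (s, w))) ∧
      (∀ s w, ‖w‖ < ε1 → ContDiffAt ℝ (⊤ : ℕ∞) h (s, w)) ∧
      (∀ s w, h (s + 2 * π, w) = h (s, w)) ∧ (∀ s, h (s, 0) = 0) ∧
      (∀ s, ∃ w, fderiv ℝ h (s, 0) (0, w) ≠ 0) := by
  obtain ⟨X, hX⟩ : ∃ X : ℝ × ℂ → Sph, X = fun q => δ.symm (nu q.1 q.2) := ⟨_, rfl⟩
  have gX : ∀ q, GoodParam X q := fun q => hX ▸ (good_nu q.1 q.2).perm δ.symm (hδ' _) (hδ _)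
  have sX : ContMDiff 𝓘(ℝ, ℝ × ℂ) (𝓡 3) (⊤ : ℕ∞) X := fun q => hX ▸ (hδ' _).comp q (nu_smooth q)
  have hXe : ∀ s w, δ.symm (nu s w) = X (s, w) := fun s w => by rw [hX]
  simp only [hXe] at hO ⊢
  set h : ℝ × ℂ → ℝ := fun q => Complex.arg ((fhat F (X q) : ℂ) / θ) with hh
  have hval : ∀ s, fhat F (X (s, 0)) = θ := by
    intro s; obtain ⟨hx, e⟩ := hO s
    rw [← e]; exact (fhat_eq F ⟨_, hx⟩).symm
  set P : ℝ → ℂ → Prop := fun s w => X (s, w) ∉ L.carrier ∧ ((fhat F (X (s,w)) : ℂ) / θ) ∈ Complex.slitPlane with hP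
  have hXp : ∀ s w, X (s + 2 * π, w) = X (s, w) := fun s w => by simp only [hX, nu_per]
  have hloc : ∀ s : ℝ, ∀ᶠ p : ℝ × ℂ in 𝓝 (s, 0), P p.1 p.2 := by
    intro s
    obtain ⟨hx, e⟩ := hO s
    have c1 : ∀ᶠ p in 𝓝 (s, (0:ℂ)), X p ∉ L.carrier :=
      sX.continuous.continuousAt.eventually (L.isClosed_carrier.isOpen_compl.mem_nhds hx)
    have c2 : ContinuousAt (fun p => (fhat F (X p) : ℂ) / θ) (s, (0:ℂ)) := by
      have := (fhat_smooth F hx).continuousAt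
      have k : ContinuousAt (fun p => fhat F (X p)) (s, (0:ℂ)) := ContinuousAt.comp (g := fhat F) this sX.continuous.continuousAt
      have k2 : ContinuousAt (fun p => (fhat F (X p) : ℂ)) (s, (0:ℂ)) :=
        ContinuousAt.comp (g := fun c : Circle => (c : ℂ)) contMDiff_circle_coe.continuous.continuousAt k
      exact k2.div_const _
    have c3 : (fhat F (X (s,0)) : ℂ) / θ ∈ Complex.slitPlane := by
      rw [hval, div_self (Circle.coe_ne_zero θ)]; exact Complex.one_mem_slitPlane
    filter_upwards [c1, c2.eventually (Complex.isOpen_slitPlane.mem_nhds c3)] with p h1 h2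
    exact ⟨h1, h2⟩
  obtain ⟨ε1, hε1, hu⟩ := unif (P := P) (fun s w => by simp only [hP, hXp]) hloc
  have hs : ∀ s w, ‖w‖ < ε1 → ContDiffAt ℝ (⊤ : ℕ∞) h (s, w) := fun s w hw =>
    lift_smooth (sX _) (fhat_smooth F (hu s w hw).1) θ (hu s w hw).2
  have hz : ∀ s, h (s, 0) = 0 := fun s => by
    simp only [hh, hval, div_self (Circle.coe_ne_zero θ), Complex.arg_one]
  have hf : ∀ q, fhat F (X q) = θ * Circle.exp (h q) := fun q => arg_lift _ _
  refine ⟨ε1, h, hε1, fun s w hw => (hu s w hw).1, fun s w => hf (s, w), hs,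
    fun s w => by simp only [hh, hXp], hz, fun s => ?_⟩
  by_contra hcon
  push Not at hcon
  obtain ⟨hx, e⟩ := hO s
  have hs0 := hs s 0 (by simpa using hε1)
  have hd : HasFDerivAt h (fderiv ℝ h (s, 0)) (s, (0:ℂ)) := (hs0.differentiableAt top_ne0).hasFDerivAt
  have h1 : fderiv ℝ h (s, 0) (1, 0) = 0 := by
    have l : HasDerivAt (fun t : ℝ => (t, (0:ℂ))) ((1:ℝ), (0:ℂ)) s := (hasDerivAt_id s).prodMk (hasDerivAt_const s (0:ℂ))
    have := hd.comp_hasDerivAt s l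
    have e : (h ∘ fun t : ℝ => (t, (0:ℂ))) = fun _ => 0 := funext hz
    rw [e] at this
    exact this.unique (hasDerivAt_const s 0)
  have h0 : fderiv ℝ h (s, 0) = 0 := by
    ext v
    · simpa using h1
    · exact hcon _
  have := (param_crit (gX (s, 0)) (Eventually.of_forall hf) hs0).2 h0
  exact hreg ⟨_, hx⟩ e ((fhat_crit F hx).2 this)

lemma nuInv0_nu (s : ℝ) (w : ℂ) : ∃ k : ℤ, nuInv 0 (nu s w) = (s - 2 * π * k, w) := by
  obtain ⟨k, hk⟩ : ∃ k : ℤ, |s - 2 * π * k - 0| < π ∨ s - 2 * π * k = π := by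
    refine ⟨toIocDiv Real.two_pi_pos (-π) s, ?_⟩
    have := sub_toIocDiv_zsmul_mem_Ioc Real.two_pi_pos (-π) s
    rw [zsmul_eq_mul, mem_Ioc] at this
    by_cases hh : s - 2 * π * (toIocDiv Real.two_pi_pos (-π) s) = π
    · exact Or.inr hh
    · left; rw [abs_lt]
      have h2 := lt_of_le_of_ne (b := π) (by nlinarith : s - 2 * π * (toIocDiv Real.two_pi_pos (-π) s) ≤ π) hh
      constructor <;> nlinarith
  have hp : nu s w = nu (s - 2 * π * k) w := by
    have : Function.Periodic (fun s => nu s w) (2 * π) := fun s => nu_per s w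
    have := this.sub_int_mul_eq (x := s) k
    rw [mul_comm] at this; exact this.symm
  refine ⟨k, ?_⟩
  rw [hp]
  rcases hk with hk | hk
  · exact nuInv_nu hk w
  · rw [hk]
    unfold nuInv
    rw [Z_nu_norm, W_nu, Z_nu]
    have hr : (rW w : ℂ) ≠ 0 := by exact_mod_cast (rW_pos w).ne'
    congr 1
    · rw [Complex.exp_pi_mul_I]; simp [Complex.arg_ofReal_of_neg, rW_pos]
      have := Complex.arg_ofReal_of_neg (x := - rW w) (by linarith [rW_pos w])
      simpa using this
    · field_simp

lemma arg_polC {ε x φ : ℝ} (h : 0 < ε * x) : ∃ k : ℤ, Complex.arg (polC ε x φ) = φ - 2 * π * k := by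
  refine ⟨toIocDiv Real.two_pi_pos (-π) φ, ?_⟩
  unfold polC
  rw [Complex.arg_real_mul _ h, Complex.arg_exp_mul_I, toIocMod, zsmul_eq_mul]; ring

lemma polC_arg {ε : ℝ} (hε : 0 < ε) (w : ℂ) : polC ε (‖w‖ / ε) (Complex.arg w) = w := by
  unfold polC
  rw [mul_div_cancel₀ _ hε.ne']
  exact Complex.norm_mul_exp_arg_mul_I w

end

section
open scoped Topology ContDiff
open Filter

structure GDat {L : Link} (F : BRMap L) (θ : Circle) (δ : Equiv.Perm Sph) (ε1 : ℝ) (h : ℝ × ℂ → ℝ)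
    (ε μ e0 R : ℝ) (G : P3 → ℝ) (p1 p2 : P3) : Prop where
  ε0 : 0 < ε
  μ0 : 0 < μ
  R1 : 1 < R
  εR : ε * (R + 1) ≤ ε1
  off : ∀ s w, ‖w‖ < ε1 → δ.symm (nu s w) ∉ L.carrier
  hf : ∀ s w, fhat F (δ.symm (nu s w)) = θ * Circle.exp (h (s, w))
  sm : ∀ s x φ, |x| < R + 1 → ContDiffAt ℝ (⊤ : ℕ∞) G (s, x, φ)
  per1 : ∀ s x φ, G (s + 2 * π, x, φ) = G (s, x, φ)
  per2 : ∀ s x φ, G (s, x, φ + 2 * π) = G (s, x, φ)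
  core : ∀ s x φ, x ≤ 1 → G (s, x, φ) = μ * (x * Real.cos (φ - e0))
  out : ∀ s x φ, R ≤ x → G (s, x, φ) = h (s, polC ε x φ)
  crit : ∀ s x φ, 0 < x → x < R + 1 → fderiv ℝ G (s, x, φ) = 0 →
        NondegAt G (s, x, φ) ∧ (ModEq3 (s, x, φ) p1 ∨ ModEq3 (s, x, φ) p2)

def Gt (ε : ℝ) (G : P3 → ℝ) (q : ℝ × ℂ) : ℝ := G (q.1, ‖q.2‖ / ε, Complex.arg q.2)

open Classical in
def f0 {L : Link} (F : BRMap L) (θ : Circle) (δ : Equiv.Perm Sph) (ε R : ℝ) (G : P3 → ℝ) (x : Sph) : Circle :=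
  if ‖W (δ x : E)‖ < ε * (R + 1 / 2) * ‖Z (δ x : E)‖ then θ * Circle.exp (Gt ε G (nuInv 0 (δ x : E))) else fhat F x

lemma W_nu_norm (s : ℝ) (w : ℂ) : ‖W (nu s w : E)‖ = ‖w‖ * ‖Z (nu s w : E)‖ := by
  rw [W_nu, Z_nu_norm, norm_mul, Complex.norm_real, Real.norm_eq_abs, abs_of_pos (rW_pos w), mul_comm]

lemma cond_nu (s : ℝ) (w : ℂ) (c : ℝ) : ‖W (nu s w : E)‖ < c * ‖Z (nu s w : E)‖ ↔ ‖w‖ < c := by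
  rw [W_nu_norm]
  exact mul_lt_mul_iff_left₀ (norm_pos_iff.2 (Z_nu_ne s w))

/-- points near the unknot come from coordinates -/
lemma exists_nu {p : Sph} {c : ℝ} (h : ‖W (p : E)‖ < c * ‖Z (p : E)‖) : ∃ s w, p = nu s w ∧ ‖w‖ < c := by
  have hz : Z (p : E) ≠ 0 := by
    intro h0; rw [h0, norm_zero, mul_zero] at h; exact absurd h (norm_nonneg _).not_gt
  have e := (nu_nuInv 0 p hz).symm
  refine ⟨_, _, e, ?_⟩
  rw [e] at h
  exact (cond_nu _ _ c).1 h

section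
variable {L : Link} {F : BRMap L} {θ : Circle} {δ : Equiv.Perm Sph} {ε1 : ℝ} {h : ℝ × ℂ → ℝ}
    {ε μ e0 R : ℝ} {G : P3 → ℝ} {p1 p2 : P3}

lemma GDat.per1' (D : GDat F θ δ ε1 h ε μ e0 R G p1 p2) (s x φ : ℝ) (k : ℤ) : G (s - 2 * π * k, x, φ) = G (s, x, φ) := by
  have : Function.Periodic (fun s => G (s, x, φ)) (2 * π) := fun s => D.per1 s x φ
  have := this.sub_int_mul_eq (x := s) k
  rw [mul_comm] at this; exact this
lemma GDat.per2' (D : GDat F θ δ ε1 h ε μ e0 R G p1 p2) (s x φ : ℝ) (k : ℤ) : G (s, x, φ - 2 * π * k) = G (s, x, φ) := by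
  have : Function.Periodic (fun φ => G (s, x, φ)) (2 * π) := fun φ => D.per2 s x φ
  have := this.sub_int_mul_eq (x := φ) k
  rw [mul_comm] at this; exact this

lemma GDat.f0_nu (D : GDat F θ δ ε1 h ε μ e0 R G p1 p2) (s : ℝ) (w : ℂ) (hw : ‖w‖ < ε * (R + 1 / 2)) :
    f0 F θ δ ε R G (δ.symm (nu s w)) = θ * Circle.exp (Gt ε G (s, w)) := by
  unfold f0
  rw [Equiv.apply_symm_apply, if_pos ((cond_nu s w _).2 hw)]
  obtain ⟨k, hk⟩ := nuInv0_nu s w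
  rw [hk]; unfold Gt; simp only [D.per1']

lemma GDat.f0_nu' (D : GDat F θ δ ε1 h ε μ e0 R G p1 p2) (s : ℝ) (w : ℂ) (hw : ε * R ≤ ‖w‖) :
    f0 F θ δ ε R G (δ.symm (nu s w)) = fhat F (δ.symm (nu s w)) := by
  by_cases h1 : ‖w‖ < ε * (R + 1 / 2)
  · have := D.ε0
    rw [D.f0_nu s w h1, D.hf, Gt]
    dsimp only
    rw [D.out _ _ _ (by rw [le_div_iff₀ D.ε0]; linarith), polC_arg D.ε0]
  · unfold f0
    rw [Equiv.apply_symm_apply, if_neg (by rw [cond_nu]; exact h1)]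

lemma GDat.f0_pol (D : GDat F θ δ ε1 h ε μ e0 R G p1 p2) (s x φ : ℝ) (hx : 0 < x) :
    f0 F θ δ ε R G (δ.symm (nu s (polC ε x φ))) = θ * Circle.exp (G (s, x, φ)) := by
  have hε := D.ε0
  have hn : ‖polC ε x φ‖ = ε * x := by rw [norm_polC, abs_of_pos (by positivity)]
  by_cases h1 : x < R + 1 / 2
  · rw [D.f0_nu _ _ (by rw [hn]; gcongr), Gt]
    dsimp only
    obtain ⟨k, hk⟩ := arg_polC (φ := φ) (mul_pos hε hx)
    rw [hn, mul_div_cancel_left₀ _ hε.ne', hk, D.per2']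
  · have h2 : R ≤ x := by linarith
    rw [D.f0_nu' _ _ (by rw [hn]; gcongr), D.hf, D.out _ _ _ h2]

lemma GDat.f0_core (D : GDat F θ δ ε1 h ε μ e0 R G p1 p2) (s : ℝ) (w : ℂ) (hw : ‖w‖ < ε) :
    f0 F θ δ ε R G (δ.symm (nu s w)) = θ * Circle.exp (μ / ε * (w.re * Real.cos e0 + w.im * Real.sin e0)) := by
  have hε := D.ε0
  have hR := D.R1
  rw [D.f0_nu _ _ (by nlinarith), Gt]
  dsimp only
  rw [D.core _ _ _ (by rw [div_le_one hε]; exact hw.le), Real.cos_sub]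
  have a := Complex.norm_mul_cos_arg w
  have b := Complex.norm_mul_sin_arg w
  congr 2
  rw [← a, ← b]; field_simp

lemma GDat.f0_out (D : GDat F θ δ ε1 h ε μ e0 R G p1 p2) (x : Sph) (hx : ε * R * ‖Z (δ x : E)‖ ≤ ‖W (δ x : E)‖) :
    f0 F θ δ ε R G x = fhat F x := by
  by_cases h1 : ‖W (δ x : E)‖ < ε * (R + 1 / 2) * ‖Z (δ x : E)‖
  · obtain ⟨s, w, e, hw⟩ := exists_nu h1
    have ex : x = δ.symm (nu s w) := by rw [← e, Equiv.symm_apply_apply]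
    rw [ex]
    refine D.f0_nu' s w ?_
    by_contra hcon
    rw [e] at hx
    exact absurd ((cond_nu s w (ε * R)).2 (not_le.1 hcon)) (not_lt.2 hx)
  · unfold f0; rw [if_neg h1]
end

end

section
open scoped Topology ContDiff
open Filter

def twist (β δ : Equiv.Perm Sph) (n : ℤ) : Equiv.Perm Sph := (δ.trans (β ^ n)).trans δ.symm

lemma twist_apply (β δ : Equiv.Perm Sph) (n : ℤ) (x : Sph) : twist β δ n x = δ.symm ((β ^ n) (δ x)) := rfl

section
variable {β : Equiv.Perm Sph} (hβ : IsBetaMap β) (n : ℤ) {δ : Equiv.Perm Sph}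
    (hδ : ContMDiff (𝓡 3) (𝓡 3) (⊤ : ℕ∞) δ) (hδ' : ContMDiff (𝓡 3) (𝓡 3) (⊤ : ℕ∞) δ.symm)

lemma twist_smooth (hβ : IsBetaMap β) (hδ : ContMDiff (𝓡 3) (𝓡 3) (⊤ : ℕ∞) δ)
    (hδ' : ContMDiff (𝓡 3) (𝓡 3) (⊤ : ℕ∞) δ.symm) {x : Sph} (h : W (δ x : E) ≠ 0) :
    ContMDiffAt (𝓡 3) (𝓡 3) (⊤ : ℕ∞) (twist β δ n) x :=
  (hδ' _).comp x ((beta_smooth hβ n _ h).comp x (hδ x))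

lemma twist_W (hβ : IsBetaMap β) (x : Sph) : W (δ (twist β δ n x) : E) = W (δ x : E) := by
  rw [twist_apply, Equiv.apply_symm_apply, (beta_pow hβ n _).2]

lemma twist_symm : (twist β δ n).symm = twist β δ (-n) := by
  ext1 x
  rw [twist_apply, zpow_neg]; rfl

lemma twist_symm_smooth (hβ : IsBetaMap β) (hδ : ContMDiff (𝓡 3) (𝓡 3) (⊤ : ℕ∞) δ)
    (hδ' : ContMDiff (𝓡 3) (𝓡 3) (⊤ : ℕ∞) δ.symm) {x : Sph} (h : W (δ x : E) ≠ 0) :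
    ContMDiffAt (𝓡 3) (𝓡 3) (⊤ : ℕ∞) (twist β δ n).symm (twist β δ n x) := by
  rw [twist_symm]
  exact twist_smooth (-n) hβ hδ hδ' (by rw [twist_W n hβ]; exact h)
end

section
variable {L : Link} {F : BRMap L} {θ : Circle} {δ : Equiv.Perm Sph} {ε1 : ℝ} {h : ℝ × ℂ → ℝ}
    {ε μ e0 R : ℝ} {G : P3 → ℝ} {p1 p2 : P3} {β : Equiv.Perm Sph}

def fnew (F : BRMap L) (θ : Circle) (δ β : Equiv.Perm Sph) (n : ℤ) (ε R : ℝ) (G : P3 → ℝ) (p : Sph) : Circle :=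
  f0 F θ δ ε R G ((twist β δ n).symm p)

lemma fnew_twist (n : ℤ) (x : Sph) : fnew F θ δ β n ε R G (twist β δ n x) = f0 F θ δ ε R G x := by
  unfold fnew; rw [Equiv.symm_apply_apply]

lemma twist_pol (hβ : IsBetaMap β) (n : ℤ) {s x φ : ℝ} (hε : 0 < ε) (hx : 0 < x) :
    twist β δ n (δ.symm (nu s (polC ε x φ))) = δ.symm (nu (s + n * φ) (polC ε x φ)) := by
  rw [twist_apply, Equiv.apply_symm_apply, beta_nu hβ n hε hx]

lemma polC_of {w : ℂ} (hε : 0 < ε) (hw : w ≠ 0) : ∃ x φ : ℝ, 0 < x ∧ w = polC ε x φ ∧ ‖w‖ = ε * x := by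
  refine ⟨‖w‖ / ε, Complex.arg w, by have := norm_pos_iff.2 hw; positivity, (polC_arg hε w).symm, ?_⟩
  field_simp

lemma GDat.fnew_core (D : GDat F θ δ ε1 h ε μ e0 R G p1 p2) (hβ : IsBetaMap β) (n : ℤ) (s : ℝ) (w : ℂ) (hw : ‖w‖ < ε) :
    fnew F θ δ β n ε R G (δ.symm (nu s w)) = θ * Circle.exp (μ / ε * (w.re * Real.cos e0 + w.im * Real.sin e0)) := by
  by_cases h0 : w = 0
  · have : δ.symm (nu s w) = twist β δ n (δ.symm (nu s w)) := by
      rw [twist_apply, Equiv.apply_symm_apply, beta_O hβ n _ (by rw [W_nu, h0, mul_zero])]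
    rw [this, fnew_twist, D.f0_core s w hw]
  · obtain ⟨x, φ, hx, e, hn⟩ := polC_of D.ε0 h0
    have : δ.symm (nu s w) = twist β δ n (δ.symm (nu (s - n * φ) w)) := by
      rw [e, twist_pol hβ n D.ε0 hx, sub_add_cancel]
    rw [this, fnew_twist, D.f0_core _ w hw]

lemma GDat.an_core (D : GDat F θ δ ε1 h ε μ e0 R G p1 p2) (hβ : IsBetaMap β) (n : ℤ)
    (hδ : ContMDiff (𝓡 3) (𝓡 3) (⊤ : ℕ∞) δ) (hδ' : ContMDiff (𝓡 3) (𝓡 3) (⊤ : ℕ∞) δ.symm)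
    (s : ℝ) (w : ℂ) (hw : ‖w‖ < ε) :
    ContMDiffAt (𝓡 3) (𝓡 1) (⊤ : ℕ∞) (fnew F θ δ β n ε R G) (δ.symm (nu s w)) ∧
      ¬ IsCrit (fnew F θ δ β n ε R G) (δ.symm (nu s w)) := by
  set l : ℝ × ℂ →L[ℝ] ℝ := ((μ / ε) • ((Real.cos e0) • Complex.reCLM + (Real.sin e0) • Complex.imCLM)).comp
    (ContinuousLinearMap.snd ℝ ℝ ℂ) with hl
  have gX : GoodParam (fun q : ℝ × ℂ => δ.symm (nu q.1 q.2)) (s, w) := (good_nu s w).perm δ.symm (hδ' _) (hδ _)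
  have hf : ∀ᶠ q : ℝ × ℂ in 𝓝 (s, w), fnew F θ δ β n ε R G (δ.symm (nu q.1 q.2)) = θ * Circle.exp (l q) := by
    have c : ContinuousAt (fun q : ℝ × ℂ => ‖q.2‖) (s, w) := by fun_prop
    filter_upwards [c.eventually (Iio_mem_nhds hw)] with q hq
    rw [D.fnew_core hβ n _ _ hq, hl]
    congr 2
    simp; ring
  have a1 := param_smooth gX hf l.contDiff.contDiffAt
  have a2 := param_crit gX hf l.contDiff.contDiffAt
  rw [l.fderiv] at a2
  refine ⟨a1, fun hcr => ?_⟩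
  revert hcr
  change ¬ IsCrit (fnew F θ δ β n ε R G) ((fun q : ℝ × ℂ => δ.symm (nu q.1 q.2)) (s, w))
  rw [a2]
  intro h0
  have h1 := DFunLike.congr_fun h0 (0, Complex.exp (e0 * Complex.I))
  have : (μ / ε) * (Real.cos e0 * Real.cos e0 + Real.sin e0 * Real.sin e0) = 0 := by
    rw [mul_add]
    simpa [hl, Complex.exp_ofReal_mul_I_re, Complex.exp_ofReal_mul_I_im, -mul_eq_zero] using h1
  have h2 := Real.cos_sq_add_sin_sq e0
  rw [← sq, ← sq, h2, mul_one] at this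
  exact (div_pos D.μ0 D.ε0).ne' this

lemma mod_pt {p p' : P3} (n : ℤ) (δ : Equiv.Perm Sph) (ε : ℝ) (hm : ModEq3 p p') :
    δ.symm (nu (p.1 + n * p.2.2) (polC ε p.2.1 p.2.2)) = δ.symm (nu (p'.1 + n * p'.2.2) (polC ε p'.2.1 p'.2.2)) := by
  obtain ⟨j, l, rfl⟩ := hm
  have h1 : polC ε p'.2.1 (p'.2.2 + 2 * π * l) = polC ε p'.2.1 p'.2.2 := by
    unfold polC; congr 1
    push_cast
    rw [add_mul, show (2 * (π:ℂ) * l * Complex.I) = l * (2 * π * Complex.I) by ring]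
    exact Complex.exp_periodic.int_mul l _
  have hp : Function.Periodic (fun s => nu s (polC ε p'.2.1 p'.2.2)) (2 * π) := fun s => nu_per s _
  have h2 := hp.int_mul (j + n * l) (p'.1 + n * p'.2.2)
  dsimp only at h2 ⊢
  rw [h1, ← h2]
  push_cast
  ring_nf

lemma GDat.an_shell (D : GDat F θ δ ε1 h ε μ e0 R G p1 p2) (hβ : IsBetaMap β) (n : ℤ)
    (hδ : ContMDiff (𝓡 3) (𝓡 3) (⊤ : ℕ∞) δ) (hδ' : ContMDiff (𝓡 3) (𝓡 3) (⊤ : ℕ∞) δ.symm)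
    (s x φ : ℝ) (hx : 0 < x) (hxR : x < R + 1) (y : Sph) (hy : y = δ.symm (nu (s + n * φ) (polC ε x φ))) :
    ContMDiffAt (𝓡 3) (𝓡 1) (⊤ : ℕ∞) (fnew F θ δ β n ε R G) y ∧
      (IsCrit (fnew F θ δ β n ε R G) y → Nondeg (fnew F θ δ β n ε R G) y ∧
       (y = δ.symm (nu (p1.1 + n * p1.2.2) (polC ε p1.2.1 p1.2.2)) ∨
        y = δ.symm (nu (p2.1 + n * p2.2.2) (polC ε p2.2.1 p2.2.2)))) := by
  have gX : GoodParam (fun q : ℝ × ℂ => δ.symm (nu q.1 q.2)) (s + n * φ, polC ε x φ) :=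
    (good_nu _ _).perm δ.symm (hδ' _) (hδ _)
  have gY := good_polar D.ε0 n hx gX
  have hf : ∀ᶠ p : P3 in 𝓝 (s, x, φ), fnew F θ δ β n ε R G (δ.symm (nu (p.1 + n * p.2.2) (polC ε p.2.1 p.2.2)))
      = θ * Circle.exp (G p) := by
    have c : ContinuousAt (fun q : P3 => q.2.1) (s, x, φ) := by fun_prop
    filter_upwards [c.eventually (Ioi_mem_nhds hx)] with p hp
    rw [← twist_pol hβ n D.ε0 hp, fnew_twist, D.f0_pol _ _ _ hp]
  have hg := D.sm s x φ (by rw [abs_of_pos hx]; exact hxR)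
  subst hy
  have a1 := param_smooth gY hf hg
  refine ⟨a1, fun hc => ?_⟩
  have hc' := (param_crit gY hf hg).1 hc
  obtain ⟨a, b⟩ := D.crit s x φ hx hxR hc'
  refine ⟨(param_nondeg gY hf hg hc').2 a, ?_⟩
  rcases b with b | b
  · have mp := mod_pt n δ ε b
    dsimp only at mp
    left; rw [mp]
  · have mp := mod_pt n δ ε b
    dsimp only at mp
    right; rw [mp]

lemma GDat.an_out (D : GDat F θ δ ε1 h ε μ e0 R G p1 p2) (hβ : IsBetaMap β) (n : ℤ)
    (hδ : ContMDiff (𝓡 3) (𝓡 3) (⊤ : ℕ∞) δ) (hδ' : ContMDiff (𝓡 3) (𝓡 3) (⊤ : ℕ∞) δ.symm)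
    (x : Sph) (hxL : x ∉ L.carrier) (hx : ε * R * ‖Z (δ x : E)‖ < ‖W (δ x : E)‖) :
    ContMDiffAt (𝓡 3) (𝓡 1) (⊤ : ℕ∞) (fnew F θ δ β n ε R G) (twist β δ n x) ∧
      (IsCrit (fnew F θ δ β n ε R G) (twist β δ n x) ↔ IsCrit (fhat F) x) ∧
      (IsCrit (fhat F) x → Nondeg (fhat F) x → Nondeg (fnew F θ δ β n ε R G) (twist β δ n x)) := by
  have hε := D.ε0
  have hR := D.R1
  have hW : W (δ x : E) ≠ 0 := by
    rw [← norm_pos_iff]; refine lt_of_le_of_lt ?_ hx; positivity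
  set Y : E3 → Sph := fun u => (extChartAt (𝓡 3) x).symm u with hY
  set u0 := extChartAt (𝓡 3) x x with hu0
  have gY : GoodParam Y u0 := good_chart x
  have hYu : Y u0 = x := extChartAt_to_inv x
  have gY' : GoodParam (fun u => twist β δ n (Y u)) u0 :=
    gY.perm (twist β δ n) (by rw [hYu]; exact twist_smooth n hβ hδ hδ' hW) (by rw [hYu]; exact twist_symm_smooth n hβ hδ hδ' hW)
  set g : E3 → ℝ := fun u => Complex.arg ((fhat F (Y u) : ℂ) / (fhat F x : Circle)) with hg
  have sY : ContMDiffAt 𝓘(ℝ, E3) (𝓡 3) (⊤ : ℕ∞) Y u0 := by obtain ⟨_, a, _⟩ := gY; exact a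
  have sg : ContDiffAt ℝ (⊤ : ℕ∞) g u0 := by
    refine lift_smooth sY (by rw [hYu]; exact fhat_smooth F hxL) _ ?_
    rw [hYu, div_self (Circle.coe_ne_zero _)]; exact Complex.one_mem_slitPlane
  have e1 : ∀ᶠ u in 𝓝 u0, fhat F (Y u) = fhat F x * Circle.exp (g u) := Eventually.of_forall fun u => arg_lift _ _
  have e2 : ∀ᶠ u in 𝓝 u0, fnew F θ δ β n ε R G (twist β δ n (Y u)) = fhat F x * Circle.exp (g u) := by
    have c : ContinuousAt (fun u => ‖W (δ (Y u) : E)‖ - ε * R * ‖Z (δ (Y u) : E)‖) u0 := by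
      have k : ContinuousAt (fun u => (δ (Y u) : E)) u0 :=
        continuous_subtype_val.continuousAt.comp (hδ.continuous.continuousAt.comp sY.continuousAt)
      exact ((continuous_W.continuousAt.comp k).norm).sub (continuousAt_const.mul (continuous_Z.continuousAt.comp k).norm)
    have c0 : 0 < ‖W (δ (Y u0) : E)‖ - ε * R * ‖Z (δ (Y u0) : E)‖ := by rw [hYu]; linarith
    filter_upwards [c.eventually (Ioi_mem_nhds c0)] with u hu
    have hu' : 0 < ‖W (δ (Y u) : E)‖ - ε * R * ‖Z (δ (Y u) : E)‖ := hu
    rw [fnew_twist, D.f0_out _ (by linarith)]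
    exact arg_lift _ _
  have a1 := param_smooth gY' e2 sg
  have a2 := param_crit gY' e2 sg
  have a3 := param_crit gY e1 sg
  rw [hYu] at a1 a2 a3
  refine ⟨a1, a2.trans a3.symm, fun hc hn => ?_⟩
  have b1 := param_nondeg gY' e2 sg (a3.1 hc)
  have b2 := param_nondeg gY e1 sg (a3.1 hc)
  rw [hYu] at b1 b2
  exact b1.2 (b2.1 hn)

/-- full analysis -/
lemma GDat.an (D : GDat F θ δ ε1 h ε μ e0 R G p1 p2) (hβ : IsBetaMap β) (n : ℤ)
    (hδ : ContMDiff (𝓡 3) (𝓡 3) (⊤ : ℕ∞) δ) (hδ' : ContMDiff (𝓡 3) (𝓡 3) (⊤ : ℕ∞) δ.symm)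
    (hM : MorseFun F.f) (x : Sph) (hxL : x ∉ L.carrier) :
    ContMDiffAt (𝓡 3) (𝓡 1) (⊤ : ℕ∞) (fnew F θ δ β n ε R G) (twist β δ n x) ∧
      (IsCrit (fnew F θ δ β n ε R G) (twist β δ n x) → Nondeg (fnew F θ δ β n ε R G) (twist β δ n x) ∧
       (IsCrit F.f ⟨x, hxL⟩ ∨ twist β δ n x = δ.symm (nu (p1.1 + n * p1.2.2) (polC ε p1.2.1 p1.2.2)) ∨
        twist β δ n x = δ.symm (nu (p2.1 + n * p2.2.2) (polC ε p2.2.1 p2.2.2)))) := by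
  have hε := D.ε0
  have hR := D.R1
  by_cases h1 : ε * R * ‖Z (δ x : E)‖ < ‖W (δ x : E)‖
  · obtain ⟨a, b, c⟩ := D.an_out hβ n hδ hδ' x hxL h1
    refine ⟨a, fun hc => ?_⟩
    have hc' := b.1 hc
    have hc2 := (fhat_crit F hxL).2 hc'
    exact ⟨c hc' ((fhat_nondeg F hxL).1 (hM _ hc2)), Or.inl hc2⟩
  · have h2 : ‖W (δ x : E)‖ < ε * (R + 1) * ‖Z (δ x : E)‖ := by
      have hz : 0 < ‖Z (δ x : E)‖ := by
        by_contra h0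
        have z0 : ‖Z (δ x : E)‖ = 0 := le_antisymm (not_lt.1 h0) (norm_nonneg _)
        have := sph_ZW (δ x)
        rw [z0] at h1 this
        have w0 : ‖W (δ x : E)‖ = 0 := le_antisymm (by simpa using h1) (norm_nonneg _)
        rw [w0] at this; norm_num at this
      have : 0 < ε * ‖Z (δ x : E)‖ := by positivity
      nlinarith
    obtain ⟨s, w, e, hw⟩ := exists_nu h2
    have ex : x = δ.symm (nu s w) := by rw [← e, Equiv.symm_apply_apply]
    by_cases h0 : w = 0
    · have e2 : twist β δ n x = δ.symm (nu s w) := by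
        rw [twist_apply, e, beta_O hβ n _ (by rw [W_nu, h0, mul_zero])]
      rw [e2]
      obtain ⟨a, b⟩ := D.an_core hβ n hδ hδ' s w (by rw [h0, norm_zero]; exact hε)
      exact ⟨a, fun hc => absurd hc b⟩
    · obtain ⟨t, φ, ht, ew, hn⟩ := polC_of hε h0
      have e2 : twist β δ n x = δ.symm (nu (s + n * φ) (polC ε t φ)) := by
        rw [ex, ew, twist_pol hβ n hε ht]
      obtain ⟨a, b⟩ := D.an_shell hβ n hδ hδ' s t φ ht (by rw [hn] at hw; exact lt_of_mul_lt_mul_left hw hε.le) _ e2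
      exact ⟨a, fun hc => ⟨(b hc).1, Or.inr (b hc).2⟩⟩
end

end

section
open scoped Topology ContDiff
open Filter

lemma det4_scale (a b c d : E) (η : ℝ) : det4 a b (η • c) (η • d) = η ^ 2 * det4 a b c d := by
  unfold det4
  simp [Matrix.det_succ_row_zero, Fin.sum_univ_succ, Fin.succAbove]
  ring

lemma det4_span (a b c d : E) (h : det4 a b c d ≠ 0) (v : E) :
    ∃ k0 k1 k2 k3 : ℝ, k0 • a + k1 • b + k2 • c + k3 • d = v := by
  set M : Matrix (Fin 4) (Fin 4) ℝ := Matrix.of ![(fun i => a i), (fun i => b i), (fun i => c i), (fun i => d i)] with hM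
  have hu : IsUnit M.det := isUnit_iff_ne_zero.2 h
  set k := Matrix.vecMul (fun i => v i) M⁻¹ with hk
  have h1 : Matrix.vecMul k M = fun i => v i := by
    rw [hk, Matrix.vecMul_vecMul, Matrix.nonsing_inv_mul _ hu, Matrix.vecMul_one]
  refine ⟨k 0, k 1, k 2, k 3, ?_⟩
  ext j
  have := congrFun h1 j
  rw [Matrix.vecMul, dotProduct, Fin.sum_univ_four] at this
  simpa [hM] using this

/-- a positively oriented tube is open -/
lemma tube_open {g : ℝ × ℂ → Sph} {q : ℝ × ℂ} (h : ContMDiffAt 𝓘(ℝ, ℝ × ℂ) (𝓡 3) (⊤ : ℕ∞) g q)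
    (hd : det4 (g q : E) (tangAmb g q (1, 0)) (tangAmb g q (0, 1)) (tangAmb g q (0, Complex.I)) ≠ 0)
    {S : Set (ℝ × ℂ)} (hS : S ∈ 𝓝 q) : g '' S ∈ 𝓝 (g q) := by
  set c : ℝ × ℂ → E := fun u => (g u : E) with hc
  have sc : ContDiffAt ℝ (⊤ : ℕ∞) c q := coe_diff h
  set H : ℝ × (ℝ × ℂ) → E := fun p => p.1 • c p.2 with hH
  have sH : ContDiffAt ℝ (⊤ : ℕ∞) H (1, q) := contDiffAt_fst.smul (ContDiffAt.comp (g := c) (1, q) sc contDiffAt_snd)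
  have dH : HasFDerivAt H _ ((1:ℝ), q) :=
    (hasFDerivAt_fst (𝕜 := ℝ) (p := ((1:ℝ), q))).smul (HasFDerivAt.comp (g := c) ((1:ℝ), q) (sc.differentiableAt top_ne0).hasFDerivAt hasFDerivAt_snd)
  have sd := sH.hasStrictFDerivAt top_ne0
  rw [tang_eq h, tang_eq h, tang_eq h] at hd
  have hsurj : (fderiv ℝ H (1, q)).range = ⊤ := by
    rw [LinearMap.range_eq_top]
    intro v
    obtain ⟨k0, k1, k2, k3, hk⟩ := det4_span _ _ _ _ hd v
    refine ⟨(k0, (k1, k2 + k3 * Complex.I)), ?_⟩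
    have e : ((k1, k2 + k3 * Complex.I) : ℝ × ℂ) = k1 • ((1:ℝ), (0:ℂ)) + k2 • ((0:ℝ), (1:ℂ)) + k3 • ((0:ℝ), Complex.I) := by
      ext <;> simp
    rw [dH.fderiv]
    show (1:ℝ) • (fderiv ℝ c q) (k1, k2 + k3 * Complex.I) + k0 • c q = v
    rw [e, map_add, map_add, map_smul, map_smul, map_smul, one_smul, ← hk]
    abel
  have hm := sd.map_nhds_eq_of_surj hsurj
  have hT : (Ioi (0:ℝ) ×ˢ S) ∈ 𝓝 ((1:ℝ), q) := prod_mem_nhds (Ioi_mem_nhds one_pos) hS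
  have hI : H '' (Ioi (0:ℝ) ×ˢ S) ∈ 𝓝 (g q : E) := by
    have : H (1, q) = (g q : E) := by simp [hH, hc]
    rw [← this, ← hm]; exact image_mem_map hT
  have hp := continuous_subtype_val.continuousAt.preimage_mem_nhds (x := g q) hI
  filter_upwards [hp] with y hy
  obtain ⟨⟨r, u⟩, ⟨hr, hu⟩, e⟩ := hy
  refine ⟨u, hu, ?_⟩
  have hr' : (0:ℝ) < r := hr
  have e' : r • (g u : E) = y := e
  rw [← proj_self y, ← e', proj_smul hr']

lemma carrier_image {L L' : Link} (hn : L'.n = L.n) (Φ : Sph → Sph)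
    (hemb : ∀ i t, L'.emb i t = Φ (L.emb (Fin.cast hn i) t)) : L'.carrier = Φ '' L.carrier := by
  unfold Link.carrier
  rw [image_iUnion]
  apply Subset.antisymm
  · refine iUnion_subset fun i => ?_
    rintro _ ⟨t, ht, rfl⟩
    exact mem_iUnion.2 ⟨Fin.cast hn i, _, ⟨t, ht, rfl⟩, (hemb i t).symm⟩
  · refine iUnion_subset fun i => ?_
    rintro _ ⟨_, ⟨t, ht, rfl⟩, rfl⟩
    exact mem_iUnion.2 ⟨Fin.cast hn.symm i, t, ht, hemb _ t⟩

lemma emb_reduce (L : Link) {y : Sph} (h : y ∈ L.carrier) : ∃ i t, L.emb i t = y := by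
  unfold Link.carrier at h
  obtain ⟨i, t, -, e⟩ := mem_iUnion.1 h
  exact ⟨i, t, e⟩

lemma emb_mem (L : Link) (i : Fin L.n) (t : ℝ) : L.emb i t ∈ L.carrier := by
  have hp : Function.Periodic (L.emb i) (2 * π) := L.periodic i
  obtain ⟨s, hs, e⟩ := hp.exists_mem_Ico₀ Real.two_pi_pos t
  exact mem_iUnion.2 ⟨i, s, ⟨hs.1, hs.2.le⟩, e.symm⟩

lemma tub_at {L : Link} (F : BRMap L) (i : Fin L.n) (t : ℝ) {z : ℂ} (hz : ‖z‖ < 1) :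
    ContMDiffAt 𝓘(ℝ, ℝ × ℂ) (𝓡 3) (⊤ : ℕ∞) (F.tub i) (t, z) :=
  (F.tub_smooth i).contMDiffAt (prod_mem_nhds univ_mem (isOpen_ball.mem_nhds (by simpa using hz)))

lemma exists_eta {L : Link} (F : BRMap L) {U : Set Sph} (hU : IsOpen U) (hLU : L.carrier ⊆ U) :
    ∃ η : ℝ, 0 < η ∧ η ≤ 1 ∧ ∀ i t z, ‖z‖ < η → F.tub i (t, z) ∈ U := by
  obtain ⟨η, h0, h⟩ := unif (P := fun t z => ∀ i, F.tub i (t, z) ∈ U)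
    (fun s w => by simp only [F.tub_per]) (fun s => by
      rw [eventually_all]
      intro i
      refine (tub_at F i s (by simp)).continuousAt.eventually (hU.mem_nhds ?_)
      rw [F.tub_core]; exact hLU (emb_mem L i s))
  exact ⟨min η 1, by positivity, min_le_right _ _, fun i t z hz => h t z (lt_of_lt_of_le hz (min_le_left _ _)) i⟩

lemma tang_scale {g : ℝ × ℂ → Sph} {t η : ℝ} {z : ℂ} (h : ContMDiffAt 𝓘(ℝ, ℝ × ℂ) (𝓡 3) (⊤ : ℕ∞) g (t, η * z)) :
    ContMDiffAt 𝓘(ℝ, ℝ × ℂ) (𝓡 3) (⊤ : ℕ∞) (fun q : ℝ × ℂ => g (q.1, η * q.2)) (t, z) ∧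
    ∀ v, tangAmb (fun q : ℝ × ℂ => g (q.1, η * q.2)) (t, z) v = tangAmb g (t, η * z) (v.1, η * v.2) := by
  set S : ℝ × ℂ →L[ℝ] ℝ × ℂ := (ContinuousLinearMap.fst ℝ ℝ ℂ).prod (η • ContinuousLinearMap.snd ℝ ℝ ℂ) with hS
  have hSe : ∀ q, S q = (q.1, η * q.2) := fun q => by simp [hS]
  have e : (fun q : ℝ × ℂ => g (q.1, η * q.2)) = fun q => g (S q) := by ext1 q; rw [hSe]
  have h' : ContMDiffAt 𝓘(ℝ, ℝ × ℂ) (𝓡 3) (⊤ : ℕ∞) g (S (t, z)) := by rw [hSe]; exact h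
  have hc : ContMDiffAt 𝓘(ℝ, ℝ × ℂ) (𝓡 3) (⊤ : ℕ∞) (fun q => g (S q)) (t, z) :=
    ContMDiffAt.comp (g := g) (t, z) h' S.contDiff.contMDiff.contMDiffAt
  rw [e]
  refine ⟨hc, fun v => ?_⟩
  rw [tang_eq hc, tang_eq h, ← hSe v]
  have := fderiv_comp (g := fun u => (g u : E)) (f := S) (t, z) ((coe_diff h').differentiableAt top_ne0) S.differentiableAt
  have e2 : (fun u => (g (S u) : E)) = (fun u => (g u : E)) ∘ S := rfl
  rw [e2, this, S.fderiv, hSe]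
  rfl

lemma exists_BR {β : Equiv.Perm Sph} (hβ : IsBetaMap β) (n : ℤ) {δ : Equiv.Perm Sph}
    (hδ : ContMDiff (𝓡 3) (𝓡 3) (⊤ : ℕ∞) δ) (hδ' : ContMDiff (𝓡 3) (𝓡 3) (⊤ : ℕ∞) δ.symm)
    {L L' : Link} (F : BRMap L) (hn : L'.n = L.n)
    (hemb : ∀ i t, L'.emb i t = twist β δ n (L.emb (Fin.cast hn i) t))
    {f : Sph → Circle} {U : Set Sph} (hU : IsOpen U) (hLU : L.carrier ⊆ U) (hUW : ∀ x ∈ U, W (δ x : E) ≠ 0)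
    (hfU : ∀ x ∈ U, f (twist β δ n x) = fhat F x)
    (hfs : ∀ x, x ∉ L.carrier → ContMDiffAt (𝓡 3) (𝓡 1) (⊤ : ℕ∞) f (twist β δ n x)) :
    ∃ F' : BRMap L', ∀ y, F'.f y = f y := by
  obtain ⟨η, η0, η1, hη⟩ := exists_eta F hU hLU
  have hcar := carrier_image hn (twist β δ n) hemb
  have hmem : ∀ x, twist β δ n x ∈ L'.carrier ↔ x ∈ L.carrier := fun x => by
    rw [hcar]; exact (twist β δ n).injective.mem_set_image
  have hball : ∀ z : ℂ, z ∈ ball (0:ℂ) 1 → ‖(η:ℂ) * z‖ < η := by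
    intro z hz
    rw [norm_mul, Complex.norm_real, Real.norm_eq_abs, abs_of_pos η0]
    have : ‖z‖ < 1 := by simpa using hz
    nlinarith
  have hball1 : ∀ z : ℂ, z ∈ ball (0:ℂ) 1 → ‖(η:ℂ) * z‖ < 1 := fun z hz => (hball z hz).trans_le η1
  have hball1' : ∀ z : ℂ, z ∈ ball (0:ℂ) 1 → (η:ℂ) * z ∈ ball (0:ℂ) 1 := fun z hz => by simpa using hball1 z hz
  have ηne : (η : ℂ) ≠ 0 := by exact_mod_cast η0.ne'
  have hts : ∀ x ∈ U, ContMDiffAt (𝓡 3) (𝓡 3) (⊤ : ℕ∞) (twist β δ n) x := fun x hx => twist_smooth n hβ hδ hδ' (hUW x hx)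
  refine ⟨{
    f := fun y => f y
    smooth := ?_
    tub := fun i q => twist β δ n (F.tub (Fin.cast hn i) (q.1, η * q.2))
    tub_smooth := ?_
    tub_per := ?_
    tub_core := ?_
    tub_inj := ?_
    tub_nbhd := ?_
    tub_off := ?_
    adapted := ?_
    positive := ?_ }, fun y => rfl⟩
  · intro y
    rw [op_smooth (U := L'.compl) (f := f) (fun y => rfl) y]
    have h1 : twist β δ n ((twist β δ n).symm y) = y := Equiv.apply_symm_apply _ _
    rw [← h1]
    refine hfs _ fun hc => y.2 ?_
    rw [← hmem, h1] at hc; exact hc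
  · rintro i ⟨t, z⟩ ⟨-, hz⟩
    refine ContMDiffAt.contMDiffWithinAt ?_
    exact ContMDiffAt.comp (g := twist β δ n) (t, z) (hts _ (hη _ _ _ (hball z hz)))
      (tang_scale (tub_at F _ t (hball1 z hz))).1
  · intro i t z; simp only [F.tub_per]
  · intro i t; simp only [mul_zero, F.tub_core, hemb]
  · intro i j t s z w ht hs hz hw e
    have e1 := (twist β δ n).injective e
    obtain ⟨a, b, c⟩ := F.tub_inj _ _ _ _ _ _ ht hs (hball1' z hz) (hball1' w hw) e1
    exact ⟨Fin.cast_injective hn a, b, mul_left_cancel₀ ηne c⟩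
  · intro x hx
    rw [hcar] at hx
    obtain ⟨y, hy, rfl⟩ := hx
    obtain ⟨i, t, e⟩ := emb_reduce L hy
    have hyU : y ∈ U := hLU hy
    have h1 : F.tub i '' (univ ×ˢ ball (0:ℂ) η) ∈ 𝓝 y := by
      have := tube_open (tub_at F i t (z := 0) (by simp)) (F.positive i t 0 (by simp)).ne'
        (S := univ ×ˢ ball (0:ℂ) η) (prod_mem_nhds univ_mem (ball_mem_nhds _ η0))
      rwa [F.tub_core, e] at this
    have hc := (twist_symm_smooth n hβ hδ hδ' (hUW y hyU)).continuousAt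
    have hc' : Tendsto (twist β δ n).symm (𝓝 (twist β δ n y)) (𝓝 y) := by
      have := hc; unfold ContinuousAt at this; rwa [Equiv.symm_apply_apply] at this
    filter_upwards [hc' h1] with p hp
    obtain ⟨⟨t', z'⟩, ⟨-, hz'⟩, e'⟩ := hp
    refine mem_iUnion.2 ⟨Fin.cast hn.symm i, (t', z' / η), ⟨trivial, ?_⟩, ?_⟩
    · have : ‖z'‖ < η := by simpa using hz'
      simp only [mem_ball_zero_iff, norm_div, Complex.norm_real, Real.norm_eq_abs, abs_of_pos η0]
      rwa [div_lt_one η0]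
    · have : (η : ℂ) * (z' / η) = z' := by field_simp
      simp only [this]
      have h3 : Fin.cast hn (Fin.cast hn.symm i) = i := rfl
      rw [h3, e', Equiv.apply_symm_apply]
  · intro i t z hz hz0
    rw [hmem]
    exact F.tub_off _ _ _ (hball1' z hz) (mul_ne_zero ηne hz0)
  · intro i t z hz hz0 x hx
    have hoff := F.tub_off (Fin.cast hn i) t _ (hball1' z hz) (mul_ne_zero ηne hz0)
    have h1 := F.adapted (Fin.cast hn i) t _ (hball1' z hz) (mul_ne_zero ηne hz0) ⟨_, hoff⟩ rfl
    show f x = _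
    rw [hx, hfU _ (hη _ _ _ (hball z hz))]
    have h2 := fhat_eq F ⟨_, hoff⟩
    rw [← h2, h1]
    unfold toCircle
    rw [Complex.arg_real_mul _ η0]
  · intro i t z hz
    obtain ⟨a, b⟩ := tang_scale (tub_at F (Fin.cast hn i) t (hball1 z hz))
    have hUx := hη (Fin.cast hn i) t _ (hball z hz)
    have key := det4_twist (Ψ := twist β δ n) a (hts _ hUx) (1, 0) (0, 1) (0, Complex.I)
    have hpos := F.positive (Fin.cast hn i) t _ (hball1' z hz)
    have hJ : 0 < Jac (twist β δ n) (F.tub (Fin.cast hn i) (t, η * z)) := Jac_twist hβ n δ hδ hδ' (hUW _ hUx)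
    rw [key, b, b, b]
    refine mul_pos ?_ hJ
    have l : ∀ u : ℂ, tangAmb (F.tub (Fin.cast hn i)) (t, η * z) (0, η * u) =
        η • tangAmb (F.tub (Fin.cast hn i)) (t, η * z) (0, u) := by
      intro u
      rw [tang_eq (tub_at F _ t (hball1 z hz)), tang_eq (tub_at F _ t (hball1 z hz)), ← map_smul]
      congr 1
      ext <;> simp
    simp only [mul_zero]
    rw [l, l, det4_scale]
    exact mul_pos (by positivity) hpos

end

section
open scoped Topology ContDiff
open Filter

lemma final_bound (β : Equiv.Perm Sph) (hβ : IsBetaMap β)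
    (L : Link) (F : BRMap L) (hmin : Minimal F)
    (γ : Link)
    (θ : Circle) (hreg : IsRegularValue F θ)
    (hsub : γ.carrier ⊆ pageSet F θ \ L.carrier)
    (δ : Equiv.Perm Sph) (hδ : ContMDiff (𝓡 3) (𝓡 3) (⊤ : ℕ∞) δ)
    (hδ' : ContMDiff (𝓡 3) (𝓡 3) (⊤ : ℕ∞) δ.symm)
    (hδγ : ⇑δ '' γ.carrier = Ocar)
    (n : ℤ) (L' : Link) (hn : L'.n = L.n)
    (hemb : ∀ i t, L'.emb i t = δ.symm ((β ^ n) (δ (L.emb (Fin.cast hn i) t)))) :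
    MN L' ≤ MN L + 2 := by
  have hO : ∀ s, ∃ hx : δ.symm (nu s 0) ∉ L.carrier, F.f ⟨δ.symm (nu s 0), hx⟩ = θ := by
    intro s
    have h1 : nu s 0 ∈ Ocar := by
      show W (nu s 0 : E) = 0
      rw [W_nu, mul_zero]
    rw [← hδγ] at h1
    obtain ⟨x, hx, e⟩ := h1
    rw [← e, Equiv.symm_apply_apply]
    obtain ⟨h2, h3⟩ := hsub hx
    rcases h2 with h2 | ⟨h2, h4⟩
    · exact absurd h2 h3
    · exact ⟨h2, h4⟩
  obtain ⟨ε1, h, hε1, off, hf, hsm, hper, hz, hnd⟩ := base_h F hreg δ hδ hδ' hO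
  obtain ⟨ε, μ, e0, R, G, p1, p2, g1, g2, g3, g4, g5, g6, g7, g8, g9, g10⟩ := exists_G hε1 hsm hper hz hnd
  have D : GDat F θ δ ε1 h ε μ e0 R G p1 p2 := ⟨g1, g2, g3, g4, off, hf, g5, g6, g7, g8, g9, g10⟩
  have hcZ : Continuous fun x : Sph => Z (δ x : E) :=
    continuous_Z.comp (continuous_subtype_val.comp hδ.continuous)
  have hcW : Continuous fun x : Sph => W (δ x : E) :=
    continuous_W.comp (continuous_subtype_val.comp hδ.continuous)
  have hU : IsOpen {x : Sph | ε * R * ‖Z (δ x : E)‖ < ‖W (δ x : E)‖} :=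
    isOpen_lt (continuous_const.mul hcZ.norm) hcW.norm
  have hLU : L.carrier ⊆ {x : Sph | ε * R * ‖Z (δ x : E)‖ < ‖W (δ x : E)‖} := by
    intro x hx
    by_contra hcon
    have hcon' : ‖W (δ x : E)‖ ≤ ε * R * ‖Z (δ x : E)‖ := not_lt.1 hcon
    have hZ : 0 < ‖Z (δ x : E)‖ := by
      rw [norm_pos_iff]
      intro h0
      have h1 := sph_ZW (δ x)
      rw [h0, norm_zero, mul_zero] at hcon'
      have := norm_nonneg (W (δ x : E))
      rw [h0, le_antisymm hcon' this] at h1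
      norm_num at h1
    have h2 : ‖W (δ x : E)‖ < ε * (R + 1) * ‖Z (δ x : E)‖ := by
      have := mul_pos g1 hZ
      linarith
    obtain ⟨s, w, e, hw⟩ := exists_nu h2
    refine off s w (by linarith) ?_
    rw [← e, Equiv.symm_apply_apply]; exact hx
  have hemb' : ∀ i t, L'.emb i t = twist β δ n (L.emb (Fin.cast hn i) t) := hemb
  obtain ⟨F', hF'⟩ := exists_BR (f := fnew F θ δ β n ε R G) hβ n hδ hδ' F hn hemb' hU hLU
    (fun x hx h0 => by
      have hx' : ε * R * ‖Z (δ x : E)‖ < ‖W (δ x : E)‖ := hx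
      rw [h0, norm_zero] at hx'
      have : 0 ≤ ε * R * ‖Z (δ x : E)‖ := by positivity
      linarith)
    (fun x hx => by rw [fnew_twist]; exact D.f0_out x (le_of_lt hx))
    (fun x hx => (D.an hβ n hδ hδ' hmin.1 x hx).1)
  have hcar := carrier_image hn (twist β δ n) hemb'
  have hpt : ∀ y : L'.compl, ∃ x, x ∉ L.carrier ∧ twist β δ n x = y := by
    intro y
    refine ⟨(twist β δ n).symm y, fun hx => ?_, Equiv.apply_symm_apply _ _⟩
    have hy : (y : Sph) ∉ L'.carrier := y.2
    rw [hcar] at hy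
    exact hy ⟨_, hx, Equiv.apply_symm_apply _ _⟩
  have key : ∀ y : L'.compl, IsCrit F'.f y → Nondeg F'.f y ∧
      (y : Sph) ∈ (twist β δ n '' (Subtype.val '' critSet F.f)) ∪
        {δ.symm (nu (p1.1 + n * p1.2.2) (polC ε p1.2.1 p1.2.2)),
          δ.symm (nu (p2.1 + n * p2.2.2) (polC ε p2.2.1 p2.2.2))} := by
    intro y hy
    obtain ⟨x, hx, e⟩ := hpt y
    obtain ⟨a, b⟩ := D.an hβ n hδ hδ' hmin.1 x hx
    rw [e] at a b
    have hy' := (op_crit (U := L'.compl) hF' y a).1 hy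
    obtain ⟨b1, b2⟩ := b hy'
    refine ⟨(op_nondeg (U := L'.compl) hF' y).2 b1, ?_⟩
    rcases b2 with b2 | b2 | b2
    · exact Or.inl ⟨x, ⟨⟨x, hx⟩, b2, rfl⟩, e⟩
    · exact Or.inr (Or.inl b2)
    · exact Or.inr (Or.inr b2)
  have hle : (critSet F'.f).encard ≤ (critSet F.f).encard + 2 := by
    rw [← Subtype.val_injective.encard_image]
    refine (encard_le_encard (t := (twist β δ n '' (Subtype.val '' critSet F.f)) ∪
        {δ.symm (nu (p1.1 + n * p1.2.2) (polC ε p1.2.1 p1.2.2)),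
          δ.symm (nu (p2.1 + n * p2.2.2) (polC ε p2.2.1 p2.2.2))}) ?_).trans ?_
    · rintro _ ⟨y, hy, rfl⟩
      exact (key y hy).2
    · refine (encard_union_le _ _).trans ?_
      rw [(twist β δ n).injective.encard_image, Subtype.val_injective.encard_image]
      gcongr
      refine (encard_insert_le _ _).trans ?_
      rw [encard_singleton, one_add_one_eq_two]
  have h1 : MN L' ≤ (critSet F'.f).encard := sInf_le ⟨F', fun y hy => (key y hy).1, rfl⟩
  have h2 : (critSet F.f).encard ≤ MN L := by
    refine le_sInf ?_
    rintro k ⟨G', hG', rfl⟩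
    exact hmin.2 G' hG'
  exact h1.trans (hle.trans (by gcongr))

end

/-- For any link `L ⊂ S³`, any unknot `γ` contained in the
interior of a smooth page of a minimal simple boundary-regular Morse map
`S³∖L → S¹`, and every `n ∈ ℤ`, the `n`-fold twisted link
`L[γ,n] = β_γⁿ(L)` (where `β_γ = δ⁻¹ ∘ β ∘ δ` for a diffeomorphism `δ` of
`S³` carrying `γ` to the standard unknot `O`) satisfies
`MN (L[γ,n]) ≤ MN L + 2`. -/
theorem statement_7 (β : Equiv.Perm Sph) (hβ : IsBetaMap β)
    (L : Link) (F : BRMap L) (hmin : Minimal F)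
    (γ : Link) (hknot : γ.IsKnot) (hunknot : AmbientIsotopic γ.carrier Ocar)
    (θ : Circle) (hreg : IsRegularValue F θ)
    (hsub : γ.carrier ⊆ pageSet F θ \ L.carrier)
    (δ : Equiv.Perm Sph) (hδ : ContMDiff (𝓡 3) (𝓡 3) (⊤ : ℕ∞) δ)
    (hδ' : ContMDiff (𝓡 3) (𝓡 3) (⊤ : ℕ∞) δ.symm)
    (hδγ : ⇑δ '' γ.carrier = Ocar)
    (n : ℤ) (L' : Link) (hn : L'.n = L.n)
    (hemb : ∀ i t, L'.emb i t = δ.symm ((β ^ n) (δ (L.emb (Fin.cast hn i) t)))) :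
    MN L' ≤ MN L + 2 := by
  exact final_bound β hβ L F hmin γ θ hreg hsub δ hδ hδ' hδγ n L' hn hemb

end MorseNovikov
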